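/- (Weak independence theorem for co-NSOP_1 types) Let p(x), q(x) be co-NSOP_1 partial types over M, let a ≡_M a' be tuples of realizations of p, and let b, c be tuples of realizations of q, with a ⫝^{K*}_M b, a' ⫝^{K*}_M c, and c ⫝^u_M b. Then there is a'' with a'' ⫝^{K*}_M bc and a'' ⊨ tp(a/Mb) ∪ tp(a'/Mc). -/

import Mathlib

namespace NSOP3Paper

open FirstOrder Language

universe u v w w' w₂ x y z

/-- Consistency (equivalently, by compactness over the monster model, finite
satisfiability) of a family of conditions on tuples. -/
def FamConsistent {ι : Type*} {X : Type*} (C : ι → X → Prop) : Prop :=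
  ∀ s : Finset ι, ∃ xx : X, ∀ i ∈ s, C i xx

/-- `k`-inconsistency of a family of conditions: any `k` of them (with pairwise
distinct indices) are jointly unsatisfiable. -/
def FamKInconsistent {ι : Type*} {X : Type*} (k : ℕ) (C : ι → X → Prop) : Prop :=
  ∀ s : Finset ι, s.card = k → ¬∃ xx : X, ∀ i ∈ s, C i xx

/-- Flattening of a family of tuples into a single tuple. -/
def flat {𝕄 : Type w} {ι : Type*} {β : Type*} (a : ι → β → 𝕄) : ι × β → 𝕄 :=
  fun q => a q.1 q.2

/-- A first-order `L`-formula in free variables `α`, together with a tuple of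
parameters from `𝕄`; this represents an instance `φ(x̄, b̄)`. -/
structure ParamFormula (L : FirstOrder.Language.{u, v}) (𝕄 : Type w) [L.Structure 𝕄]
    (α : Type w') where
  Params : Type
  toFormula : L.Formula (α ⊕ Params)
  params : Params → 𝕄

namespace ParamFormula

variable {L : FirstOrder.Language.{u, v}} {𝕄 : Type w} [L.Structure 𝕄] {α : Type w'}

/-- Realization of `φ(x̄, b̄)` at a tuple from `𝕄`. -/
def Realize (φ : ParamFormula L 𝕄 α) (xx : α → 𝕄) : Prop :=
  φ.toFormula.Realize (Sum.elim xx φ.params)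

/-- All parameters of `φ` lie in `A`; i.e. `φ ∈ L(A)`. -/
def ParamsIn (φ : ParamFormula L 𝕄 α) (A : Set 𝕄) : Prop :=
  ∀ i, φ.params i ∈ A

/-- Negation of a formula with parameters. -/
protected def not (φ : ParamFormula L 𝕄 α) : ParamFormula L 𝕄 α :=
  ⟨φ.Params, BoundedFormula.not φ.toFormula, φ.params⟩

/-- Substitute a tuple of elements of `𝕄` for the second group of free variables,
obtaining the instance `φ(x̄, c̄)` as a formula with parameters. -/
def subst {γ : Type} (φ : ParamFormula L 𝕄 (α ⊕ γ)) (c : γ → 𝕄) : ParamFormula L 𝕄 α :=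
  ⟨γ ⊕ φ.Params,
    (φ.toFormula).relabel (Sum.elim (Sum.map id Sum.inl) (Sum.inr ∘ Sum.inr)),
    Sum.elim c φ.params⟩

end ParamFormula

section TypesDefs

variable (L : FirstOrder.Language.{u, v}) (𝕄 : Type w) [L.Structure 𝕄]

/-- Two tuples have the same type over the parameter set `A` (written `b ≡_A b'`). -/
def TpEq (A : Set 𝕄) {β : Type w'} (b b' : β → 𝕄) : Prop :=
  ∀ φ : ParamFormula L 𝕄 β, φ.ParamsIn A → (φ.Realize b ↔ φ.Realize b')

/-- A complete global type in variables `α`: a complete, consistent set of formulas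
with parameters from the monster model `𝕄`. -/
structure GlobalType (α : Type w') where
  Mem : ParamFormula L 𝕄 α → Prop
  consistent : ∀ S : Finset (ParamFormula L 𝕄 α), (∀ φ ∈ S, Mem φ) →
    ∃ xx : α → 𝕄, ∀ φ ∈ S, φ.Realize xx
  complete : ∀ φ : ParamFormula L 𝕄 α, Mem φ ∨ Mem φ.not

/-- A sequence of tuples is indiscernible over the parameter set `A`: any two finite
increasing subtuples of the same length have the same type over `A`. -/
def IndiscernibleOver (A : Set 𝕄) {β : Type w'} (b : ℕ → β → 𝕄) : Prop :=
  ∀ (n : ℕ) (f g : Fin n → ℕ), StrictMono f → StrictMono g →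
    TpEq L 𝕄 A (fun q : Fin n × β => b (f q.1) q.2) (fun q : Fin n × β => b (g q.1) q.2)

end TypesDefs

namespace GlobalType

variable {L : FirstOrder.Language.{u, v}} {𝕄 : Type w} [L.Structure 𝕄] {α : Type w'}

/-- A global type is invariant over `A` if membership of `φ(x̄, b̄)` depends only on
the type of `b̄` over `A`. -/
def InvariantOver (p : GlobalType L 𝕄 α) (A : Set 𝕄) : Prop :=
  ∀ (P : Type) (ψ : L.Formula (α ⊕ P)) (b b' : P → 𝕄),
    TpEq L 𝕄 A b b' → (p.Mem ⟨P, ψ, b⟩ ↔ p.Mem ⟨P, ψ, b'⟩)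

/-- A global type is finitely satisfiable in `A` if each of its formulas is satisfied
by a tuple from `A`. -/
def FinSatIn (p : GlobalType L 𝕄 α) (A : Set 𝕄) : Prop :=
  ∀ φ : ParamFormula L 𝕄 α, p.Mem φ → ∃ xx : α → 𝕄, (∀ i, xx i ∈ A) ∧ φ.Realize xx

/-- `a ⊨ p|_B` : the tuple `a` realizes the restriction of the global type `p` to the
parameter set `B`. -/
def RealizesOver (p : GlobalType L 𝕄 α) (B : Set 𝕄) (a : α → 𝕄) : Prop :=
  ∀ φ : ParamFormula L 𝕄 α, p.Mem φ → φ.ParamsIn B → φ.Realize a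

/-- `(b i)` is a Morley sequence in `p` over `A`: each `b i ⊨ p|_{A b_{<i}}`. -/
def IsMorleyOver (p : GlobalType L 𝕄 α) (A : Set 𝕄) (b : ℕ → α → 𝕄) : Prop :=
  ∀ i : ℕ, p.RealizesOver (A ∪ ⋃ j ∈ Set.Iio i, Set.range (b j)) (b i)

end GlobalType

section MorleyDefs

variable (L : FirstOrder.Language.{u, v}) (𝕄 : Type w) [L.Structure 𝕄]

/-- `(b i)` is an invariant Morley sequence over `A`: a Morley sequence in some global
type invariant over `A`. -/
def IsInvMorleyOver (A : Set 𝕄) {α : Type w'} (b : ℕ → α → 𝕄) : Prop :=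
  ∃ p : GlobalType L 𝕄 α, p.InvariantOver A ∧ p.IsMorleyOver A b

/-- `(b i)` is a coheir Morley sequence over `A`: a Morley sequence in some global
type finitely satisfiable in `A`. -/
def IsCoheirMorleyOver (A : Set 𝕄) {α : Type w'} (b : ℕ → α → 𝕄) : Prop :=
  ∃ p : GlobalType L 𝕄 α, p.FinSatIn A ∧ p.IsMorleyOver A b

end MorleyDefs

namespace ParamFormula

variable {L : FirstOrder.Language.{u, v}} {𝕄 : Type w} [L.Structure 𝕄] {α : Type w'}

/-- `φ(x̄, b̄)` Kim-divides over `A`: some invariant Morley sequence over `A` starting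
with `b̄` makes the corresponding instances inconsistent. -/
def KimDividesOver (φ : ParamFormula L 𝕄 α) (A : Set 𝕄) : Prop :=
  ∃ b : ℕ → φ.Params → 𝕄, b 0 = φ.params ∧ IsInvMorleyOver L 𝕄 A b ∧
    ¬FamConsistent fun (i : ℕ) (xx : α → 𝕄) => φ.toFormula.Realize (Sum.elim xx (b i))

/-- `φ(x̄, b̄)` Conant-divides over `A`: every invariant Morley sequence over `A`
starting with `b̄` makes the corresponding instances inconsistent. -/
def ConantDividesOver (φ : ParamFormula L 𝕄 α) (A : Set 𝕄) : Prop :=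
  ∀ b : ℕ → φ.Params → 𝕄, b 0 = φ.params → IsInvMorleyOver L 𝕄 A b →
    ¬FamConsistent fun (i : ℕ) (xx : α → 𝕄) => φ.toFormula.Realize (Sum.elim xx (b i))

/-- `φ(x̄, b̄)` divides over `A`: some `A`-indiscernible sequence starting with `b̄`
makes the corresponding instances inconsistent. -/
def DividesOver (φ : ParamFormula L 𝕄 α) (A : Set 𝕄) : Prop :=
  ∃ b : ℕ → φ.Params → 𝕄, b 0 = φ.params ∧ IndiscernibleOver L 𝕄 A b ∧
    ¬FamConsistent fun (i : ℕ) (xx : α → 𝕄) => φ.toFormula.Realize (Sum.elim xx (b i))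

/-- `φ` Kim-forks over `A`: it implies a finite disjunction of formulas Kim-dividing
over `A`. -/
def KimForksOver (φ : ParamFormula L 𝕄 α) (A : Set 𝕄) : Prop :=
  ∃ (k : ℕ) (ψ : Fin k → ParamFormula L 𝕄 α), (∀ j, (ψ j).KimDividesOver A) ∧
    ∀ xx : α → 𝕄, φ.Realize xx → ∃ j, (ψ j).Realize xx

/-- `φ` Conant-forks over `A`: it implies a finite disjunction of formulas
Conant-dividing over `A`. -/
def ConantForksOver (φ : ParamFormula L 𝕄 α) (A : Set 𝕄) : Prop :=
  ∃ (k : ℕ) (ψ : Fin k → ParamFormula L 𝕄 α), (∀ j, (ψ j).ConantDividesOver A) ∧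
    ∀ xx : α → 𝕄, φ.Realize xx → ∃ j, (ψ j).Realize xx

/-- `φ` forks over `A`: it implies a finite disjunction of formulas dividing over `A`. -/
def ForksOver (φ : ParamFormula L 𝕄 α) (A : Set 𝕄) : Prop :=
  ∃ (k : ℕ) (ψ : Fin k → ParamFormula L 𝕄 α), (∀ j, (ψ j).DividesOver A) ∧
    ∀ xx : α → 𝕄, φ.Realize xx → ∃ j, (ψ j).Realize xx

end ParamFormula

section IndDefs

variable (L : FirstOrder.Language.{u, v}) (𝕄 : Type w) [L.Structure 𝕄]

/-- `a ⫝^K_A B` : `tp(a/A ∪ B)` contains no formula Kim-forking over `A`. -/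
def IndKim (A B : Set 𝕄) {γ : Type w'} (a : γ → 𝕄) : Prop :=
  ∀ φ : ParamFormula L 𝕄 γ, φ.ParamsIn (A ∪ B) → φ.Realize a → ¬φ.KimForksOver A

/-- `a ⫝^{Kd}_A B` : `tp(a/A ∪ B)` contains no formula Kim-dividing over `A`. -/
def IndKd (A B : Set 𝕄) {γ : Type w'} (a : γ → 𝕄) : Prop :=
  ∀ φ : ParamFormula L 𝕄 γ, φ.ParamsIn (A ∪ B) → φ.Realize a → ¬φ.KimDividesOver A

/-- `a ⫝^{K*}_A B` : Conant-independence. -/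
def IndConant (A B : Set 𝕄) {γ : Type w'} (a : γ → 𝕄) : Prop :=
  ∀ φ : ParamFormula L 𝕄 γ, φ.ParamsIn (A ∪ B) → φ.Realize a → ¬φ.ConantForksOver A

/-- `a ⫝^{K*d}_A B` : Conant-dividing independence. -/
def IndConantD (A B : Set 𝕄) {γ : Type w'} (a : γ → 𝕄) : Prop :=
  ∀ φ : ParamFormula L 𝕄 γ, φ.ParamsIn (A ∪ B) → φ.Realize a → ¬φ.ConantDividesOver A

/-- `a ⫝^f_A B` : forking-independence. -/
def IndForking (A B : Set 𝕄) {γ : Type w'} (a : γ → 𝕄) : Prop :=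
  ∀ φ : ParamFormula L 𝕄 γ, φ.ParamsIn (A ∪ B) → φ.Realize a → ¬φ.ForksOver A

/-- `a ⫝^i_A B` : `tp(a/A ∪ B)` extends to a global type invariant over `A`. -/
def IndInv (A B : Set 𝕄) {γ : Type w'} (a : γ → 𝕄) : Prop :=
  ∃ p : GlobalType L 𝕄 γ, p.InvariantOver A ∧
    ∀ φ : ParamFormula L 𝕄 γ, φ.ParamsIn (A ∪ B) → φ.Realize a → p.Mem φ

/-- `a ⫝^u_A B` : `tp(a/A ∪ B)` extends to a global type finitely satisfiable in `A`. -/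
def IndFinSat (A B : Set 𝕄) {γ : Type w'} (a : γ → 𝕄) : Prop :=
  ∃ p : GlobalType L 𝕄 γ, p.FinSatIn A ∧
    ∀ φ : ParamFormula L 𝕄 γ, φ.ParamsIn (A ∪ B) → φ.Realize a → p.Mem φ

/-- `a ⫝^{K+}_A b` : there is an invariant Morley sequence over `A` starting with `b`
that is indiscernible over `A ∪ a`. -/
def IndKPlus (A : Set 𝕄) {δ : Type w'} {γ : Type w₂} (b : δ → 𝕄) (a : γ → 𝕄) : Prop :=
  ∃ bs : ℕ → δ → 𝕄, bs 0 = b ∧ IsInvMorleyOver L 𝕄 A bs ∧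
    IndiscernibleOver L 𝕄 (A ∪ Set.range a) bs

/-- `a ⫝^{K+u}_A b` : there is a coheir Morley sequence over `A` starting with `b`
that is indiscernible over `A ∪ a`. -/
def IndKPlusU (A : Set 𝕄) {δ : Type w'} {γ : Type w₂} (b : δ → 𝕄) (a : γ → 𝕄) : Prop :=
  ∃ bs : ℕ → δ → 𝕄, bs 0 = b ∧ IsCoheirMorleyOver L 𝕄 A bs ∧
    IndiscernibleOver L 𝕄 (A ∪ Set.range a) bs

/-- Conant-independence `⫝^{K*}` is symmetric (over every small model). -/
def ConantSymmetric : Prop :=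
  ∀ (M : L.ElementarySubstructure 𝕄) (γ δ : Type w) (a : γ → 𝕄) (b : δ → 𝕄),
    IndConant L 𝕄 (M : Set 𝕄) (Set.range b) a → IndConant L 𝕄 (M : Set 𝕄) (Set.range a) b

/-- Conant-dividing independence `⫝^{K*d}` is symmetric. -/
def ConantDSymmetric : Prop :=
  ∀ (M : L.ElementarySubstructure 𝕄) (γ δ : Type w) (a : γ → 𝕄) (b : δ → 𝕄),
    IndConantD L 𝕄 (M : Set 𝕄) (Set.range b) a → IndConantD L 𝕄 (M : Set 𝕄) (Set.range a) b

/-- The relation `⫝^{K+}` is symmetric. -/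
def KPlusSymmetric : Prop :=
  ∀ (M : L.ElementarySubstructure 𝕄) (γ δ : Type w) (a : γ → 𝕄) (b : δ → 𝕄),
    IndKPlus L 𝕄 (M : Set 𝕄) b a → IndKPlus L 𝕄 (M : Set 𝕄) a b

/-- Forking-independence satisfies the chain condition with respect to invariant
Morley sequences. -/
def ChainConditionF : Prop :=
  ∀ (M : L.ElementarySubstructure 𝕄) (γ δ : Type w) (a : γ → 𝕄) (bs : ℕ → δ → 𝕄),
    IsInvMorleyOver L 𝕄 (M : Set 𝕄) bs →
    IndForking L 𝕄 (M : Set 𝕄) (Set.range (bs 0)) a →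
    ∃ bs' : ℕ → δ → 𝕄,
      TpEq L 𝕄 ((M : Set 𝕄) ∪ Set.range (bs 0)) (flat bs') (flat bs) ∧
      IndiscernibleOver L 𝕄 ((M : Set 𝕄) ∪ Set.range a) bs' ∧
      IndForking L 𝕄 (M : Set 𝕄) (Set.range (flat bs')) a

/-- Kim-independence satisfies the chain condition with respect to invariant Morley
sequences. -/
def ChainConditionK : Prop :=
  ∀ (M : L.ElementarySubstructure 𝕄) (γ δ : Type w) (a : γ → 𝕄) (bs : ℕ → δ → 𝕄),
    IsInvMorleyOver L 𝕄 (M : Set 𝕄) bs →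
    IndKim L 𝕄 (M : Set 𝕄) (Set.range (bs 0)) a →
    ∃ bs' : ℕ → δ → 𝕄,
      TpEq L 𝕄 ((M : Set 𝕄) ∪ Set.range (bs 0)) (flat bs') (flat bs) ∧
      IndiscernibleOver L 𝕄 ((M : Set 𝕄) ∪ Set.range a) bs' ∧
      IndKim L 𝕄 (M : Set 𝕄) (Set.range (flat bs')) a

/-- `T` is NSOP₃: there is no definable binary relation on tuples with no 3-cycles
containing an infinite chain. -/
def IsNSOP3 : Prop :=
  ¬∃ (m : ℕ) (R : ParamFormula L 𝕄 (Fin m ⊕ Fin m)) (a : ℕ → Fin m → 𝕄),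
    (∀ i j : ℕ, i < j → R.Realize (Sum.elim (a i) (a j))) ∧
    ¬∃ x1 x2 x3 : Fin m → 𝕄,
      R.Realize (Sum.elim x1 x2) ∧ R.Realize (Sum.elim x2 x3) ∧ R.Realize (Sum.elim x3 x1)

/-- `𝕄` is a `κ`-monster: every consistent type in fewer than `κ` variables over a
parameter set of size less than `κ` is realized. -/
class IsMonster (κ : Cardinal.{w}) : Prop where
  saturated : ∀ {α : Type w} (A : Set 𝕄) (S : Set (ParamFormula L 𝕄 α)),
    Cardinal.mk α < κ → Cardinal.mk A < κ → (∀ φ ∈ S, φ.ParamsIn A) →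
    (∀ S₀ : Finset (ParamFormula L 𝕄 α), (∀ φ ∈ S₀, φ ∈ S) →
      ∃ xx : α → 𝕄, ∀ φ ∈ S₀, φ.Realize xx) →
    ∃ xx : α → 𝕄, ∀ φ ∈ S, φ.Realize xx

/-- A tuple realizes the partial type `P`. -/
def RealizesPType {nv : ℕ} (P : Set (ParamFormula L 𝕄 (Fin nv))) (a : Fin nv → 𝕄) : Prop :=
  ∀ φ ∈ P, φ.Realize a

/-- `p(x̄)` is co-NSOP₁: no `L(M)`-formula `φ(x̄, ȳ)` and tree of tuples of
realizations of `p` witness SOP₁-style consistency/inconsistency. -/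
def CoNSOP1 (M : Set 𝕄) {nv : ℕ} (P : Set (ParamFormula L 𝕄 (Fin nv))) : Prop :=
  ¬∃ (k m : ℕ) (φ : ParamFormula L 𝕄 (Fin k ⊕ (Fin m × Fin nv)))
      (b : List Bool → Fin m → Fin nv → 𝕄),
    φ.ParamsIn M ∧
    (∀ η j, RealizesPType L 𝕄 P (b η j)) ∧
    (∀ σ : ℕ → Bool, FamConsistent fun (n : ℕ) (xx : Fin k → 𝕄) =>
      (φ.subst (flat (b (List.ofFn fun i : Fin n => σ i)))).Realize xx) ∧
    (∀ η₁ η₂ : List Bool, (η₁ ++ [false]) <+: η₂ →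
      ¬∃ xx : Fin k → 𝕄, (φ.subst (flat (b η₂))).Realize xx ∧
        (φ.subst (flat (b (η₁ ++ [true])))).Realize xx)

/-- The set of realizations of the partial type `P`. -/
def PRealizations {nv : ℕ} (P : Set (ParamFormula L 𝕄 (Fin nv))) : Type w :=
  { a : Fin nv → 𝕄 // RealizesPType L 𝕄 P a }

/-- The language `L_p` associated to a partial `nv`-type: an `m`-ary relation symbol
for each `L(M)`-formula in `m` groups of `nv` variables. -/
def pLang (M : Set 𝕄) (nv : ℕ) : Language :=
  ⟨fun _ => Empty, fun m => { φ : ParamFormula L 𝕄 (Fin m × Fin nv) // φ.ParamsIn M }⟩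

/-- The structure `M_p` on the set of realizations of `p`, with relations interpreted
by the corresponding formulas in `𝕄`. -/
instance pStruct (M : Set 𝕄) {nv : ℕ} (P : Set (ParamFormula L 𝕄 (Fin nv))) :
    (pLang L 𝕄 M nv).Structure (PRealizations L 𝕄 P) where
  funMap := fun {n} f _ => f.elim
  RelMap := fun {m} R xs => R.1.Realize fun q : Fin m × Fin nv => (xs q.1).1 q.2

end IndDefs

/-- An SOP₁ pattern witnessed inside the structure `W`. -/
def SOP1PatternIn (L' : FirstOrder.Language.{x, y}) (W : Type z) [L'.Structure W] : Prop :=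
  ∃ (k n : ℕ) (φ : L'.Formula (Fin k ⊕ Fin n)) (bt : List Bool → Fin n → W),
    (∀ σ : ℕ → Bool, FamConsistent fun (i : ℕ) (xx : Fin k → W) =>
      φ.Realize (Sum.elim xx (bt (List.ofFn fun j : Fin i => σ j)))) ∧
    (∀ η₁ η₂ : List Bool, (η₁ ++ [false]) <+: η₂ →
      ¬∃ xx : Fin k → W, φ.Realize (Sum.elim xx (bt η₂)) ∧
        φ.Realize (Sum.elim xx (bt (η₁ ++ [true]))))

/-- The complete theory of `N` is NSOP₁: no SOP₁ pattern in any elementarily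
equivalent structure. -/
def IsNSOP1Th (L' : FirstOrder.Language.{x, y}) (N : Type z) [L'.Structure N] : Prop :=
  ¬∃ (W : Type (max x y z)) (S : L'.Structure W),
    L'.completeTheory N = @Language.completeTheory L' W S ∧ @SOP1PatternIn L' W S

/-- The formula `φ(x̄, ȳ)` has the tree property, witnessed in `W`. -/
def FormulaTPIn (L' : FirstOrder.Language.{x, y}) (W : Type z) [L'.Structure W]
    {k n : ℕ} (φ : L'.Formula (Fin k ⊕ Fin n)) : Prop :=
  ∃ (kk : ℕ) (bt : List ℕ → Fin n → W),
    (∀ σ : ℕ → ℕ, FamConsistent fun (i : ℕ) (xx : Fin k → W) =>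
      φ.Realize (Sum.elim xx (bt (List.ofFn fun j : Fin i => σ j)))) ∧
    (∀ η : List ℕ, FamKInconsistent kk fun (j : ℕ) (xx : Fin k → W) =>
      φ.Realize (Sum.elim xx (bt (η ++ [j]))))

/-- The formula `φ(x̄, ȳ)` has SOP₁, witnessed in `W`. -/
def FormulaSOP1In (L' : FirstOrder.Language.{x, y}) (W : Type z) [L'.Structure W]
    {k n : ℕ} (φ : L'.Formula (Fin k ⊕ Fin n)) : Prop :=
  ∃ bt : List Bool → Fin n → W,
    (∀ σ : ℕ → Bool, FamConsistent fun (i : ℕ) (xx : Fin k → W) =>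
      φ.Realize (Sum.elim xx (bt (List.ofFn fun j : Fin i => σ j)))) ∧
    (∀ η₁ η₂ : List Bool, (η₁ ++ [false]) <+: η₂ →
      ¬∃ xx : Fin k → W, φ.Realize (Sum.elim xx (bt η₂)) ∧
        φ.Realize (Sum.elim xx (bt (η₁ ++ [true]))))

/-- Longest common prefix (meet in the tree `2^{<ω}`). -/
def meet : List Bool → List Bool → List Bool
  | a :: as, b :: bs => if a = b then a :: meet as bs else []
  | _, _ => []

/-- Strict tree order (strict prefix) on `2^{<ω}`. -/
def StrictPrefix (η ν : List Bool) : Prop := η <+: ν ∧ η ≠ ν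

/-- Lexicographic order on `2^{<ω}`. -/
def LexLt (η ν : List Bool) : Prop :=
  StrictPrefix η ν ∨ ((meet η ν ++ [false]) <+: η ∧ (meet η ν ++ [true]) <+: ν)

/-- The meet `c 0 ∧ … ∧ c k`. -/
def meetInit (c : ℕ → List Bool) : ℕ → List Bool
  | 0 => c 0
  | k + 1 => meet (meetInit c k) (c (k + 1))

/-- `c 0, …, c (l-1)` is a descending comb: a lexicographically increasing antichain
whose successive meets form a strictly descending chain in the tree order. -/
def IsDescendingComb (l : ℕ) (c : ℕ → List Bool) : Prop :=
  (∀ i j, i < l → j < l → i ≠ j → ¬(c i <+: c j)) ∧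
  (∀ i j, i < j → j < l → LexLt (c i) (c j)) ∧
  (∀ k, k + 1 < l → StrictPrefix (meetInit c (k + 1)) (meetInit c k))

section DCTP

variable (L : FirstOrder.Language.{u, v}) (𝕄 : Type w) [L.Structure 𝕄]

/-- `T` has `k`-DCTP₂. -/
def HasKDCTP2 (k : ℕ) : Prop :=
  ∃ (kx ny : ℕ) (φ : ParamFormula L 𝕄 (Fin kx ⊕ Fin ny)) (b : List Bool → Fin ny → 𝕄),
    (∀ σ : ℕ → Bool, FamKInconsistent k fun (n : ℕ) (xx : Fin kx → 𝕄) =>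
      (φ.subst (b (List.ofFn fun i : Fin n => σ i))).Realize xx) ∧
    (∀ (l : ℕ) (c : ℕ → List Bool), IsDescendingComb l c →
      ∃ xx : Fin kx → 𝕄, ∀ i < l, (φ.subst (b (c i))).Realize xx)

/-- `T` is N-ω-DCTP₂: it does not have `k`-DCTP₂ for any `k`. -/
def NOmegaDCTP2 : Prop := ∀ k : ℕ, ¬HasKDCTP2 L 𝕄 k

/-- A generic triple of sets of realizations of three partial types: the three sets
begin mutually indiscernible invariant Morley sequences over `M`. -/
def GenericTriple (M : Set 𝕄) {ι₁ ι₂ ι₃ : Type w} {nv₁ nv₂ nv₃ : ℕ}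
    (A : ι₁ → Fin nv₁ → 𝕄) (B : ι₂ → Fin nv₂ → 𝕄) (C : ι₃ → Fin nv₃ → 𝕄) : Prop :=
  ∃ (IA : ℕ → ι₁ → Fin nv₁ → 𝕄) (IB : ℕ → ι₂ → Fin nv₂ → 𝕄) (IC : ℕ → ι₃ → Fin nv₃ → 𝕄),
    IA 0 = A ∧ IB 0 = B ∧ IC 0 = C ∧
    IsInvMorleyOver L 𝕄 M (fun i => flat (IA i)) ∧
    IsInvMorleyOver L 𝕄 M (fun i => flat (IB i)) ∧
    IsInvMorleyOver L 𝕄 M (fun i => flat (IC i)) ∧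
    IndiscernibleOver L 𝕄
      (M ∪ Set.range (flat fun i => flat (IB i)) ∪ Set.range (flat fun i => flat (IC i)))
      (fun i => flat (IA i)) ∧
    IndiscernibleOver L 𝕄
      (M ∪ Set.range (flat fun i => flat (IA i)) ∪ Set.range (flat fun i => flat (IC i)))
      (fun i => flat (IB i)) ∧
    IndiscernibleOver L 𝕄
      (M ∪ Set.range (flat fun i => flat (IA i)) ∪ Set.range (flat fun i => flat (IB i)))
      (fun i => flat (IC i))

end DCTP

/-- The language of hypergraph sequences: one `n`-ary relation symbol for each `n`. -/
def hgLang : FirstOrder.Language.{0, 0} := ⟨fun _ => Empty, fun _ => PUnit⟩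

section Hypergraph

variable (V : Type z) [hgLang.Structure V]

/-- The `n`-ary edge relation of a hypergraph sequence. -/
def hgRel {n : ℕ} (v : Fin n → V) : Prop :=
  @Structure.RelMap hgLang V _ n PUnit.unit v

/-- A family of vertices is a clique: every tuple of its members is an edge. -/
def IsClique {ι : Type*} (a : ι → V) : Prop :=
  ∀ (n : ℕ) (f : Fin n → ι), hgRel V fun j => a (f j)

/-- A family of vertices is a `k`-anticlique: no `k`-tuple of its members (with
pairwise distinct indices) is an edge. -/
def IsAnticlique (k : ℕ) {ι : Type*} (a : ι → V) : Prop :=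
  ∀ f : Fin k → ι, Function.Injective f → ¬hgRel V fun j => a (f j)

/-- The hypergraph sequence has MTP. -/
def HasMTP : Prop :=
  ∃ (k : ℕ) (bt : List ℕ → V),
    (∀ σ : ℕ → ℕ, IsClique V fun n : ℕ => bt (List.ofFn fun j : Fin n => σ j)) ∧
    (∀ η : List ℕ, IsAnticlique V k fun n : ℕ => bt (η ++ [n]))

/-- The hypergraph sequence has an `(ω, ω, 1)`-array. -/
def HasOmegaArray : Prop :=
  ∃ (k : ℕ) (bt : ℕ → ℕ → V),
    (∀ i : ℕ, IsClique V (bt i)) ∧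
    (∀ σ : ℕ → ℕ, IsAnticlique V k fun i : ℕ => bt i (σ i))

/-- The hypergraph sequence has MSOP₁. -/
def HasMSOP1 : Prop :=
  ∃ bt : List Bool → V,
    (∀ σ : ℕ → Bool, IsClique V fun n : ℕ => bt (List.ofFn fun j : Fin n => σ j)) ∧
    (∀ η₁ η₂ : List Bool, (η₁ ++ [false]) <+: η₂ →
      IsAnticlique V 2 ![bt η₂, bt (η₁ ++ [true])])

/-- The hypergraph sequence has ω-MDCTP₂. -/
def HasOmegaMDCTP2 : Prop :=
  ∃ (k : ℕ) (bt : List Bool → V),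
    (∀ σ : ℕ → Bool, IsAnticlique V k fun n : ℕ => bt (List.ofFn fun j : Fin n => σ j)) ∧
    (∀ (l : ℕ) (c : ℕ → List Bool), IsDescendingComb l c →
      IsClique V fun i : Fin l => bt (c i))

/-- The hypergraph sequence has the compatible order property. -/
def HasCompatibleOrderProperty : Prop :=
  ∃ c d : ℕ → V,
    (∀ m n : ℕ, m < n →
      IsClique V fun i : Fin (n + 1) => if (i : ℕ) ≤ m then d i else c i) ∧
    (∀ m n : ℕ, m < n → ¬hgRel V ![c m, d n])

end Hypergraph

/-! ### Combinatorics of comb trees -/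
section Comb
variable {A : Type*} (Cons : List A → Prop)

/-- comb tree of height `n` with `k`-inconsistent combs. -/
def CT (k : ℕ) (E : List A) : ℕ → List A → List A → Prop
  | 0, S, X => Cons (S ++ E) ∧ ∀ Y, Y.Sublist X → Y.length = k → ¬ Cons (Y ++ E)
  | n + 1, S, X => ∃ d0 d1, CT k E n (d0 :: S) (d1 :: X) ∧ CT k E n (d1 :: S) X

/-- intermediate SOP1-like tree. -/
def STp (N : ℕ) (E : List A) : ℕ → List A → List A → Prop
  | 0, S, _ => Cons (S ++ E)
  | h + 1, S, X => ∃ (d0 w : List A) (e : A), d0.length = N + 1 ∧ w.length = N ∧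
      (∀ x ∈ X, ¬ Cons (x :: d0 ++ E)) ∧ (∀ x ∈ X, ¬ Cons (x :: e :: w ++ E)) ∧
      ¬ Cons (e :: d0 ++ E) ∧ STp N E h (d0 ++ S) (e :: X) ∧ STp N E h ((e :: w) ++ S) X

/-- final SOP1 tree of blocks. -/
def STB (K : ℕ) : ℕ → List A → List (List A) → Prop
  | 0, S, _ => Cons S
  | h + 1, S, X => ∃ D0 D1 : List A, D0.length = K ∧ D1.length = K ∧
      (∀ x ∈ X, ¬ Cons (x ++ D0)) ∧ (∀ x ∈ X, ¬ Cons (x ++ D1)) ∧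
      ¬ Cons (D1 ++ D0) ∧ STB K h (D0 ++ S) (D1 :: X) ∧ STB K h (D1 ++ S) X

variable {Cons}

theorem CT_mono (anti : ∀ l l' : List A, l ⊆ l' → Cons l' → Cons l) (k : ℕ) (E : List A) (n : ℕ) :
    ∀ S X S' X', S' ⊆ S → List.Sublist X' X → CT Cons k E n S X → CT Cons k E n S' X' := by
  induction n with
  | zero =>
    intro S X S' X' hS hX h
    refine ⟨anti _ _ ?_ h.1, fun Y hY hk => h.2 Y (hY.trans hX) hk⟩
    intro y hy
    simp only [List.mem_append] at hy ⊢
    exact hy.imp (fun h => hS h) id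
  | succ n ih =>
    rintro S X S' X' hS hX ⟨d0, d1, h0, h1⟩
    exact ⟨d0, d1, ih _ _ _ _ (List.cons_subset_cons _ hS) (hX.cons_cons _) h0,
      ih _ _ _ _ (List.cons_subset_cons _ hS) hX h1⟩

theorem CT_pred (anti : ∀ l l' : List A, l ⊆ l' → Cons l' → Cons l) (k : ℕ) (E : List A) (n : ℕ)
    (S X) (h : CT Cons k E (n+1) S X) : CT Cons k E n S X := by
  obtain ⟨d0, d1, h0, -⟩ := h
  exact CT_mono anti k E n _ _ _ _ (List.subset_cons_self _ _) (List.sublist_cons_self _ _) h0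

theorem CT_le (anti : ∀ l l' : List A, l ⊆ l' → Cons l' → Cons l) (k : ℕ) (E : List A) (m n : ℕ)
    (S X) (hmn : m ≤ n) (h : CT Cons k E n S X) : CT Cons k E m S X := by
  induction hmn with
  | refl => exact h
  | step _ ih => exact ih (CT_pred anti _ _ _ _ _ h)

theorem STp_mono (anti : ∀ l l' : List A, l ⊆ l' → Cons l' → Cons l) (N : ℕ) (E : List A) (n : ℕ) :
    ∀ S X S' X', S' ⊆ S → X' ⊆ X → STp Cons N E n S X → STp Cons N E n S' X' := by
  induction n with
  | zero =>
    intro S X S' X' hS hX h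
    refine anti _ _ ?_ h
    intro y hy
    simp only [List.mem_append] at hy ⊢
    exact hy.imp (fun h => hS h) id
  | succ n ih =>
    rintro S X S' X' hS hX ⟨d0, w, e, h1, h2, h3, h4, h5, h6, h7⟩
    refine ⟨d0, w, e, h1, h2, fun x hx => h3 x (hX hx), fun x hx => h4 x (hX hx), h5, ?_, ?_⟩
    · refine ih _ _ _ _ ?_ (List.cons_subset_cons _ hX) h6
      intro y hy
      simp only [List.mem_append] at hy ⊢
      exact hy.imp id (fun h => hS h)
    · refine ih _ _ _ _ ?_ hX h7
      intro y hy
      simp only [List.mem_append] at hy ⊢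
      exact hy.imp id (fun h => hS h)

theorem STp_STB (anti : ∀ l l' : List A, l ⊆ l' → Cons l' → Cons l) (N s : ℕ) (E : List A)
    (hE : E.length = s) (n : ℕ) :
    ∀ S X S' X', S' ⊆ S ++ E → (∀ x' ∈ X', ∃ x ∈ X, x ∈ x') → STp Cons N E n S X →
      STB Cons (N + 1 + s) n S' X' := by
  induction n with
  | zero =>
    intro S X S' X' hS hX h
    exact anti _ _ hS h
  | succ n ih =>
    rintro S X S' X' hS hX ⟨d0, w, e, h1, h2, h3, h4, h5, h6, h7⟩
    refine ⟨d0 ++ E, e :: w ++ E, by simp [h1, hE], by simp [h2, hE]; omega, ?_, ?_, ?_, ?_, ?_⟩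
    · intro x' hx' hc
      obtain ⟨x, hx, hxx⟩ := hX x' hx'
      refine h3 x hx (anti _ _ ?_ hc)
      intro y hy; simp at hy ⊢; grind
    · intro x' hx' hc
      obtain ⟨x, hx, hxx⟩ := hX x' hx'
      refine h4 x hx (anti _ _ ?_ hc)
      intro y hy; simp at hy ⊢; grind
    · intro hc
      refine h5 (anti _ _ ?_ hc)
      intro y hy; simp at hy ⊢; grind
    · refine ih _ _ _ _ ?_ ?_ h6
      · intro y hy
        have := @hS y
        simp at hy this ⊢; grind
      · intro x' hx'
        rcases List.mem_cons.1 hx' with rfl | hx'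
        · exact ⟨e, by simp, by simp⟩
        · obtain ⟨x, hx, hxx⟩ := hX x' hx'
          exact ⟨x, by simp [hx], hxx⟩
    · refine ih _ _ _ _ ?_ hX h7
      intro y hy
      have := @hS y
      simp at hy this ⊢; grind

theorem CT_step (anti : ∀ l l' : List A, l ⊆ l' → Cons l' → Cons l) (k : ℕ) (E : List A) (m' : ℕ)
    (S X : List A) {C : Type*} [DecidableEq C] (col : A → C) (m : ℕ) :
    ∀ (Av : Finset C) (S' X' : List A), Av.card ≤ m →
      (∀ c, c ∉ Av → ∃ e, col e = c ∧ (e :: X).Sublist X') → S ⊆ S' → X.Sublist X' →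
      CT Cons k E (m + 1 + m') S' X' →
      ∃ e e', col e = col e' ∧ CT Cons k E m' (e' :: S) (e :: X) := by
  induction m with
  | zero =>
    rintro Av S' X' hAv hcol hS hX h
    rw [show 0 + 1 + m' = m' + 1 by omega] at h
    obtain ⟨d0, d1, h0, h1⟩ := h
    obtain ⟨e, he, hex⟩ := hcol (col d1) (by
      have : Av = ∅ := Finset.card_eq_zero.1 (by omega)
      simp [this])
    exact ⟨e, d1, he, CT_mono anti _ _ _ _ _ _ _ (List.cons_subset_cons _ hS) hex h1⟩
  | succ m ih =>
    rintro Av S' X' hAv hcol hS hX h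
    rw [show m + 1 + 1 + m' = (m + 1 + m') + 1 by omega] at h
    obtain ⟨d0, d1, h0, h1⟩ := h
    by_cases hd : col d1 ∈ Av
    · refine ih (Av.erase (col d1)) _ _ ?_ ?_ ?_ ?_ h0
      · rw [Finset.card_erase_of_mem hd]; omega
      · intro c hc
        by_cases hcd : c = col d1
        · exact ⟨d1, hcd.symm, hX.cons_cons _⟩
        · obtain ⟨e, he, hex⟩ := hcol c (fun h => hc (Finset.mem_erase.2 ⟨hcd, h⟩))
          exact ⟨e, he, hex.trans (List.sublist_cons_self _ _)⟩
      · exact fun y hy => List.mem_cons_of_mem _ (hS hy)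
      · exact hX.trans (List.sublist_cons_self _ _)
    · obtain ⟨e, he, hex⟩ := hcol _ hd
      exact ⟨e, d1, he, CT_mono anti _ _ _ _ _ _ _ (List.cons_subset_cons _ hS) hex
        (CT_le anti _ _ _ _ _ _ (by omega) h1)⟩

/-- rows of the array cannot be distinguished over the earlier rows -/
def AR {ι : Type*} (R : ι → List (A × A) → A → Prop) : List (A × A) → Prop
  | [] => True
  | p :: H => AR R H ∧ ∀ Z, List.Sublist Z H → ∀ i, R i Z p.1 ↔ R i Z p.2

theorem AR_sub {ι : Type*} (R : ι → List (A × A) → A → Prop) {H H' : List (A × A)}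
    (h : List.Sublist H' H) (hH : AR R H) : AR R H' := by
  induction h with
  | slnil => exact hH
  | cons a _ ih => exact ih hH.1
  | cons_cons a h' ih => exact ⟨ih hH.1, fun Z hZ i => hH.2 Z (hZ.trans h') i⟩

theorem AR_exists {ι : Type} [Fintype ι] (q : ℕ) : ∀ m', ∃ n, ∀ {A : Type u} {Cons : List A → Prop}
    (_ : ∀ l l' : List A, l ⊆ l' → Cons l' → Cons l) (k : ℕ) (E : List A)
    (R : ι → List (A × A) → A → Prop), CT Cons k E n [] [] →
    ∃ H : List (A × A), H.length = q ∧ AR R H ∧ CT Cons k E m' (H.map Prod.fst) (H.map Prod.snd) := by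
  classical
  induction q with
  | zero => exact fun m' => ⟨m', fun _ k E R h => ⟨[], rfl, trivial, h⟩⟩
  | succ q ih =>
    intro m'
    obtain ⟨n, hn⟩ := ih (Fintype.card (ι → Fin (2 ^ q) → Prop) + 1 + m')
    refine ⟨n, fun {A} {Cons} anti k E R h => ?_⟩
    obtain ⟨H, hq, hAR, hCT⟩ := hn anti k E R h
    obtain ⟨e, e', hc, h2⟩ := CT_step anti k E m' (H.map Prod.fst) (H.map Prod.snd)
      (fun c (i : ι) (j : Fin (2 ^ q)) => R i (H.sublists.getD j []) c) _ Finset.univ _ _ le_rfl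
      (fun c hc => absurd (Finset.mem_univ c) hc) (fun _ h => h) (List.Sublist.refl _) hCT
    refine ⟨(e', e) :: H, by simp [hq], ⟨hAR, ?_⟩, h2⟩
    intro Z hZ i
    obtain ⟨j, hj, hjZ⟩ := List.getElem_of_mem (List.mem_sublists.2 hZ)
    have := congrFun (congrFun hc i) ⟨j, by rw [List.length_sublists, hq] at hj; exact hj⟩
    simp only [List.getD_eq_getElem _ _ hj, hjZ] at this
    exact (iff_of_eq this).symm

/-- pre-homogeneous lists -/
def PreHom (R : List A → Prop) (r : ℕ) : List A → Prop
  | [] => True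
  | x :: l => ((∀ t, List.Sublist t l → t.length = r → R (x :: t)) ∨
      (∀ t, List.Sublist t l → t.length = r → ¬ R (x :: t))) ∧ PreHom R r l

theorem preHom_split (R : List A → Prop) (r : ℕ) (l : List A) : ∀ q₁ q₂, PreHom R r l →
    q₁ + q₂ ≤ l.length → ∃ l', List.Sublist l' l ∧
      ((l'.length = q₁ ∧ ∀ t, List.Sublist t l' → t.length = r + 1 → R t) ∨
       (l'.length = q₂ ∧ ∀ t, List.Sublist t l' → t.length = r + 1 → ¬ R t)) := by
  induction l with
  | nil =>
    intro q₁ q₂ _ h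
    simp at h
    exact ⟨[], List.Sublist.refl _, Or.inl ⟨by simp [h.1], fun t ht h => by simp_all⟩⟩
  | cons x l ih =>
    intro q₁ q₂ hp h
    obtain ⟨hx, hp⟩ := hp
    rcases hx with hx | hx
    · cases q₁ with
      | zero => exact ⟨[], List.nil_sublist _, Or.inl ⟨rfl, fun t ht h => by simp_all⟩⟩
      | succ q₁ =>
        obtain ⟨l', hl', h1 | h1⟩ := ih q₁ q₂ hp (by simp at h; omega)
        · refine ⟨x :: l', hl'.cons_cons _, Or.inl ⟨by simp [h1.1], ?_⟩⟩
          intro t ht htr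
          cases ht with
          | cons _ ht => exact h1.2 t ht htr
          | cons_cons _ ht => exact hx _ (ht.trans hl') (by simpa using htr)
        · exact ⟨l', hl'.trans (List.sublist_cons_self _ _), Or.inr h1⟩
    · cases q₂ with
      | zero => exact ⟨[], List.nil_sublist _, Or.inr ⟨rfl, fun t ht h => by simp_all⟩⟩
      | succ q₂ =>
        obtain ⟨l', hl', h1 | h1⟩ := ih q₁ q₂ hp (by simp at h; omega)
        · exact ⟨l', hl'.trans (List.sublist_cons_self _ _), Or.inl h1⟩
        · refine ⟨x :: l', hl'.cons_cons _, Or.inr ⟨by simp [h1.1], ?_⟩⟩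
          intro t ht htr
          cases ht with
          | cons _ ht => exact h1.2 t ht htr
          | cons_cons _ ht => exact hx _ (ht.trans hl') (by simpa using htr)

theorem list_ramsey (r : ℕ) : ∀ q, ∃ n, ∀ {A : Type u} (R : List A → Prop) (l : List A),
    n ≤ l.length → ∃ l', List.Sublist l' l ∧ l'.length = q ∧
      ((∀ t, List.Sublist t l' → t.length = r → R t) ∨
       (∀ t, List.Sublist t l' → t.length = r → ¬ R t)) := by
  induction r with
  | zero =>
    intro q
    refine ⟨q, fun R l h => ⟨l.take q, List.take_sublist _ _, by simp [h], ?_⟩⟩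
    by_cases h0 : R []
    · exact Or.inl (fun t _ ht => by rw [List.length_eq_zero_iff.1 ht]; exact h0)
    · exact Or.inr (fun t _ ht => by rw [List.length_eq_zero_iff.1 ht]; exact h0)
  | succ r ih =>
    have pre : ∀ m, ∃ n, ∀ {A : Type u} (R : List A → Prop) (l : List A),
        n ≤ l.length → ∃ l', List.Sublist l' l ∧ l'.length = m ∧ PreHom R r l' := by
      intro m
      induction m with
      | zero => exact ⟨0, fun R l _ => ⟨[], List.nil_sublist _, rfl, trivial⟩⟩
      | succ m ihm =>
        obtain ⟨n₁, h₁⟩ := ihm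
        obtain ⟨n₂, h₂⟩ := ih n₁
        refine ⟨n₂ + 1, fun R l hl => ?_⟩
        cases l with
        | nil => simp at hl
        | cons x l =>
          obtain ⟨l₁, hl₁, hn₁, hh⟩ := h₂ (fun t => R (x :: t)) l (by simpa using hl)
          obtain ⟨l₂, hl₂, hn₂, hp⟩ := h₁ R l₁ hn₁.ge
          refine ⟨x :: l₂, (hl₂.trans hl₁).cons_cons _, by simp [hn₂], ?_, hp⟩
          exact hh.imp (fun h t ht => h t (ht.trans hl₂)) (fun h t ht => h t (ht.trans hl₂))
    intro q
    obtain ⟨n, hn⟩ := pre (q + q)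
    refine ⟨n, fun R l hl => ?_⟩
    obtain ⟨l', hl', hlen, hp⟩ := hn R l hl
    obtain ⟨l'', hl'', h | h⟩ := preHom_split R r l' q q hp hlen.ge
    · exact ⟨l'', hl''.trans hl', h.1, Or.inl h.2⟩
    · exact ⟨l'', hl''.trans hl', h.1, Or.inr h.2⟩

end Comb

section Comb2

theorem inc_case {A : Type u} {Cons : List A → Prop}
    (anti : ∀ l l' : List A, l ⊆ l' → Cons l' → Cons l) (N h : ℕ) (E : List A)
    (H : List (A × A))
    (hom : ∀ l p, List.Sublist (l ++ [p]) H → l.length = N → ¬ Cons (p.2 :: l.map Prod.fst ++ E))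
    (hfst : Cons (H.map Prod.fst ++ E))
    (har : ∀ p Z, List.Sublist (p :: Z) H → ∀ j < h,
      (∃ w : List A, w.length = N ∧ (∀ x ∈ Z.map Prod.snd, ¬ Cons (x :: p.1 :: w ++ E)) ∧
        STp Cons N E j (p.1 :: w ++ Z.map Prod.fst) (Z.map Prod.snd)) →
      (∃ w : List A, w.length = N ∧ (∀ x ∈ Z.map Prod.snd, ¬ Cons (x :: p.2 :: w ++ E)) ∧
        STp Cons N E j (p.2 :: w ++ Z.map Prod.fst) (Z.map Prod.snd))) :
    ∀ j ≤ h, ∀ L Z, H = L ++ Z → L.length = j * (N + 1) →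
      STp Cons N E j (Z.map Prod.fst) (Z.map Prod.snd) := by
  intro j
  induction j with
  | zero =>
    intro _ L Z hH hL
    have : L = [] := List.length_eq_zero_iff.1 (by simpa using hL)
    subst this
    simpa [hH, STp] using hfst
  | succ j ih =>
    intro hj L Z hH hL
    -- split L
    have hlen : L.length = j * (N + 1) + N + 1 := by rw [hL]; ring
    obtain ⟨L', p, rfl⟩ : ∃ L' p, L = L' ++ [p] := by
      exact ⟨L.dropLast, L.getLast (by rintro rfl; simp at hlen), (List.dropLast_append_getLast _).symm⟩
    have hlen' : L'.length = j * (N + 1) + N := by simpa using hlen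
    obtain ⟨L₀, W, rfl, hL₀, hW⟩ : ∃ L₀ W, L' = L₀ ++ W ∧ L₀.length = j * (N + 1) ∧ W.length = N :=
      ⟨L'.take (j * (N+1)), L'.drop (j * (N+1)), by simp, by simp [hlen'], by simp [hlen']⟩
    have key := ih (by omega) L₀ (W ++ p :: Z) (by simp [hH]) hL₀
    have hsub : List.Sublist (p :: Z) H := by
      rw [hH]; simp
    have hinc : ∀ z ∈ p :: Z, ¬ Cons (z.2 :: W.map Prod.fst ++ E) := by
      intro z hz
      refine hom W z ?_ hW
      rw [hH]
      simp only [List.append_assoc]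
      refine List.Sublist.trans ?_ (List.sublist_append_right L₀ _)
      refine (List.Sublist.refl W).append ?_
      simpa using hz
    have hX : ∀ x ∈ Z.map Prod.snd, ¬ Cons (x :: p.1 :: W.map Prod.fst ++ E) := by
      intro x hx
      obtain ⟨z, hz, rfl⟩ := List.mem_map.1 hx
      intro hc
      refine hinc z (by simp [hz]) (anti _ _ ?_ hc)
      intro y hy; simp only [List.map_append, List.map_cons, List.mem_append, List.mem_cons, List.cons_append] at hy ⊢; tauto
    have hR := har p Z hsub j (by omega) ⟨W.map Prod.fst, by simp [hW], hX, by
      refine STp_mono anti N E j _ _ _ _ ?_ ?_ key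
      · intro y hy; simp only [List.map_append, List.map_cons, List.mem_append, List.mem_cons, List.cons_append] at hy ⊢; tauto
      · intro y hy; simp only [List.map_append, List.map_cons, List.mem_append, List.mem_cons, List.cons_append] at hy ⊢; tauto⟩
    obtain ⟨w, hw, hxw, hst⟩ := hR
    refine ⟨p.1 :: W.map Prod.fst, w, p.2, by simp [hW], hw, hX, hxw, ?_, ?_, hst⟩
    · intro hc
      refine hinc p (by simp) (anti _ _ ?_ hc)
      intro y hy; simp only [List.map_append, List.map_cons, List.mem_append, List.mem_cons, List.cons_append] at hy ⊢; tauto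
    · refine STp_mono anti N E j _ _ _ _ ?_ ?_ key
      · intro y hy; simp only [List.map_append, List.map_cons, List.mem_append, List.mem_cons, List.cons_append] at hy ⊢; tauto
      · intro y hy; simp only [List.map_append, List.map_cons, List.mem_append, List.mem_cons, List.cons_append] at hy ⊢; tauto

theorem con_case {A : Type u} {Cons : List A → Prop}
    (anti : ∀ l l' : List A, l ⊆ l' → Cons l' → Cons l) (N k : ℕ) (E : List A)
    (H : List (A × A)) (p0 : A × A)
    (hom : Cons (p0.2 :: H.map Prod.fst ++ E))
    (hsnd : ∀ Y, List.Sublist Y ((H ++ [p0]).map Prod.snd) → Y.length = k + 1 → ¬ Cons (Y ++ E))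
    (har : ∀ p Z, List.Sublist (p :: Z) H → ∀ j < N,
      CT Cons k (p0.2 :: E) j (p.1 :: Z.map Prod.fst) (Z.map Prod.snd) →
      CT Cons k (p0.2 :: E) j (p.2 :: Z.map Prod.fst) (Z.map Prod.snd)) :
    ∀ j ≤ N, ∀ L Z, H = L ++ Z → L.length = j →
      CT Cons k (p0.2 :: E) j (Z.map Prod.fst) (Z.map Prod.snd) := by
  intro j
  induction j with
  | zero =>
    intro _ L Z hH hL
    have : L = [] := List.length_eq_zero_iff.1 hL
    subst this
    simp at hH
    subst hH
    refine ⟨anti _ _ ?_ hom, ?_⟩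
    · intro y hy; simp only [List.map_append, List.map_cons, List.mem_append, List.mem_cons, List.cons_append] at hy ⊢; tauto
    · intro Y hY hk hc
      refine hsnd (Y ++ [p0.2]) ?_ (by simp [hk]) ?_
      · simpa using hY
      · simpa using hc
  | succ j ih =>
    intro hj L Z hH hL
    obtain ⟨L', p, rfl⟩ : ∃ L' p, L = L' ++ [p] := by
      exact ⟨L.dropLast, L.getLast (by rintro rfl; simp at hL), (List.dropLast_append_getLast _).symm⟩
    have key := ih (by omega) L' (p :: Z) (by simp [hH]) (by simpa using hL)
    refine ⟨p.1, p.2, key, har p Z (by rw [hH]; simp) j (by omega) ?_⟩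
    exact CT_mono anti _ _ _ _ _ _ _ (List.Subset.refl _) (List.sublist_cons_self _ _) key

theorem combC (k : ℕ) : ∀ {A : Type u} {Cons : List A → Prop}
    (_ : ∀ l l' : List A, l ⊆ l' → Cons l' → Cons l) (s : ℕ)
    (_ : ∀ n, ∃ E : List A, E.length = s ∧ CT Cons k E n [] []),
    ∃ K, ∀ h, STB Cons K h [] [] := by
  induction k with
  | zero =>
    intro A Cons anti s h
    obtain ⟨E, -, h⟩ := h 0
    exact absurd (by simpa using h.1) (h.2 [] (List.nil_sublist _) rfl)
  | succ k ih =>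
    intro A Cons anti s hyp
    by_cases hN : ∀ N, ∃ E : List A, E.length = s + 1 ∧ CT Cons k E N [] []
    · exact ih anti (s + 1) hN
    push Not at hN
    obtain ⟨N, hN⟩ := hN
    refine ⟨N + 1 + s, fun h => ?_⟩
    obtain ⟨q, hq⟩ := list_ramsey.{u} (N + 1) (h * (N + 1) + (N + 1))
    obtain ⟨n, hn⟩ := AR_exists.{u} (ι := Fin h ⊕ Fin N) q 0
    obtain ⟨E, hE, hCT⟩ := hyp n
    obtain ⟨H, hH, hAR, hC0⟩ := hn anti (k + 1) E (fun i Z c => i.elim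
      (fun j : Fin h => ∃ w : List A, w.length = N ∧ (∀ x ∈ Z.map Prod.snd, ¬ Cons (x :: c :: w ++ E)) ∧
        STp Cons N E j (c :: w ++ Z.map Prod.fst) (Z.map Prod.snd))
      (fun j : Fin N => ∀ (Z' : List (A × A)) p0, Z = Z' ++ [p0] →
        CT Cons k (p0.2 :: E) j (c :: Z'.map Prod.fst) (Z'.map Prod.snd))) hCT
    obtain ⟨H', hH', hlen, hom⟩ := hq (fun t : List (A × A) => ∀ l p, t = l ++ [p] →
      Cons (p.2 :: l.map Prod.fst ++ E)) H hH.ge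
    have hC0' := CT_mono anti _ _ _ _ _ _ _ (hH'.map Prod.fst).subset (hH'.map Prod.snd) hC0
    have hAR' := AR_sub _ hH' hAR
    rcases hom with hom | hom
    · exfalso
      -- consistent case
      set H₁ := H'.drop (h * (N + 1)) with hH₁
      have hs1 : List.Sublist H₁ H' := List.drop_sublist _ _
      have hl1 : H₁.length = N + 1 := by simp [hH₁, hlen]
      obtain ⟨H₂, p0, h2⟩ : ∃ L' p, H₁ = L' ++ [p] := by
        exact ⟨H₁.dropLast, H₁.getLast (by intro h; simp [h] at hl1), (List.dropLast_append_getLast _).symm⟩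
      have hl2 : H₂.length = N := by simpa [h2] using hl1
      rw [h2] at hs1
      refine hN (p0.2 :: E) (by simp [hE]) ?_
      refine con_case anti N k E H₂ p0 (hom _ hs1 (by simp [hl2]) _ _ rfl) ?_ ?_ N le_rfl H₂ [] (by simp) hl2
      · intro Y hY
        exact hC0'.2 Y (hY.trans (hs1.map _))
      · intro p Z hpZ j hj hh
        have := AR_sub _ ((hpZ.append (List.Sublist.refl [p0])).trans hs1) hAR'
        have := (this.2 (Z ++ [p0]) (List.Sublist.refl _) (Sum.inr ⟨j, hj⟩)).1 (by
          rintro Z' q hq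
          obtain ⟨rfl, rfl⟩ := (List.append_singleton_inj).1 hq
          exact hh)
        exact this Z p0 rfl
    · refine STp_STB anti N s E hE h [] [] [] [] (by simp) (by simp) ?_
      set H₁ := H'.take (h * (N + 1)) with hH₁
      have hs1 : List.Sublist H₁ H' := List.take_sublist _ _
      have hl1 : H₁.length = h * (N + 1) := by simp [hH₁, hlen]
      refine inc_case anti N h E H₁ ?_ ?_ ?_ h le_rfl H₁ [] (by simp) hl1
      · intro l p hs hl hc
        refine hom _ (hs.trans hs1) (by simp [hl]) ?_
        intro l' p' he
        obtain ⟨rfl, rfl⟩ := (List.append_singleton_inj).1 he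
        exact hc
      · refine anti _ _ ?_ hC0'.1
        intro y hy
        rcases List.mem_append.1 hy with hy | hy
        · exact List.mem_append_left _ ((hs1.map _).subset hy)
        · exact List.mem_append_right _ hy
      · intro p Z hpZ j hj hh
        have := AR_sub _ (hpZ.trans hs1) hAR'
        exact (this.2 Z (List.Sublist.refl _) (Sum.inl ⟨j, hj⟩)).1 hh

/-- prefixes -/
def pidx : List Bool → List (List Bool)
  | [] => [ [] ]
  | b :: η => [] :: (pidx η).map (List.cons b)

/-- right siblings of left turns -/
def sidx : List Bool → List (List Bool)
  | [] => []
  | false :: η => [true] :: (sidx η).map (List.cons false)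
  | true :: η => (sidx η).map (List.cons true)

theorem CT_of_fun {A : Type u} {Cons : List A → Prop}
    (anti : ∀ l l' : List A, l ⊆ l' → Cons l' → Cons l) (k n : ℕ) :
    ∀ (T : List Bool → A) (S X : List A),
    (∀ η : List Bool, η.length = n → Cons ((pidx η).tail.map T ++ S) ∧
      ∀ Y, List.Sublist Y (X.reverse ++ (sidx η).map T) → Y.length = k → ¬ Cons Y) →
    CT Cons k [] n S X := by
  induction n with
  | zero =>
    intro T S X h
    obtain ⟨h1, h2⟩ := h [] rfl
    simp [pidx, sidx] at h1 h2
    refine ⟨by simpa using h1, fun Y hY hk hc => ?_⟩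
    refine h2 Y.reverse (List.reverse_sublist.2 hY) (by simp [hk]) (anti _ _ ?_ hc)
    intro y; simp
  | succ n ih =>
    intro T S X h
    refine ⟨T [false], T [true], ih (fun η => T (false :: η)) _ _ ?_,
      ih (fun η => T (true :: η)) _ _ ?_⟩
    · intro η hη
      obtain ⟨h1, h2⟩ := h (false :: η) (by simp [hη])
      have hp : ∃ l, pidx η = [] :: l := by cases η <;> exact ⟨_, rfl⟩
      obtain ⟨l, hl⟩ := hp
      refine ⟨anti _ _ ?_ h1, ?_⟩
      · intro y hy
        simp only [pidx, hl, List.tail_cons, List.map_cons, List.map_map, List.mem_append, List.mem_cons, Function.comp_def] at hy ⊢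
        tauto
      · intro Y hY hk
        refine h2 Y (by simpa [sidx, Function.comp_def] using hY) hk
    · intro η hη
      obtain ⟨h1, h2⟩ := h (true :: η) (by simp [hη])
      have hp : ∃ l, pidx η = [] :: l := by cases η <;> exact ⟨_, rfl⟩
      obtain ⟨l, hl⟩ := hp
      refine ⟨anti _ _ ?_ h1, ?_⟩
      · intro y hy
        simp only [pidx, hl, List.tail_cons, List.map_cons, List.map_map, List.mem_append, List.mem_cons, Function.comp_def] at hy ⊢
        tauto
      · intro Y hY hk
        refine h2 Y (by simpa [sidx, Function.comp_def] using hY) hk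

theorem STB_fun {A : Type u} {Cons : List A → Prop}
    (anti : ∀ l l' : List A, l ⊆ l' → Cons l' → Cons l) (K h : ℕ) :
    ∀ (S : List A) (X : List (List A)), STB Cons K h S X → ∃ t : List Bool → List A,
      (∀ η : List Bool, η ≠ [] → η.length ≤ h → (t η).length = K) ∧
      (∀ x ∈ X, ∀ η : List Bool, η ≠ [] → η.length ≤ h → ¬ Cons (x ++ t η)) ∧
      (∀ η : List Bool, η.length ≤ h → ∀ l : List A,
        (∀ y ∈ l, y ∈ S ∨ ∃ θ, θ ≠ [] ∧ θ <+: η ∧ y ∈ t θ) → Cons l) ∧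
      (∀ η₁ η₂ : List Bool, (η₁ ++ [false]) <+: η₂ → η₂.length ≤ h →
        ¬ Cons (t (η₁ ++ [true]) ++ t η₂)) := by
  induction h with
  | zero =>
    intro S X hS
    refine ⟨fun _ => [], ?_, ?_, ?_, ?_⟩
    · intro η h1 h2
      exact absurd (List.length_eq_zero_iff.1 (by omega)) h1
    · intro x _ η h1 h2
      exact absurd (List.length_eq_zero_iff.1 (by omega)) h1
    · intro η _ l hl
      refine anti _ _ ?_ hS
      intro y hy
      rcases hl y hy with h | ⟨_, _, _, h⟩
      · exact h
      · simp at h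
    · intro η₁ η₂ h1 h2
      have := h1.length_le
      simp at this; omega
  | succ h ih =>
    rintro S X ⟨D0, D1, h1, h2, h3, h4, h5, h6, h7⟩
    obtain ⟨t0, a0, b0, c0, d0⟩ := ih _ _ h6
    obtain ⟨t1, a1, b1, c1, d1⟩ := ih _ _ h7
    let t : List Bool → List A := fun η => match η with
      | [] => []
      | [false] => D0
      | [true] => D1
      | false :: b :: η => t0 (b :: η)
      | true :: b :: η => t1 (b :: η)
    refine ⟨t, ?_, ?_, ?_, ?_⟩
    · rintro (_ | ⟨(_|_), (_ | ⟨b, η⟩)⟩) hη hl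
      · exact absurd rfl hη
      · exact h1
      · exact a0 _ (by simp) (by simpa using hl)
      · exact h2
      · exact a1 _ (by simp) (by simpa using hl)
    · rintro x hx (_ | ⟨(_|_), (_ | ⟨b, η⟩)⟩) hη hl
      · exact absurd rfl hη
      · exact h3 x hx
      · exact b0 x (by simp [hx]) _ (by simp) (by simpa using hl)
      · exact h4 x hx
      · exact b1 x hx _ (by simp) (by simpa using hl)
    · rintro (_ | ⟨(_|_), η⟩) hl l hy
      · refine c0 [] (by simp) l ?_
        intro y hyl
        rcases hy y hyl with h | ⟨θ, ha, hb, hc⟩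
        · left; simp [h]
        · exact absurd (List.prefix_nil.1 hb) ha
      · refine c0 η (by simpa using hl) l ?_
        intro y hyl
        rcases hy y hyl with h | ⟨θ, ha, hb, hc⟩
        · left; simp [h]
        · obtain (_ | ⟨b, θ⟩) := θ
          · exact absurd rfl ha
          obtain ⟨rfl, hb'⟩ := List.cons_prefix_cons.1 hb
          obtain (_ | ⟨b, θ⟩) := θ
          · left; simp; left; exact hc
          · right; exact ⟨b :: θ, by simp, hb', hc⟩
      · refine c1 η (by simpa using hl) l ?_
        intro y hyl
        rcases hy y hyl with h | ⟨θ, ha, hb, hc⟩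
        · left; simp [h]
        · obtain (_ | ⟨b, θ⟩) := θ
          · exact absurd rfl ha
          obtain ⟨rfl, hb'⟩ := List.cons_prefix_cons.1 hb
          obtain (_ | ⟨b, θ⟩) := θ
          · left
            have : y ∈ D1 := hc
            simp [this]
          · right; exact ⟨b :: θ, by simp, hb', hc⟩
    · rintro (_ | ⟨b, η₁⟩) η₂ hp hl
      · obtain (_ | ⟨b, η₂⟩) := η₂
        · simp at hp
        obtain ⟨rfl, hp⟩ := List.cons_prefix_cons.1 hp
        obtain (_ | ⟨b, η₂⟩) := η₂
        · exact h5
        · exact b0 D1 (by simp) _ (by simp) (by simpa using hl)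
      · obtain (_ | ⟨b', η₂⟩) := η₂
        · simp at hp
        obtain ⟨rfl, hp'⟩ := List.cons_prefix_cons.1 hp
        have hne : ∀ l : List Bool, ∀ c, l ++ [c] ≠ [] := by simp
        have hne2 : η₂ ≠ [] := by
          rintro rfl; simp at hp'
        have e0 : ∀ η : List Bool, η ≠ [] → t (false :: η) = t0 η := by
          rintro (_ | ⟨_, _⟩) h
          · exact absurd rfl h
          · rfl
        have e1 : ∀ η : List Bool, η ≠ [] → t (true :: η) = t1 η := by
          rintro (_ | ⟨_, _⟩) h
          · exact absurd rfl h
          · rfl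
        cases b
        · rw [List.cons_append, e0 _ (hne _ _), e0 _ hne2]
          exact d0 _ _ hp' (by simpa using hl)
        · rw [List.cons_append, e1 _ (hne _ _), e1 _ hne2]
          exact d1 _ _ hp' (by simpa using hl)

end Comb2

/-! ### Definable predicates -/
section DfnSec
variable {L : FirstOrder.Language.{u, v}} {𝕄 : Type w} [L.Structure 𝕄]

/-- A predicate on tuples is definable over `A`. -/
def Dfn (L : FirstOrder.Language.{u, v}) {𝕄 : Type w} [L.Structure 𝕄] (A : Set 𝕄) {α : Type}
    (D : (α → 𝕄) → Prop) : Prop :=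
  ∃ φ : ParamFormula L 𝕄 α, φ.ParamsIn A ∧ ∀ x, D x ↔ φ.Realize x

theorem Dfn.of_iff {A : Set 𝕄} {α : Type} {D D' : (α → 𝕄) → Prop} (h : Dfn L A D)
    (hh : ∀ x, D' x ↔ D x) : Dfn L A D' := by
  obtain ⟨φ, h1, h2⟩ := h
  exact ⟨φ, h1, fun x => (hh x).trans (h2 x)⟩

theorem Dfn.not {A : Set 𝕄} {α : Type} {D : (α → 𝕄) → Prop} (h : Dfn L A D) :
    Dfn L A (fun x => ¬ D x) := by
  obtain ⟨φ, h1, h2⟩ := h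
  refine ⟨φ.not, h1, fun x => ?_⟩
  refine (not_congr (h2 x)).trans ?_
  simp only [ParamFormula.Realize, ParamFormula.not, Formula.Realize, BoundedFormula.realize_not]

theorem Dfn.and {A : Set 𝕄} {α : Type} {D D' : (α → 𝕄) → Prop} (h : Dfn L A D) (h' : Dfn L A D') :
    Dfn L A (fun x => D x ∧ D' x) := by
  obtain ⟨φ, h1, h2⟩ := h
  obtain ⟨ψ, h3, h4⟩ := h'
  refine ⟨⟨φ.Params ⊕ ψ.Params, (φ.toFormula.relabel (Sum.map id Sum.inl)) ⊓
    (ψ.toFormula.relabel (Sum.map id Sum.inr)), Sum.elim φ.params ψ.params⟩, ?_, fun x => ?_⟩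
  · rintro (i | i)
    · exact h1 i
    · exact h3 i
  · simp only [h2 x, h4 x, ParamFormula.Realize, Formula.realize_inf, Formula.realize_relabel,
      Sum.elim_comp_map, Function.comp_id, Sum.elim_comp_inl, Sum.elim_comp_inr]

theorem Dfn.true {A : Set 𝕄} {α : Type} : Dfn L A (fun _ : α → 𝕄 => True) :=
  ⟨⟨Empty, ⊤, Empty.elim⟩, fun i => i.elim, fun x => by
    simp [ParamFormula.Realize]⟩

theorem Dfn.const {A : Set 𝕄} {α : Type} (p : Prop) : Dfn L A (fun _ : α → 𝕄 => p) := by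
  by_cases h : p
  · exact Dfn.true.of_iff (by simp [h])
  · exact (Dfn.true.not).of_iff (by simp [h])

theorem Dfn.or {A : Set 𝕄} {α : Type} {D D' : (α → 𝕄) → Prop} (h : Dfn L A D) (h' : Dfn L A D') :
    Dfn L A (fun x => D x ∨ D' x) :=
  ((h.not).and (h'.not)).not.of_iff (fun x => by tauto)

theorem Dfn.imp {A : Set 𝕄} {α : Type} {D D' : (α → 𝕄) → Prop} (h : Dfn L A D) (h' : Dfn L A D') :
    Dfn L A (fun x => D x → D' x) :=
  ((h.not).or h').of_iff (fun x => by tauto)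

theorem Dfn.all_finset {A : Set 𝕄} {α : Type} {ι : Type*} (s : Finset ι) {D : ι → (α → 𝕄) → Prop}
    (h : ∀ i ∈ s, Dfn L A (D i)) : Dfn L A (fun x => ∀ i ∈ s, D i x) := by
  classical
  induction s using Finset.induction_on with
  | empty => exact Dfn.true.of_iff (by simp)
  | insert a s ha ih =>
    exact ((h a (by simp)).and (ih (fun i hi => h i (by simp [hi])))).of_iff (by simp)

theorem Dfn.all_fin {A : Set 𝕄} {α : Type} {ι : Type*} [Finite ι] {D : ι → (α → 𝕄) → Prop}
    (h : ∀ i, Dfn L A (D i)) : Dfn L A (fun x => ∀ i, D i x) := by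
  have := Fintype.ofFinite ι
  exact (Dfn.all_finset Finset.univ (fun i _ => h i)).of_iff (by simp)

theorem Dfn.all_list {A : Set 𝕄} {α : Type} {ι : Type*} (l : List ι) {D : ι → (α → 𝕄) → Prop}
    (h : ∀ i ∈ l, Dfn L A (D i)) : Dfn L A (fun x => ∀ i ∈ l, D i x) := by
  classical
  exact (Dfn.all_finset l.toFinset (fun i hi => h i (by simpa using hi))).of_iff (by simp)

theorem Dfn.comp {A : Set 𝕄} {α β : Type} {D : (α → 𝕄) → Prop} (h : Dfn L A D) (g : α → β) :
    Dfn L A (fun y : β → 𝕄 => D (y ∘ g)) := by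
  obtain ⟨φ, h1, h2⟩ := h
  refine ⟨⟨φ.Params, φ.toFormula.relabel (Sum.map g id), φ.params⟩, h1, fun x => ?_⟩
  simp only [h2, ParamFormula.Realize, Formula.realize_relabel, Sum.elim_comp_map, Function.comp_id]

theorem Dfn.mono {A B : Set 𝕄} (hAB : A ⊆ B) {α : Type} {D : (α → 𝕄) → Prop} (h : Dfn L A D) :
    Dfn L B D := by
  obtain ⟨φ, h1, h2⟩ := h
  exact ⟨φ, fun i => hAB (h1 i), h2⟩

/-- substituting variables or elements of `A` for variables -/
theorem Dfn.subst {A : Set 𝕄} (hA : A.Nonempty) {α β : Type} {D : (α → 𝕄) → Prop} (h : Dfn L A D)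
    (σ : α → β ⊕ {m // m ∈ A}) :
    Dfn L A (fun y : β → 𝕄 => D (fun i => Sum.elim y Subtype.val (σ i))) := by
  classical
  obtain ⟨φ, h1, h2⟩ := h
  obtain ⟨z, hz⟩ := hA
  refine ⟨⟨α ⊕ φ.Params, φ.toFormula.relabel (Sum.elim
    (fun i => Sum.elim Sum.inl (fun _ => Sum.inr (Sum.inl i)) (σ i))
    (Sum.inr ∘ Sum.inr)),
    Sum.elim (fun i => Sum.elim (fun _ => z) Subtype.val (σ i)) φ.params⟩, ?_, fun x => ?_⟩
  · rintro (i | i)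
    · simp only [Sum.elim_inl]
      cases hs : σ i with
      | inl y => simpa using hz
      | inr m => simp
    · exact h1 i
  · simp only [h2, ParamFormula.Realize, Formula.realize_relabel]
    have : (Sum.elim (fun i => Sum.elim x Subtype.val (σ i)) φ.params) =
      (Sum.elim x (Sum.elim (fun i => Sum.elim (fun _ => z) Subtype.val (σ i)) φ.params) ∘
        Sum.elim (fun i => Sum.elim Sum.inl (fun _ => Sum.inr (Sum.inl i)) (σ i))
          (Sum.inr ∘ Sum.inr)) := by
      funext i
      rcases i with i | i
      · simp only [Sum.elim_inl, Function.comp_apply]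
        cases hs : σ i <;> simp [hs]
      · simp
    rw [this]

/-- Finite support of formulas. -/
theorem formula_fs {α γ : Type*} (φ : L.Formula (α ⊕ γ)) :
    ∃ (s : Finset γ) (ψ : L.Formula (α ⊕ s)), ∀ (x : α → 𝕄) (y : γ → 𝕄),
      φ.Realize (Sum.elim x y) ↔ ψ.Realize (Sum.elim x (fun i => y i)) := by
  classical
  let s : Finset γ := (BoundedFormula.freeVarFinset φ).preimage Sum.inr Sum.inr_injective.injOn
  have hs : ∀ c, Sum.inr c ∈ BoundedFormula.freeVarFinset φ → c ∈ s := fun c hc => by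
    simpa [s] using hc
  let f : BoundedFormula.freeVarFinset φ → α ⊕ s := fun v => match v with
    | ⟨Sum.inl a, _⟩ => Sum.inl a
    | ⟨Sum.inr c, h⟩ => Sum.inr ⟨c, hs c h⟩
  refine ⟨s, BoundedFormula.restrictFreeVar φ f, fun x y => ?_⟩
  refine (BoundedFormula.realize_restrictFreeVar (φ := φ) (f := f) (Sum.elim x y) ?_).symm
  rintro ⟨a | c, h⟩ <;> rfl

theorem Dfn.ex_fin {A : Set 𝕄} {α γ : Type} [Finite γ] {D : (α ⊕ γ → 𝕄) → Prop}
    (h : Dfn L A D) : Dfn L A (fun x : α → 𝕄 => ∃ y : γ → 𝕄, D (Sum.elim x y)) := by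
  obtain ⟨φ, h1, h2⟩ := h
  refine ⟨⟨φ.Params, (φ.toFormula.relabel
    (Sum.elim (Sum.elim (Sum.inl ∘ Sum.inl) Sum.inr) (Sum.inl ∘ Sum.inr)) :
      L.Formula ((α ⊕ φ.Params) ⊕ γ)).iExs γ, φ.params⟩, h1, fun x => ?_⟩
  simp only [h2, ParamFormula.Realize, Formula.realize_iExs, Formula.realize_relabel]
  refine exists_congr fun y => ?_
  have : (Sum.elim (Sum.elim x y) φ.params) = (Sum.elim (Sum.elim x φ.params) y ∘
      Sum.elim (Sum.elim (Sum.inl ∘ Sum.inl) Sum.inr) (Sum.inl ∘ Sum.inr)) := by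
    funext i
    rcases i with (i | i) | i <;> rfl
  rw [this]

theorem Dfn.fs {A : Set 𝕄} {α γ : Type} {D : (α ⊕ γ → 𝕄) → Prop} (h : Dfn L A D) :
    ∃ (s : Finset γ) (D' : (α ⊕ s → 𝕄) → Prop), Dfn L A D' ∧ ∀ x y,
      D (Sum.elim x y) ↔ D' (Sum.elim x (fun i => y i)) := by
  obtain ⟨φ, h1, h2⟩ := h
  obtain ⟨s, ψ, hψ⟩ := formula_fs (𝕄 := 𝕄) (φ.toFormula.relabel
    (Sum.elim (Sum.elim (Sum.inl ∘ Sum.inl) Sum.inr) (Sum.inl ∘ Sum.inr)) :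
      L.Formula ((α ⊕ φ.Params) ⊕ γ))
  refine ⟨s, (⟨φ.Params, ψ.relabel
    (Sum.elim (Sum.elim (Sum.inl ∘ Sum.inl) Sum.inr) (Sum.inl ∘ Sum.inr)), φ.params⟩ :
      ParamFormula L 𝕄 (α ⊕ s)).Realize, ⟨_, h1, fun _ => Iff.rfl⟩, fun x y => ?_⟩
  have e1 := hψ (Sum.elim x φ.params) y
  rw [Formula.realize_relabel] at e1
  rw [h2]
  simp only [ParamFormula.Realize, Formula.realize_relabel]
  convert e1 using 2
  · funext i
    rcases i with (i | i) | i <;> rfl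
  · funext i
    rcases i with (i | i) | i <;> rfl

theorem Dfn.ex {A : Set 𝕄} (hA : A.Nonempty) {α γ : Type} {D : (α ⊕ γ → 𝕄) → Prop}
    (h : Dfn L A D) : Dfn L A (fun x : α → 𝕄 => ∃ y : γ → 𝕄, D (Sum.elim x y)) := by
  classical
  obtain ⟨s, D', h1, h2⟩ := h.fs
  obtain ⟨z, hz⟩ := hA
  refine h1.ex_fin.of_iff fun x => ⟨?_, ?_⟩
  · rintro ⟨y, hy⟩
    exact ⟨_, (h2 x y).1 hy⟩
  · rintro ⟨y, hy⟩
    refine ⟨fun i => if h : i ∈ s then y ⟨i, h⟩ else z, (h2 _ _).2 ?_⟩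
    simpa using hy

theorem Dfn.all {A : Set 𝕄} (hA : A.Nonempty) {α γ : Type} {D : (α ⊕ γ → 𝕄) → Prop}
    (h : Dfn L A D) : Dfn L A (fun x : α → 𝕄 => ∀ y : γ → 𝕄, D (Sum.elim x y)) :=
  (Dfn.ex hA h.not).not.of_iff fun x => by push Not; rfl

/-- Making parameters into variables. -/
theorem Dfn.unsubst {A : Set 𝕄} {α γ : Type} {d : γ → 𝕄} {D : (α → 𝕄) → Prop}
    (h : Dfn L (A ∪ Set.range d) D) :
    ∃ D' : (α ⊕ γ → 𝕄) → Prop, Dfn L A D' ∧ ∀ x, D x ↔ D' (Sum.elim x d) := by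
  classical
  obtain ⟨φ, h1, h2⟩ := h
  have hx : ∀ i : {i // ¬ φ.params i ∈ A}, ∃ j, d j = φ.params i := fun i =>
    (h1 i).resolve_left i.2
  choose f hf using hx
  refine ⟨(⟨{i // φ.params i ∈ A}, φ.toFormula.relabel (Sum.elim (Sum.inl ∘ Sum.inl)
    (fun i => if h : φ.params i ∈ A then Sum.inr ⟨i, h⟩ else Sum.inl (Sum.inr (f ⟨i, h⟩)))),
    fun i => φ.params i⟩ : ParamFormula L 𝕄 (α ⊕ γ)).Realize, ⟨_, ?_, fun _ => Iff.rfl⟩,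
    fun x => ?_⟩
  · exact fun i => Subtype.property i
  rw [h2]
  simp only [ParamFormula.Realize, Formula.realize_relabel]
  have : Sum.elim x φ.params = (Sum.elim (Sum.elim x d)
      (fun i : {i // φ.params i ∈ A} => φ.params i) ∘ (Sum.elim (Sum.inl ∘ Sum.inl)
    (fun i => if h : φ.params i ∈ A then Sum.inr ⟨i, h⟩ else Sum.inl (Sum.inr (f ⟨i, h⟩))))) := by
    funext i
    rcases i with i | i
    · rfl
    · by_cases h : φ.params i ∈ A <;> simp [h, hf]
  rw [this]

theorem subst_realize {α : Type w'} {γ : Type} (φ : ParamFormula L 𝕄 (α ⊕ γ)) (c : γ → 𝕄) (x : α → 𝕄) :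
    (φ.subst c).Realize x ↔ φ.Realize (Sum.elim x c) := by
  simp only [ParamFormula.Realize, ParamFormula.subst, Formula.realize_relabel]
  have : (Sum.elim x (Sum.elim c φ.params) ∘ Sum.elim (Sum.map id Sum.inl) (Sum.inr ∘ Sum.inr)) =
     (Sum.elim (Sum.elim x c) φ.params) := by
    funext i
    rcases i with (i | i) | i <;> rfl
  rw [this]

theorem Dfn.subst_range {A : Set 𝕄} {α γ : Type} {D : (α ⊕ γ → 𝕄) → Prop} (h : Dfn L A D)
    (e : γ → 𝕄) : Dfn L (A ∪ Set.range e) (fun x => D (Sum.elim x e)) := by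
  obtain ⟨φ, h1, h2⟩ := h
  refine ⟨φ.subst e, ?_, fun x => (h2 _).trans (subst_realize φ e x).symm⟩
  rintro (i | i)
  · exact Or.inr ⟨i, rfl⟩
  · exact Or.inl (h1 i)

theorem tpEq_iff {A : Set 𝕄} {β : Type} {b b' : β → 𝕄} :
    TpEq L 𝕄 A b b' ↔ ∀ D : (β → 𝕄) → Prop, Dfn L A D → D b → D b' := by
  constructor
  · rintro h D ⟨φ, h1, h2⟩ hb
    exact (h2 _).2 ((h φ h1).1 ((h2 _).1 hb))
  · intro h φ hφ
    refine ⟨h φ.Realize ⟨φ, hφ, fun _ => Iff.rfl⟩, fun h' => ?_⟩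
    by_contra hc
    exact h _ (Dfn.not ⟨φ, hφ, fun _ => Iff.rfl⟩ : Dfn L A fun x => ¬ φ.Realize x) hc h'

theorem TpEq.dfn {A : Set 𝕄} {β : Type} {b b' : β → 𝕄} (h : TpEq L 𝕄 A b b')
    {D : (β → 𝕄) → Prop} (hD : Dfn L A D) : D b ↔ D b' := by
  obtain ⟨φ, h1, h2⟩ := hD
  exact (h2 _).trans ((h φ h1).trans (h2 _).symm)

theorem TpEq.rfl' {A : Set 𝕄} {β : Type} {b : β → 𝕄} : TpEq L 𝕄 A b b := fun _ _ => Iff.rfl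

theorem TpEq.symm' {A : Set 𝕄} {β : Type} {b b' : β → 𝕄} (h : TpEq L 𝕄 A b b') :
    TpEq L 𝕄 A b' b := fun φ hφ => (h φ hφ).symm

theorem TpEq.trans' {A : Set 𝕄} {β : Type} {b b' b'' : β → 𝕄} (h : TpEq L 𝕄 A b b')
    (h' : TpEq L 𝕄 A b' b'') : TpEq L 𝕄 A b b'' := fun φ hφ => (h φ hφ).trans (h' φ hφ)

theorem TpEq.comp {A : Set 𝕄} {β γ : Type} {b b' : β → 𝕄} (h : TpEq L 𝕄 A b b') (g : γ → β) :
    TpEq L 𝕄 A (b ∘ g) (b' ∘ g) :=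
  tpEq_iff.2 fun _ hD => (h.dfn (hD.comp g)).1

theorem TpEq.over {A : Set 𝕄} {β γ : Type} {b b' : β → 𝕄} {e : γ → 𝕄}
    (h : TpEq L 𝕄 A (Sum.elim b e) (Sum.elim b' e)) : TpEq L 𝕄 (A ∪ Set.range e) b b' := by
  refine tpEq_iff.2 fun D hD hb => ?_
  obtain ⟨D', h1, h2⟩ := hD.unsubst
  exact (h2 _).2 ((h.dfn h1).1 ((h2 _).1 hb))

/-- Coordinates equal to an element of `A` transfer. -/
theorem Dfn.eq_const {A : Set 𝕄} {α : Type} (i : α) {m : 𝕄} (hm : m ∈ A) :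
    Dfn L A (fun x : α → 𝕄 => x i = m) := by
  refine ⟨⟨Unit, Term.equal (Term.var (Sum.inl i)) (Term.var (Sum.inr ())), fun _ => m⟩,
    fun _ => hm, fun x => ?_⟩
  simp [ParamFormula.Realize, Formula.realize_equal]

theorem Dfn.eq_var {A : Set 𝕄} {α : Type} (i j : α) :
    Dfn L A (fun x : α → 𝕄 => x i = x j) := by
  refine ⟨⟨Empty, Term.equal (Term.var (Sum.inl i)) (Term.var (Sum.inl j)), Empty.elim⟩,
    fun i => i.elim, fun x => ?_⟩
  simp [ParamFormula.Realize, Formula.realize_equal]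

/-- What we need from the monster model and the small model. -/
structure Good (L : FirstOrder.Language.{u, v}) {𝕄 : Type w} [L.Structure 𝕄] (M : Set 𝕄) : Prop where
  ne : M.Nonempty
  elem : ∀ {α : Type} {D : (α → 𝕄) → Prop}, Dfn L M D → (∃ x, D x) → ∃ x, (∀ i, x i ∈ M) ∧ D x
  sat : ∀ {α γ : Type} [Countable α] [Countable γ] (e : γ → 𝕄) (F : Set ((α ⊕ γ → 𝕄) → Prop)),
    (∀ D ∈ F, Dfn L M D) → (fun _ => True) ∈ F →
    (∀ D ∈ F, ∀ D' ∈ F, (fun x => D x ∧ D' x) ∈ F) →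
    (∀ D ∈ F, ∃ x, D (Sum.elim x e)) → ∃ x, ∀ D ∈ F, D (Sum.elim x e)

theorem Good.homog {M : Set 𝕄} (G : Good L M) {α γ : Type} [Countable α] [Countable γ]
    {x x' : γ → 𝕄} (h : TpEq L 𝕄 M x x') (y : α → 𝕄) :
    ∃ y' : α → 𝕄, TpEq L 𝕄 M (Sum.elim y x) (Sum.elim y' x') := by
  obtain ⟨y', hy'⟩ := G.sat x' {D | Dfn L M D ∧ D (Sum.elim y x)} (fun D hD => hD.1)
    ⟨Dfn.true, trivial⟩ (fun D hD D' hD' => ⟨hD.1.and hD'.1, hD.2, hD'.2⟩) (by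
      rintro D ⟨hD, hx⟩
      have h1 : Dfn L M (fun z : γ → 𝕄 => ∃ y : α → 𝕄, D (Sum.elim y z)) := by
        refine (Dfn.ex G.ne (hD.comp (Sum.swap : α ⊕ γ → γ ⊕ α))).of_iff fun z => ?_
        simp
      exact (h.dfn h1).1 ⟨y, hx⟩)
  exact ⟨y', tpEq_iff.2 fun D hD hx => hy' D ⟨hD, hx⟩⟩

end DfnSec

section MonsterSec
variable (L : FirstOrder.Language.{u, v}) (𝕄 : Type w) [L.Structure 𝕄]

theorem elem_of_sub (M : L.ElementarySubstructure 𝕄) (hne : (M : Set 𝕄).Nonempty)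
    {α : Type} {D : (α → 𝕄) → Prop} (hD : Dfn L (M : Set 𝕄) D) (hx : ∃ x, D x) :
    ∃ x, (∀ i, x i ∈ (M : Set 𝕄)) ∧ D x := by
  obtain ⟨φ, h1, h2⟩ := hD
  obtain ⟨x, hx⟩ := hx
  rw [h2] at hx
  obtain ⟨s, ψ, hψ⟩ := formula_fs (𝕄 := 𝕄) (φ.toFormula.relabel (Sum.swap))
  have hψx : ∀ x, φ.Realize x ↔ ψ.Realize (Sum.elim φ.params (fun i : s => x i)) := fun x => by
    rw [← hψ φ.params x, Formula.realize_relabel]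
    simp [ParamFormula.Realize]
  classical
  obtain ⟨z, hz⟩ := hne
  have h3 : (ψ.iExs s).Realize φ.params := Formula.realize_iExs.2 ⟨_, (hψx x).1 hx⟩
  let p : φ.Params → M := fun i => ⟨φ.params i, h1 i⟩
  have h4 : (ψ.iExs s).Realize p := (M.subtype.map_formula (ψ.iExs s) p).1 h3
  obtain ⟨y, hy⟩ := Formula.realize_iExs.1 h4
  have h5 := (M.subtype.map_formula ψ _).2 hy
  refine ⟨fun i => if h : i ∈ s then (y ⟨i, h⟩ : 𝕄) else z, fun i => ?_, ?_⟩
  · by_cases h : i ∈ s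
    · simp [h]
    · simpa [h] using hz
  · rw [h2, hψx]
    convert h5 using 1
    funext i
    rcases i with i | i
    · rfl
    · simp

theorem good_of_monster (κ : Cardinal.{w}) [IsMonster L 𝕄 κ]
    (M : L.ElementarySubstructure 𝕄) (hM : Cardinal.mk ↥(M : Set 𝕄) < κ)
    (hinf : Cardinal.aleph0 ≤ Cardinal.mk ↥(M : Set 𝕄)) : Good L (M : Set 𝕄) := by
  have hne : (M : Set 𝕄).Nonempty := by
    by_contra h
    rw [Set.not_nonempty_iff_eq_empty] at h
    rw [h] at hinf
    simp [Cardinal.aleph0_ne_zero] at hinf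
  refine ⟨hne, fun hD hx => elem_of_sub L 𝕄 M hne hD hx, ?_⟩
  intro α γ _ _ e F hF hT hand hcons
  let up : ParamFormula L 𝕄 α → ParamFormula L 𝕄 (ULift.{w} α) := fun φ =>
    ⟨φ.Params, φ.toFormula.relabel (Sum.map ULift.up id), φ.params⟩
  have hup : ∀ φ x, (up φ).Realize x ↔ φ.Realize (fun i => x (ULift.up i)) := fun φ x => by
    simp only [up, ParamFormula.Realize, Formula.realize_relabel, Sum.elim_comp_map]
    rfl
  have hF' : ∀ D : F, ∃ φ : ParamFormula L 𝕄 α, φ.ParamsIn ((M : Set 𝕄) ∪ Set.range e) ∧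
      ∀ x, D.1 (Sum.elim x e) ↔ φ.Realize x := fun D => (hF D.1 D.2).subst_range e
  choose f hf1 hf2 using hF'
  have key := IsMonster.saturated (L := L) (κ := κ) (α := ULift.{w} α) ((M : Set 𝕄) ∪ Set.range e)
    (Set.range fun D => up (f D)) ?_ ?_ ?_ ?_
  · obtain ⟨x, hx⟩ := key
    refine ⟨fun i => x (ULift.up i), fun D hD => ?_⟩
    exact (hf2 ⟨D, hD⟩ _).2 ((hup _ _).1 (hx _ ⟨⟨D, hD⟩, rfl⟩))
  · exact lt_of_le_of_lt (Cardinal.mk_le_aleph0) (lt_of_le_of_lt hinf hM)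
  · refine lt_of_le_of_lt (Cardinal.mk_union_le _ _) ?_
    rw [Cardinal.add_eq_left hinf]
    · exact hM
    · have : Countable (Set.range e) := (Set.countable_range e).to_subtype
      exact Cardinal.mk_le_aleph0.trans hinf
  · rintro _ ⟨D, rfl⟩ i
    exact hf1 D i
  · intro S₀ hS
    classical
    have : ∃ D ∈ F, ∀ φ ∈ S₀, ∀ x, D (Sum.elim x e) → φ.Realize (fun i => x i.down) := by
      induction S₀ using Finset.induction_on with
      | empty => exact ⟨_, hT, by simp⟩
      | insert φ S₀ hn ih =>
        obtain ⟨D, hD, hD'⟩ := ih (fun φ hφ => hS φ (by simp [hφ]))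
        obtain ⟨⟨E, hE⟩, hE'⟩ := hS φ (by simp)
        refine ⟨_, hand D hD E hE, ?_⟩
        intro ψ hψ x hx
        rcases Finset.mem_insert.1 hψ with rfl | h
        · rw [← hE', hup]
          exact (hf2 ⟨E, hE⟩ x).1 hx.2
        · exact hD' ψ h x hx.1
    obtain ⟨D, hD, hD'⟩ := this
    obtain ⟨x, hx⟩ := hcons D hD
    exact ⟨_, fun φ hφ => hD' φ hφ x hx⟩

end MonsterSec

/-! ### Ultrafilters as global types -/
section UltraDefs
variable (L : FirstOrder.Language.{u, v}) {𝕄 : Type w} [L.Structure 𝕄] (M : Set 𝕄)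

/-- invariance -/
def InvU {β : Type} (U : Ultrafilter (β → 𝕄)) : Prop :=
  ∀ (γ : Type) (D : (β ⊕ γ → 𝕄) → Prop), Dfn L M D → ∀ e e' : γ → 𝕄, TpEq L 𝕄 M e e' →
    (∀ᶠ x in (U : Filter (β → 𝕄)), D (Sum.elim x e)) →
    ∀ᶠ x in (U : Filter (β → 𝕄)), D (Sum.elim x e')

/-- realization over the tuple `e` -/
def Rlz {β γ : Type} (U : Ultrafilter (β → 𝕄)) (e : γ → 𝕄) (a : β → 𝕄) : Prop :=
  ∀ D : (β ⊕ γ → 𝕄) → Prop, Dfn L M D →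
    (∀ᶠ x in (U : Filter (β → 𝕄)), D (Sum.elim x e)) → D (Sum.elim a e)

/-- realization over `M` -/
def RlzM {β : Type} (U : Ultrafilter (β → 𝕄)) (a : β → 𝕄) : Prop :=
  ∀ D : (β → 𝕄) → Prop, Dfn L M D → (∀ᶠ x in (U : Filter (β → 𝕄)), D x) → D a

/-- realization over the set `M ∪ S` -/
def RlzS {β : Type} (U : Ultrafilter (β → 𝕄)) (S : Set 𝕄) (a : β → 𝕄) : Prop :=
  ∀ (γ : Type) (e : γ → 𝕄), (∀ j, e j ∈ M ∪ S) → Rlz L M U e a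

/-- coheir -/
def Coh {β : Type} (U : Ultrafilter (β → 𝕄)) : Prop :=
  ∀ᶠ x in (U : Filter (β → 𝕄)), ∀ i, x i ∈ M

/-- Morley lists, most recent first -/
def MorL {β : Type} (U : Ultrafilter (β → 𝕄)) : List (β → 𝕄) → Prop
  | [] => True
  | x :: l => MorL U l ∧ RlzS L M U {m | ∃ y ∈ l, ∃ i, y i = m} x

/-- Morley sequences -/
def Mor {β : Type} (U : Ultrafilter (β → 𝕄)) (bs : ℕ → β → 𝕄) : Prop :=
  ∀ i, RlzS L M U {m | ∃ j < i, ∃ k, bs j k = m} (bs i)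

/-- consistency along a list -/
def ConL {ξ β : Type} (D : (ξ ⊕ β → 𝕄) → Prop) (l : List (β → 𝕄)) : Prop :=
  ∃ x : ξ → 𝕄, ∀ e ∈ l, D (Sum.elim x e)

/-- consistency along Morley lists -/
def ConU {ξ β : Type} (U : Ultrafilter (β → 𝕄)) (D : (ξ ⊕ β → 𝕄) → Prop) : Prop :=
  ∀ l, MorL L M U l → ConL D l

/-- the hereditary relation -/
def HInd {α β : Type} (a : α → 𝕄) (b : β → 𝕄) : Prop :=
  ∀ D : (α ⊕ β → 𝕄) → Prop, Dfn L M D → D (Sum.elim a b) →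
    ∀ U : Ultrafilter (β → 𝕄), InvU L M U → RlzM L M U b → ConU L M U D

end UltraDefs

section Ultra
variable {L : FirstOrder.Language.{u, v}} {𝕄 : Type w} [L.Structure 𝕄] {M : Set 𝕄}

theorem Rlz.iff {β γ : Type} {U : Ultrafilter (β → 𝕄)} {e : γ → 𝕄} {a : β → 𝕄}
    (h : Rlz L M U e a) {D : (β ⊕ γ → 𝕄) → Prop} (hD : Dfn L M D) :
    (∀ᶠ x in (U : Filter (β → 𝕄)), D (Sum.elim x e)) ↔ D (Sum.elim a e) := by
  refine ⟨h D hD, fun hx => ?_⟩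
  by_contra hc
  exact h _ hD.not (Ultrafilter.eventually_not.2 hc) hx

theorem rlz_subst (G : Good L M) {β γ γ' : Type} {e : γ → 𝕄} {e' : γ' → 𝕄}
    (h : ∀ j, e' j ∈ M ∨ ∃ i, e i = e' j) {D : (β ⊕ γ' → 𝕄) → Prop} (hD : Dfn L M D) :
    ∃ D' : (β ⊕ γ → 𝕄) → Prop, Dfn L M D' ∧
      ∀ x, D' (Sum.elim x e) ↔ D (Sum.elim x e') := by
  have : ∀ j, ∃ s : γ ⊕ {m // m ∈ M}, Sum.elim e Subtype.val s = e' j := fun j => by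
    rcases h j with h | ⟨i, h⟩
    · exact ⟨Sum.inr ⟨_, h⟩, rfl⟩
    · exact ⟨Sum.inl i, h⟩
  choose σ hσ using this
  refine ⟨_, hD.subst G.ne (Sum.elim (fun b => Sum.inl (Sum.inl b))
    (fun j => Sum.map Sum.inr id (σ j))), fun x => ?_⟩
  have : (fun i => Sum.elim (Sum.elim x e) Subtype.val (Sum.elim (fun b => Sum.inl (Sum.inl b))
    (fun j => Sum.map Sum.inr id (σ j)) i)) = Sum.elim x e' := by
    funext i
    rcases i with i | i
    · rfl
    · simp only [Sum.elim_inr, ← hσ]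
      cases σ i <;> rfl
  exact iff_of_eq (congrArg D this)

theorem Rlz.mono (G : Good L M) {β γ γ' : Type} {U : Ultrafilter (β → 𝕄)} {e : γ → 𝕄}
    {e' : γ' → 𝕄} (h : ∀ j, e' j ∈ M ∨ ∃ i, e i = e' j) {a : β → 𝕄} (ha : Rlz L M U e a) :
    Rlz L M U e' a := by
  intro D hD hx
  obtain ⟨D', h1, h2⟩ := rlz_subst G h hD
  exact (h2 a).1 (ha D' h1 (hx.mono fun x => (h2 x).2))

theorem Rlz.toS (G : Good L M) {β γ : Type} {U : Ultrafilter (β → 𝕄)} {e : γ → 𝕄}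
    {S : Set 𝕄} (h : S ⊆ Set.range e) {a : β → 𝕄} (ha : Rlz L M U e a) : RlzS L M U S a := by
  intro γ' e' he'
  refine ha.mono G fun j => ?_
  rcases he' j with h' | h'
  · exact Or.inl h'
  · exact Or.inr (h h')

theorem RlzS.mono {β : Type} {U : Ultrafilter (β → 𝕄)} {S S' : Set 𝕄} (h : S' ⊆ S) {a : β → 𝕄}
    (ha : RlzS L M U S a) : RlzS L M U S' a :=
  fun γ e he => ha γ e fun j => (he j).imp id (fun x => h x)

theorem Rlz.toM {β γ : Type} {U : Ultrafilter (β → 𝕄)} {e : γ → 𝕄}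
    {a : β → 𝕄} (ha : Rlz L M U e a) : RlzM L M U a := by
  intro D hD hx
  exact ha (fun y => D (y ∘ Sum.inl)) (hD.comp _) hx

theorem RlzS.toM {β : Type} {U : Ultrafilter (β → 𝕄)} {S : Set 𝕄}
    {a : β → 𝕄} (ha : RlzS L M U S a) : RlzM L M U a :=
  (ha Empty Empty.elim (fun j => j.elim)).toM

theorem RlzM.iff {β : Type} {U : Ultrafilter (β → 𝕄)} {a : β → 𝕄}
    (h : RlzM L M U a) {D : (β → 𝕄) → Prop} (hD : Dfn L M D) :
    (∀ᶠ x in (U : Filter (β → 𝕄)), D x) ↔ D a := by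
  refine ⟨h D hD, fun hx => ?_⟩
  by_contra hc
  exact h _ hD.not (Ultrafilter.eventually_not.2 hc) hx

theorem RlzM.unique {β : Type} {U : Ultrafilter (β → 𝕄)} {a a' : β → 𝕄}
    (h : RlzM L M U a) (h' : RlzM L M U a') : TpEq L 𝕄 M a a' :=
  tpEq_iff.2 fun _ hD ha => h' _ hD ((h.iff hD).2 ha)

theorem RlzM.congr {β : Type} {U : Ultrafilter (β → 𝕄)} {a a' : β → 𝕄}
    (h : RlzM L M U a) (h' : TpEq L 𝕄 M a a') : RlzM L M U a' :=
  fun _ hD hx => (h'.dfn hD).1 (h _ hD hx)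

theorem exists_rlz (G : Good L M) {β γ : Type} [Countable β] [Countable γ]
    (U : Ultrafilter (β → 𝕄)) (e : γ → 𝕄) : ∃ a, Rlz L M U e a := by
  obtain ⟨a, ha⟩ := G.sat e {D | Dfn L M D ∧ ∀ᶠ x in (U : Filter (β → 𝕄)), D (Sum.elim x e)}
    (fun D hD => hD.1) ⟨Dfn.true, Filter.Eventually.of_forall fun _ => trivial⟩
    (fun D hD D' hD' => ⟨hD.1.and hD'.1, hD.2.and hD'.2⟩) (fun D hD => hD.2.exists)
  exact ⟨a, fun D hD hx => ha D ⟨hD, hx⟩⟩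

theorem Rlz.congr {β γ : Type} {U : Ultrafilter (β → 𝕄)} (hU : InvU L M U) {e e' : γ → 𝕄}
    {a a' : β → 𝕄} (h : TpEq L 𝕄 M (Sum.elim a e) (Sum.elim a' e')) (ha : Rlz L M U e a) :
    Rlz L M U e' a' := by
  intro D hD hx
  have he : TpEq L 𝕄 M e e' := h.comp Sum.inr
  exact (h.dfn hD).1 (ha D hD (hU γ D hD _ _ he.symm' hx))

theorem Rlz.unique {β γ : Type} {U : Ultrafilter (β → 𝕄)} (hU : InvU L M U) {e e' : γ → 𝕄}
    {a a' : β → 𝕄} (he : TpEq L 𝕄 M e e') (ha : Rlz L M U e a) (ha' : Rlz L M U e' a') :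
    TpEq L 𝕄 M (Sum.elim a e) (Sum.elim a' e') :=
  tpEq_iff.2 fun D hD hx => ha' D hD (hU γ D hD _ _ he ((ha.iff hD).2 hx))

/-! Morley lists -/

theorem MorL.sublist {β : Type} {U : Ultrafilter (β → 𝕄)} {l l' : List (β → 𝕄)}
    (h : l'.Sublist l) (hl : MorL L M U l) : MorL L M U l' := by
  induction h with
  | slnil => trivial
  | cons a _ ih => exact ih hl.1
  | cons_cons a h ih =>
    refine ⟨ih hl.1, hl.2.mono ?_⟩
    rintro m ⟨y, hy, i, hi⟩
    exact ⟨y, h.subset hy, i, hi⟩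

/-- tuple enumerating a list, with default `z` -/
def ltup {β : Type} (z : 𝕄) : List (β → 𝕄) → ℕ × β → 𝕄
  | [], _ => z
  | x :: _, (0, b) => x b
  | _ :: l, (n + 1, b) => ltup z l (n, b)

theorem ltup_mem {β : Type} (z : 𝕄) (hz : z ∈ M) (l : List (β → 𝕄)) (q : ℕ × β) :
    ltup z l q ∈ M ∪ {m | ∃ y ∈ l, ∃ i, y i = m} := by
  obtain ⟨n, b⟩ := q
  induction l generalizing n with
  | nil => exact Or.inl hz
  | cons x l ih =>
    cases n with
    | zero => exact Or.inr ⟨x, by simp, b, rfl⟩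
    | succ n =>
      rcases ih n with h | ⟨y, hy, i, hi⟩
      · exact Or.inl h
      · exact Or.inr ⟨y, by simp [hy], i, hi⟩

theorem MorL.unique {β : Type} {U : Ultrafilter (β → 𝕄)} (hU : InvU L M U) {z : 𝕄} (hz : z ∈ M)
    {l l' : List (β → 𝕄)} (h : MorL L M U l) (h' : MorL L M U l') (hl : l.length = l'.length) :
    TpEq L 𝕄 M (ltup z l) (ltup z l') := by
  induction l generalizing l' with
  | nil =>
    cases l' with
    | nil => exact TpEq.rfl'
    | cons => simp at hl
  | cons x l ih =>
    cases l' with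
    | nil => simp at hl
    | cons x' l' =>
      have h1 := ih h.1 h'.1 (by simpa using hl)
      have h2 := Rlz.unique hU h1 (h.2 _ _ (ltup_mem z hz l)) (h'.2 _ _ (ltup_mem z hz l'))
      let g : ℕ × β → β ⊕ (ℕ × β) := fun q => match q with
        | (0, b) => Sum.inl b
        | (n + 1, b) => Sum.inr (n, b)
      have h3 : ∀ (x : β → 𝕄) l, ltup z (x :: l) = Sum.elim x (ltup z l) ∘ g := by
        intro x l
        funext ⟨n, b⟩
        cases n <;> rfl
      rw [h3, h3]
      exact h2.comp g

theorem conL_iff {ξ β : Type} (z : 𝕄) (D : (ξ ⊕ β → 𝕄) → Prop) (l : List (β → 𝕄)) :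
    ConL D l ↔ ∃ x : ξ → 𝕄, ∀ i ∈ List.range l.length,
      D (Sum.elim x (fun b => ltup z l (i, b))) := by
  refine exists_congr fun x => ?_
  induction l with
  | nil => simp
  | cons y l ih =>
    simp only [List.length_cons, List.range_succ_eq_map, List.mem_cons, forall_eq_or_imp, ih,
      List.mem_map, forall_exists_index, and_imp, forall_apply_eq_imp_iff₂]
    rfl

theorem Dfn.conL (G : Good L M) {ξ β : Type} {D : (ξ ⊕ β → 𝕄) → Prop} (hD : Dfn L M D) {ι α : Type}
    (l : List ι) (f : ι → β → α) :
    Dfn L M (fun τ : α → 𝕄 => ConL D (l.map fun i => τ ∘ f i)) := by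
  have h1 : Dfn L M (fun y : α ⊕ ξ → 𝕄 => ∀ i ∈ l, D (y ∘ Sum.elim Sum.inr (Sum.inl ∘ f i))) :=
    Dfn.all_list l fun i _ => hD.comp _
  refine (Dfn.ex G.ne h1).of_iff fun τ => ?_
  simp only [ConL, List.mem_map, forall_exists_index, and_imp, forall_apply_eq_imp_iff₂,
    Sum.comp_elim, Sum.elim_comp_inr, ← Function.comp_assoc, Sum.elim_comp_inl]

theorem MorL.con_transfer (G : Good L M) {ξ β : Type} {D : (ξ ⊕ β → 𝕄) → Prop} (hD : Dfn L M D)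
    {U : Ultrafilter (β → 𝕄)} (hU : InvU L M U)
    {l l' : List (β → 𝕄)} (h : MorL L M U l) (h' : MorL L M U l') (hl : l.length = l'.length)
    (hc : ConL D l) : ConL D l' := by
  obtain ⟨z, hz⟩ := G.ne
  have h1 := MorL.unique hU hz h h' hl
  have h2 : Dfn L M (fun τ : ℕ × β → 𝕄 => ∃ x : ξ → 𝕄, ∀ i ∈ List.range l.length,
      D (Sum.elim x (fun b => τ (i, b)))) :=
    (Dfn.conL G hD (List.range l.length) (fun i b => (i, b))).of_iff fun τ => by
      simp only [ConL, List.mem_map, forall_exists_index, and_imp, forall_apply_eq_imp_iff₂]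
      rfl
  rw [conL_iff z] at hc ⊢
  rw [← hl]
  exact (h1.dfn h2).1 hc

theorem ConL.mono {ξ β : Type} {D D' : (ξ ⊕ β → 𝕄) → Prop} {l l' : List (β → 𝕄)}
    (h : ConL D l) (hl : l' ⊆ l) (hD : ∀ x, ∀ e ∈ l', D (Sum.elim x e) → D' (Sum.elim x e)) :
    ConL D' l' := by
  obtain ⟨x, hx⟩ := h
  exact ⟨x, fun e he => hD x e he (hx e (hl he))⟩

theorem not_conU (G : Good L M) {ξ β : Type} {D : (ξ ⊕ β → 𝕄) → Prop} (hD : Dfn L M D)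
    {U : Ultrafilter (β → 𝕄)} (hU : InvU L M U) (h : ¬ ConU L M U D) :
    ∃ k, ∀ l, MorL L M U l → k ≤ l.length → ¬ ConL D l := by
  simp only [ConU, not_forall] at h
  obtain ⟨l, hl, hc⟩ := h
  refine ⟨l.length, fun l' hl' hk hc' => hc ?_⟩
  have h1 : MorL L M U (l'.take l.length) := hl'.sublist (List.take_sublist _ _)
  exact h1.con_transfer G hD hU hl (by simp [hk]) (hc'.mono (List.take_subset _ _) fun _ _ _ h => h)

theorem exists_mor (G : Good L M) {β : Type} [Countable β] (U : Ultrafilter (β → 𝕄)) :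
    ∃ bs, Mor L M U bs := by
  have hx : ∀ l : List (β → 𝕄), ∃ x, RlzS L M U {m | ∃ y ∈ l, ∃ i, y i = m} x := fun l => by
    obtain ⟨z, hz⟩ := G.ne
    obtain ⟨x, hx⟩ := exists_rlz G U (ltup z l)
    refine ⟨x, hx.toS G ?_⟩
    rintro m ⟨y, hy, i, rfl⟩
    clear hx
    induction l with
    | nil => simp at hy
    | cons x' l ih =>
      rcases List.mem_cons.1 hy with rfl | hy
      · exact ⟨(0, i), rfl⟩
      · obtain ⟨⟨n, b⟩, h⟩ := ih hy
        exact ⟨(n + 1, b), h⟩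
  choose f hf using hx
  let F : ℕ → List (β → 𝕄) := fun n => Nat.rec [] (fun _ l => f l :: l) n
  have hF : ∀ n j, j < n → f (F j) ∈ F n := by
    intro n
    induction n with
    | zero => simp
    | succ n ih =>
      intro j hj
      change f (F j) ∈ f (F n) :: F n
      rcases Nat.lt_succ_iff_lt_or_eq.1 hj with h | rfl
      · exact List.mem_cons_of_mem _ (ih j h)
      · simp
  refine ⟨fun n => f (F n), fun n => (hf (F n)).mono ?_⟩
  rintro m ⟨j, hj, k, rfl⟩
  exact ⟨_, hF n j hj, k, rfl⟩

theorem Mor.list {β : Type} {U : Ultrafilter (β → 𝕄)} {bs : ℕ → β → 𝕄} (h : Mor L M U bs)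
    (l : List ℕ) (hl : l.Pairwise (· > ·)) : MorL L M U (l.map bs) := by
  induction l with
  | nil => trivial
  | cons i l ih =>
    rw [List.pairwise_cons] at hl
    refine ⟨ih hl.2, (h i).mono ?_⟩
    rintro m ⟨y, hy, k, rfl⟩
    obtain ⟨j, hj, rfl⟩ := List.mem_map.1 hy
    exact ⟨j, hl.1 j hj, k, rfl⟩

/-- the decreasing list `n-1, …, 0` -/
theorem range_rev (n : ℕ) : (List.range n).reverse.Pairwise (· > ·) := by
  rw [List.pairwise_reverse]
  exact List.pairwise_lt_range

theorem Mor.sub {β : Type} {U : Ultrafilter (β → 𝕄)} {bs : ℕ → β → 𝕄} (h : Mor L M U bs)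
    {g : ℕ → ℕ} (hg : StrictMono g) : Mor L M U (bs ∘ g) := by
  intro i
  refine (h (g i)).mono ?_
  rintro m ⟨j, hj, k, rfl⟩
  exact ⟨g j, hg hj, k, rfl⟩

theorem Mor.conU (G : Good L M) {ξ β : Type} {D : (ξ ⊕ β → 𝕄) → Prop} (hD : Dfn L M D)
    {U : Ultrafilter (β → 𝕄)} (hU : InvU L M U) {bs : ℕ → β → 𝕄} (h : Mor L M U bs)
    (hc : ∀ n, ∃ x : ξ → 𝕄, ∀ i < n, D (Sum.elim x (bs i))) : ConU L M U D := by
  intro l hl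
  obtain ⟨x, hx⟩ := hc l.length
  refine (h.list _ (range_rev l.length)).con_transfer G hD hU hl (by simp) ⟨x, ?_⟩
  simpa using hx

theorem ConU.mor {ξ β : Type} {D : (ξ ⊕ β → 𝕄) → Prop}
    {U : Ultrafilter (β → 𝕄)} {bs : ℕ → β → 𝕄} (h : Mor L M U bs) (hc : ConU L M U D) (n : ℕ) :
    ∃ x : ξ → 𝕄, ∀ i < n, D (Sum.elim x (bs i)) := by
  obtain ⟨x, hx⟩ := hc _ (h.list _ (range_rev n))
  exact ⟨x, by simpa using hx⟩

/-- realize a whole family along a Morley sequence -/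
theorem exists_along (G : Good L M) {ξ β : Type} [Countable ξ] [Countable β]
    {U : Ultrafilter (β → 𝕄)} {bs : ℕ → β → 𝕄} (h : Mor L M U bs)
    (F : Set ((ξ ⊕ β → 𝕄) → Prop)) (hF : ∀ D ∈ F, Dfn L M D) (hT : (fun _ => True) ∈ F)
    (hand : ∀ D ∈ F, ∀ D' ∈ F, (fun x => D x ∧ D' x) ∈ F) (hc : ∀ D ∈ F, ConU L M U D) :
    ∃ x : ξ → 𝕄, ∀ i, ∀ D ∈ F, D (Sum.elim x (bs i)) := by
  let g : ℕ → ξ ⊕ β → ξ ⊕ (ℕ × β) := fun i => Sum.map id (fun b => (i, b))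
  have hg : ∀ i (x : ξ → 𝕄), Sum.elim x (flat bs) ∘ g i = Sum.elim x (bs i) := by
    intro i x
    funext j
    rcases j with j | j <;> rfl
  have key := G.sat (flat bs) {E : (ξ ⊕ (ℕ × β) → 𝕄) → Prop | Dfn L M E ∧
      ∃ D ∈ F, ∃ n, ∀ y, (∀ i < n, D (y ∘ g i)) → E y}
    (fun E hE => hE.1) ⟨Dfn.true, _, hT, 0, fun _ _ => trivial⟩ ?_ ?_
  · obtain ⟨x, hx⟩ := key
    refine ⟨x, fun i D hD => ?_⟩
    rw [← hg]
    exact hx (fun y => D (y ∘ g i))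
      ⟨(hF D hD).comp _, D, hD, i + 1, fun y hy => hy i (Nat.lt_succ_self i)⟩
  · rintro E ⟨hE, D, hD, n, hn⟩ E' ⟨hE', D', hD', n', hn'⟩
    refine ⟨hE.and hE', _, hand D hD D' hD', max n n', fun y hy => ⟨hn y fun i hi => ?_,
      hn' y fun i hi => ?_⟩⟩
    · exact (hy i (lt_max_of_lt_left hi)).1
    · exact (hy i (lt_max_of_lt_right hi)).2
  · rintro E ⟨hE, D, hD, n, hn⟩
    obtain ⟨x, hx⟩ := (hc D hD).mor h n
    refine ⟨x, hn _ fun i hi => ?_⟩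
    rw [hg]
    exact hx i hi

end Ultra

section Maps
variable {L : FirstOrder.Language.{u, v}} {𝕄 : Type w} [L.Structure 𝕄] {M : Set 𝕄}

/-- restriction of an ultrafilter along a reindexing -/
def umap {α β : Type} (U : Ultrafilter (β → 𝕄)) (g : α → β) : Ultrafilter (α → 𝕄) :=
  U.map (fun x => x ∘ g)

theorem umap_ev {α β : Type} (U : Ultrafilter (β → 𝕄)) (g : α → β) (D : (α → 𝕄) → Prop) :
    (∀ᶠ x in (umap U g : Filter (α → 𝕄)), D x) ↔ ∀ᶠ x in (U : Filter (β → 𝕄)), D (x ∘ g) :=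
  Iff.rfl

theorem elim_comp_map {α β γ : Type} (x : β → 𝕄) (e : γ → 𝕄) (g : α → β) :
    Sum.elim x e ∘ Sum.map g id = Sum.elim (x ∘ g) e := by
  funext i; rcases i with i | i <;> rfl

theorem elim_comp_map' {α β γ : Type} (x : β → 𝕄) (e : γ → 𝕄) (g : α → γ) :
    Sum.elim x e ∘ Sum.map id g = Sum.elim x (e ∘ g) := by
  funext i; rcases i with i | i <;> rfl

theorem InvU.map {α β : Type} {U : Ultrafilter (β → 𝕄)} (hU : InvU L M U) (g : α → β) :
    InvU L M (umap U g) := by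
  intro γ D hD e e' he hx
  rw [umap_ev] at hx ⊢
  have := hU γ _ (hD.comp (Sum.map g id)) e e' he
  simp only [elim_comp_map] at this
  exact this hx

theorem RlzS.map {α β : Type} {U : Ultrafilter (β → 𝕄)} {S : Set 𝕄} {a : β → 𝕄}
    (h : RlzS L M U S a) (g : α → β) : RlzS L M (umap U g) S (a ∘ g) := by
  intro γ e he D hD hx
  rw [umap_ev] at hx
  have := h γ e he _ (hD.comp (Sum.map g id))
  simp only [elim_comp_map] at this
  exact this hx

theorem RlzM.map {α β : Type} {U : Ultrafilter (β → 𝕄)} {a : β → 𝕄}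
    (h : RlzM L M U a) (g : α → β) : RlzM L M (umap U g) (a ∘ g) :=
  fun _ hD hx => h _ (hD.comp g) hx

theorem MorL.map {α β : Type} {U : Ultrafilter (β → 𝕄)} {l : List (β → 𝕄)}
    (h : MorL L M U l) (g : α → β) : MorL L M (umap U g) (l.map (fun x => x ∘ g)) := by
  induction l with
  | nil => trivial
  | cons x l ih =>
    refine ⟨ih h.1, (h.2.map g).mono ?_⟩
    rintro m ⟨y, hy, i, rfl⟩
    obtain ⟨y', hy', rfl⟩ := List.mem_map.1 hy
    exact ⟨y', hy', g i, rfl⟩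

theorem Mor.map {α β : Type} {U : Ultrafilter (β → 𝕄)} {bs : ℕ → β → 𝕄}
    (h : Mor L M U bs) (g : α → β) : Mor L M (umap U g) (fun i => bs i ∘ g) := by
  intro i
  refine ((h i).map g).mono ?_
  rintro m ⟨j, hj, k, rfl⟩
  exact ⟨j, hj, g k, rfl⟩

theorem ConU.of_map {ξ α β : Type} {U : Ultrafilter (β → 𝕄)} (g : α → β)
    {D : (ξ ⊕ α → 𝕄) → Prop} (h : ConU L M (umap U g) D) :
    ConU L M U (fun y => D (y ∘ Sum.map id g)) := by
  intro l hl
  obtain ⟨x, hx⟩ := h _ (hl.map g)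
  refine ⟨x, fun e he => ?_⟩
  change D (Sum.elim x e ∘ Sum.map id g)
  rw [elim_comp_map']
  exact hx _ (List.mem_map.2 ⟨e, he, rfl⟩)

theorem ConU.to_map (G : Good L M) {ξ α β : Type} [Countable β] {U : Ultrafilter (β → 𝕄)}
    (hU : InvU L M U) (g : α → β) {D : (ξ ⊕ α → 𝕄) → Prop} (hD : Dfn L M D)
    (h : ConU L M U (fun y => D (y ∘ Sum.map id g))) : ConU L M (umap U g) D := by
  obtain ⟨bs, hbs⟩ := exists_mor G U
  refine (hbs.map g).conU G hD (hU.map g) fun n => ?_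
  obtain ⟨x, hx⟩ := h.mor hbs n
  refine ⟨x, fun i hi => ?_⟩
  have : D (Sum.elim x (bs i) ∘ Sum.map id g) := hx i hi
  rwa [elim_comp_map'] at this

theorem ConU.imp {ξ β : Type} {U : Ultrafilter (β → 𝕄)}
    {D D' : (ξ ⊕ β → 𝕄) → Prop} (h : ConU L M U D) (hD : ∀ x, D x → D' x) : ConU L M U D' :=
  fun l hl => (h l hl).mono (fun _ h => h) fun _ _ _ h => hD _ h

/-! Coheirs -/

theorem Coh.map {α β : Type} {U : Ultrafilter (β → 𝕄)} (hU : Coh M U) (g : α → β) :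
    Coh M (umap U g) := by
  refine (umap_ev _ _ _).2 ?_
  filter_upwards [hU] with x hx i using hx (g i)

theorem Coh.inv (G : Good L M) {β : Type} {U : Ultrafilter (β → 𝕄)} (hU : Coh M U) :
    InvU L M U := by
  intro γ D hD e e' he hx
  by_contra hc
  obtain ⟨x, ⟨h1, h2⟩, h3⟩ := ((hx.and (Ultrafilter.eventually_not.2 hc)).and hU).exists
  have h4 := hD.subst (β := γ) G.ne (Sum.elim (fun i => Sum.inr ⟨x i, h3 i⟩) Sum.inl)
  have h5 : ∀ e : γ → 𝕄, (fun i => Sum.elim e Subtype.val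
      ((Sum.elim (fun i => Sum.inr ⟨x i, h3 i⟩) Sum.inl : β ⊕ γ → γ ⊕ {m // m ∈ M}) i)) =
      Sum.elim x e := by
    intro e; funext i; rcases i with i | i <;> rfl
  have h6 := he.dfn h4
  simp only [h5] at h6
  exact h2 (h6.1 h1)

theorem coh_ext (G : Good L M) {α γ : Type} [Finite α] {U : Ultrafilter (α → 𝕄)} (hU : Coh M U)
    (c : γ → 𝕄) (g : α → γ) (hc : RlzM L M U (c ∘ g)) :
    ∃ W : Ultrafilter (γ → 𝕄), Coh M W ∧ umap W g = U ∧ RlzM L M W c := by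
  let F : Filter (γ → 𝕄) :=
    { sets := {S | ∃ s ∈ U, ∃ D : (γ → 𝕄) → Prop, Dfn L M D ∧ D c ∧
        ∀ x, x ∘ g ∈ s → (∀ i, x i ∈ M) → D x → x ∈ S}
      univ_sets := ⟨Set.univ, Filter.univ_mem, _, Dfn.true, trivial, fun _ _ _ _ => trivial⟩
      sets_of_superset := by
        rintro S S' ⟨s, hs, D, hD, hc, h⟩ hS
        exact ⟨s, hs, D, hD, hc, fun x h1 h2 h3 => hS (h x h1 h2 h3)⟩
      inter_sets := by
        rintro S S' ⟨s, hs, D, hD, hc, h⟩ ⟨s', hs', D', hD', hc', h'⟩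
        exact ⟨s ∩ s', Filter.inter_mem hs hs', _, hD.and hD', ⟨hc, hc'⟩, fun x h1 h2 h3 =>
          ⟨h x h1.1 h2 h3.1, h' x h1.2 h2 h3.2⟩⟩ }
  have hF : F.NeBot := by
    refine ⟨fun hbot => ?_⟩
    have : ∅ ∈ F := hbot ▸ Filter.mem_bot
    obtain ⟨s, hs, D, hD, hDc, h⟩ := this
    have hE : Dfn L M (fun y : α → 𝕄 => ∃ x : γ → 𝕄, (∀ i, x (g i) = y i) ∧ D x) := by
      have h1 : Dfn L M (fun y : α ⊕ γ → 𝕄 =>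
          (∀ i, y (Sum.inr (g i)) = y (Sum.inl i)) ∧ D (y ∘ Sum.inr)) :=
        (Dfn.all_fin fun i => Dfn.eq_var _ _).and (hD.comp _)
      exact (Dfn.ex G.ne h1).of_iff fun y => Iff.rfl
    have h2 := (hc.iff hE).2 ⟨c, fun _ => rfl, hDc⟩
    obtain ⟨y, ⟨hy1, hy2⟩, hy3⟩ := ((h2.and hU).and hs).exists
    have hE' : Dfn L M (fun x : γ → 𝕄 => (∀ i, x (g i) = y i) ∧ D x) :=
      (Dfn.all_fin fun i => Dfn.eq_const _ (hy2 i)).and hD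
    obtain ⟨x, hx1, hx2, hx3⟩ := G.elem hE' hy1
    refine h x ?_ hx1 hx3
    have : x ∘ g = y := funext hx2
    rw [this]; exact hy3
  refine ⟨Ultrafilter.of F, ?_, ?_, ?_⟩
  · exact Ultrafilter.of_le F ⟨Set.univ, Filter.univ_mem, _, Dfn.true, trivial, fun x _ h _ => h⟩
  · refine Ultrafilter.coe_le_coe.1 fun s hs => ?_
    exact Ultrafilter.of_le F ⟨s, hs, _, Dfn.true, trivial, fun x h _ _ => h⟩
  · intro D hD hx
    by_contra hcD
    have : ∀ᶠ x in (Ultrafilter.of F : Filter (γ → 𝕄)), ¬ D x :=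
      Ultrafilter.of_le F ⟨Set.univ, Filter.univ_mem, _, hD.not, hcD, fun x _ _ h => h⟩
    obtain ⟨x, h1, h2⟩ := (hx.and this).exists
    exact h2 h1

theorem exists_coh (G : Good L M) {γ : Type} (c : γ → 𝕄) :
    ∃ W : Ultrafilter (γ → 𝕄), Coh M W ∧ RlzM L M W c := by
  obtain ⟨W, h1, _, h2⟩ := coh_ext G (α := Empty) (U := (pure Empty.elim : Ultrafilter (Empty → 𝕄)))
    (Filter.Eventually.of_forall fun x i => i.elim) c Empty.elim (by
      intro D hD hx
      have : D Empty.elim := hx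
      rwa [Subsingleton.elim (c ∘ Empty.elim) Empty.elim])
  exact ⟨W, h1, h2⟩

/-- the product of a coheir with itself -/
noncomputable def uprod {β : Type} (W : Ultrafilter (β → 𝕄)) : Ultrafilter (β ⊕ β → 𝕄) :=
  W.bind fun x1 => W.map fun x0 => Sum.elim x0 x1

theorem uprod_ev {β : Type} (W : Ultrafilter (β → 𝕄)) (D : (β ⊕ β → 𝕄) → Prop) :
    (∀ᶠ x in (uprod W : Filter (β ⊕ β → 𝕄)), D x) ↔
      ∀ᶠ x1 in (W : Filter (β → 𝕄)), ∀ᶠ x0 in (W : Filter (β → 𝕄)), D (Sum.elim x0 x1) :=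
  Iff.rfl

theorem Coh.prod {β : Type} {W : Ultrafilter (β → 𝕄)} (hW : Coh M W) : Coh M (uprod W) := by
  refine (uprod_ev _ _).2 ?_
  filter_upwards [hW] with x1 h1
  filter_upwards [hW] with x0 h0
  rintro (i | i)
  · exact h0 i
  · exact h1 i

theorem RlzS.prod {β : Type} {W : Ultrafilter (β → 𝕄)} (hW : Coh M W) {S : Set 𝕄}
    {b0 b1 : β → 𝕄} (h0 : RlzS L M W S b0) (h1 : RlzS L M W (S ∪ Set.range b0) b1) :
    RlzS L M (uprod W) S (Sum.elim b0 b1) := by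
  intro γ e he D hD hx
  rw [uprod_ev] at hx
  let g1 : (β ⊕ β) ⊕ γ → β ⊕ (β ⊕ γ) := Sum.elim (Sum.elim Sum.inl (Sum.inr ∘ Sum.inl)) (Sum.inr ∘ Sum.inr)
  let g2 : (β ⊕ β) ⊕ γ → β ⊕ (β ⊕ γ) := Sum.elim (Sum.elim (Sum.inr ∘ Sum.inl) Sum.inl) (Sum.inr ∘ Sum.inr)
  have e1 : ∀ x0 x1 : β → 𝕄, Sum.elim x0 (Sum.elim x1 e) ∘ g1 = Sum.elim (Sum.elim x0 x1) e := by
    intro x0 x1; funext i; rcases i with (i | i) | i <;> rfl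
  have e2 : ∀ x0 x1 : β → 𝕄, Sum.elim x1 (Sum.elim x0 e) ∘ g2 = Sum.elim (Sum.elim x0 x1) e := by
    intro x0 x1; funext i; rcases i with (i | i) | i <;> rfl
  rw [← e2]
  refine h1 _ (Sum.elim b0 e) ?_ _ (hD.comp g2) ?_
  · rintro (i | i)
    · exact Or.inr (Or.inr ⟨i, rfl⟩)
    · exact (he i).imp id Or.inl
  · filter_upwards [hx, hW] with x1 hx1 hM
    change D (Sum.elim x1 (Sum.elim b0 e) ∘ g2)
    rw [e2, ← e1]
    refine h0 _ (Sum.elim x1 e) ?_ _ (hD.comp g1) ?_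
    · rintro (i | i)
      · exact Or.inl (hM i)
      · exact he i
    · simpa only [e1] using hx1

theorem Mor.prod {β : Type} {W : Ultrafilter (β → 𝕄)} (hW : Coh M W) {bs : ℕ → β → 𝕄}
    (h : Mor L M W bs) : Mor L M (uprod W) (fun i => Sum.elim (bs (2 * i)) (bs (2 * i + 1))) := by
  intro i
  refine RlzS.prod hW ((h (2 * i)).mono ?_) ((h (2 * i + 1)).mono ?_)
  · rintro m ⟨j, hj, k | k, rfl⟩
    · exact ⟨2 * j, by omega, k, rfl⟩
    · exact ⟨2 * j + 1, by omega, k, rfl⟩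
  · rintro m (⟨j, hj, k | k, rfl⟩ | ⟨k, rfl⟩)
    · exact ⟨2 * j, by omega, k, rfl⟩
    · exact ⟨2 * j + 1, by omega, k, rfl⟩
    · exact ⟨2 * i, by omega, k, rfl⟩

/-- limit of a sequence over a tuple -/
theorem exists_vlim (G : Good L M) {β γ : Type} [Countable β] [Countable γ] (bs : ℕ → β → 𝕄)
    (e : γ → 𝕄) : ∃ a : β → 𝕄, ∀ D : (β ⊕ γ → 𝕄) → Prop, Dfn L M D → D (Sum.elim a e) →
      ∃ g : ℕ → ℕ, StrictMono g ∧ ∀ i, D (Sum.elim (bs (g i)) e) := by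
  obtain ⟨a, ha⟩ := exists_rlz G ((Filter.hyperfilter ℕ).map bs) e
  refine ⟨a, fun D hD hx => ?_⟩
  have h1 : ∀ᶠ i in (Filter.hyperfilter ℕ : Filter ℕ), D (Sum.elim (bs i) e) := (ha.iff hD).2 hx
  have h2 : ∃ᶠ i in Filter.atTop, D (Sum.elim (bs i) e) := by
    rw [← Nat.cofinite_eq_atTop]
    exact h1.frequently.filter_mono Filter.hyperfilter_le_cofinite
  exact Filter.extraction_of_frequently_atTop h2

/-! Global types -/

theorem TpEq.params (G : Good L M) {β γ : Type} {e e' : β → 𝕄} (h : TpEq L 𝕄 M e e') {m : γ → 𝕄}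
    (hm : ∀ i, m i ∈ M) : TpEq L 𝕄 M (Sum.elim e m) (Sum.elim e' m) := by
  refine tpEq_iff.2 fun D hD hx => ?_
  have h4 := hD.subst (β := β) G.ne (Sum.elim Sum.inl (fun i => Sum.inr ⟨m i, hm i⟩))
  have h5 : ∀ e : β → 𝕄, (fun i => Sum.elim e Subtype.val
      ((Sum.elim Sum.inl (fun i => Sum.inr ⟨m i, hm i⟩) : β ⊕ γ → β ⊕ {m // m ∈ M}) i)) =
      Sum.elim e m := by
    intro e; funext i; rcases i with i | i <;> rfl
  have h6 := h.dfn h4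
  simp only [h5] at h6
  exact h6.1 hx

theorem dfn_formula {α : Type} (ψ : L.Formula α) : Dfn L M (fun x : α → 𝕄 => ψ.Realize x) := by
  refine ⟨⟨Empty, ψ.relabel Sum.inl, Empty.elim⟩, fun i => i.elim, fun x => ?_⟩
  simp [ParamFormula.Realize, Formula.realize_relabel]

theorem gt_mem_of {α : Type} (p : GlobalType L 𝕄 α) (S : Finset (ParamFormula L 𝕄 α))
    (hS : ∀ φ ∈ S, p.Mem φ) {ψ : ParamFormula L 𝕄 α} (h : ∀ x, (∀ φ ∈ S, φ.Realize x) → ψ.Realize x) :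
    p.Mem ψ := by
  classical
  rcases p.complete ψ with h1 | h1
  · exact h1
  · obtain ⟨x, hx⟩ := p.consistent (insert ψ.not S) (by
      intro φ hφ
      rcases Finset.mem_insert.1 hφ with rfl | h2
      · exact h1
      · exact hS φ h2)
    have h2 := hx ψ.not (by simp)
    have h3 := h x fun φ hφ => hx φ (by simp [hφ])
    simp only [ParamFormula.Realize, ParamFormula.not, Formula.Realize,
      BoundedFormula.realize_not] at h2 h3
    exact absurd h3 h2

theorem exists_conj {α : Type} (S : Finset (ParamFormula L 𝕄 α)) :
    ∃ ψ : ParamFormula L 𝕄 α, ∀ x, ψ.Realize x ↔ ∀ φ ∈ S, φ.Realize x := by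
  have : Dfn L (Set.univ : Set 𝕄) (fun x : α → 𝕄 => ∀ φ ∈ S, φ.Realize x) :=
    Dfn.all_finset S fun φ _ => ⟨φ, fun _ => trivial, fun _ => Iff.rfl⟩
  obtain ⟨ψ, _, h⟩ := this
  exact ⟨ψ, fun x => (h x).symm⟩

/-- ultrafilter of a global type, concentrating on a set `A` which meets all its formulas -/
theorem gt_ultra {α : Type} (p : GlobalType L 𝕄 α) (A : Set (α → 𝕄))
    (hA : ∀ φ, p.Mem φ → ∃ x ∈ A, φ.Realize x) :
    ∃ U : Ultrafilter (α → 𝕄), A ∈ U ∧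
      ∀ φ, p.Mem φ ↔ ∀ᶠ x in (U : Filter (α → 𝕄)), φ.Realize x := by
  classical
  let F : Filter (α → 𝕄) :=
    { sets := {S | ∃ T : Finset (ParamFormula L 𝕄 α), (∀ φ ∈ T, p.Mem φ) ∧
        ∀ x ∈ A, (∀ φ ∈ T, φ.Realize x) → x ∈ S}
      univ_sets := ⟨∅, by simp, fun _ _ _ => trivial⟩
      sets_of_superset := by
        rintro S S' ⟨T, h1, h2⟩ hS
        exact ⟨T, h1, fun x h3 h4 => hS (h2 x h3 h4)⟩
      inter_sets := by
        rintro S S' ⟨T, h1, h2⟩ ⟨T', h1', h2'⟩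
        refine ⟨T ∪ T', fun φ hφ => (Finset.mem_union.1 hφ).elim (h1 φ) (h1' φ), fun x hx h => ⟨?_, ?_⟩⟩
        · exact h2 x hx fun φ hφ => h φ (Finset.mem_union_left _ hφ)
        · exact h2' x hx fun φ hφ => h φ (Finset.mem_union_right _ hφ) }
  have hF : F.NeBot := by
    refine ⟨fun hbot => ?_⟩
    have : ∅ ∈ F := hbot ▸ Filter.mem_bot
    obtain ⟨T, h1, h2⟩ := this
    obtain ⟨ψ, hψ⟩ := exists_conj T
    obtain ⟨x, hx, hx'⟩ := hA ψ (gt_mem_of p T h1 fun x hx => (hψ x).2 hx)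
    exact h2 x hx ((hψ x).1 hx')
  have hmem : ∀ φ, p.Mem φ → ∀ᶠ x in (Ultrafilter.of F : Filter (α → 𝕄)), φ.Realize x := fun φ hφ =>
    Ultrafilter.of_le F ⟨{φ}, by simpa using hφ, fun x _ hx => hx φ (by simp)⟩
  refine ⟨Ultrafilter.of F, Ultrafilter.of_le F ⟨∅, by simp, fun x hx _ => hx⟩, fun φ =>
    ⟨hmem φ, fun h => ?_⟩⟩
  rcases p.complete φ with h1 | h1
  · exact h1
  · obtain ⟨x, h2, h3⟩ := (h.and (hmem _ h1)).exists
    simp only [ParamFormula.Realize, ParamFormula.not, Formula.Realize,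
      BoundedFormula.realize_not] at h2 h3
    exact absurd h2 h3

theorem gt_inv (G : Good L M) {α : Type} {p : GlobalType L 𝕄 α} (hp : p.InvariantOver M)
    {U : Ultrafilter (α → 𝕄)}
    (hU : ∀ φ, p.Mem φ ↔ ∀ᶠ x in (U : Filter (α → 𝕄)), φ.Realize x) : InvU L M U := by
  rintro γ D ⟨φ, h1, h2⟩ e e' he hx
  simp only [h2, ← subst_realize] at hx ⊢
  rw [← hU] at hx ⊢
  exact (hp _ _ _ _ (he.params G h1)).1 hx

theorem gt_rlzS {α : Type} {p : GlobalType L 𝕄 α}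
    {U : Ultrafilter (α → 𝕄)} (hU : ∀ φ, p.Mem φ ↔ ∀ᶠ x in (U : Filter (α → 𝕄)), φ.Realize x)
    {S : Set 𝕄} {a : α → 𝕄} : p.RealizesOver (M ∪ S) a ↔ RlzS L M U S a := by
  constructor
  · rintro h γ e he D ⟨φ, h1, h2⟩ hx
    simp only [h2, ← subst_realize] at hx ⊢
    rw [← hU] at hx
    refine h _ hx ?_
    rintro (i | i)
    · exact he i
    · exact Or.inl (h1 i)
  · intro h φ hφ hp
    exact h φ.Params φ.params hp (fun x => φ.toFormula.Realize x) (dfn_formula _) ((hU φ).1 hφ)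

/-- global type of an ultrafilter -/
def ugt {α : Type} (U : Ultrafilter (α → 𝕄)) : GlobalType L 𝕄 α where
  Mem φ := ∀ᶠ x in (U : Filter (α → 𝕄)), φ.Realize x
  consistent S hS := ((Filter.eventually_all_finset S).2 hS).exists
  complete φ := by
    by_cases h : ∀ᶠ x in (U : Filter (α → 𝕄)), φ.Realize x
    · exact Or.inl h
    · refine Or.inr ((Ultrafilter.eventually_not.2 h).mono fun x hx => ?_)
      simp only [ParamFormula.Realize, ParamFormula.not, Formula.Realize,
        BoundedFormula.realize_not] at hx ⊢
      exact hx

theorem invMorley_iff (G : Good L M) {α : Type} {bs : ℕ → α → 𝕄} :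
    IsInvMorleyOver L 𝕄 M bs ↔ ∃ U : Ultrafilter (α → 𝕄), InvU L M U ∧ Mor L M U bs := by
  have hset : ∀ i, (⋃ j ∈ Set.Iio i, Set.range (bs j)) = {m | ∃ j < i, ∃ k, bs j k = m} := by
    intro i; ext m; simp
  constructor
  · rintro ⟨p, hp, hm⟩
    obtain ⟨U, -, hU⟩ := gt_ultra p Set.univ (fun φ hφ => by
      obtain ⟨x, hx⟩ := p.consistent {φ} (by simpa using hφ)
      exact ⟨x, trivial, hx φ (by simp)⟩)
    refine ⟨U, gt_inv G hp hU, fun i => ?_⟩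
    have := (gt_rlzS hU).1 (hm i)
    rwa [hset] at this
  · rintro ⟨U, hU, hm⟩
    refine ⟨ugt U, ?_, fun i => ?_⟩
    · intro P ψ b b' hb
      exact ⟨hU P _ (dfn_formula ψ) b b' hb, hU P _ (dfn_formula ψ) b' b hb.symm'⟩
    · rw [hset]
      exact (gt_rlzS (fun φ => Iff.rfl)).2 (hm i)

end Maps

section NiceSec
variable (L : FirstOrder.Language.{u, v}) {𝕄 : Type w} [L.Structure 𝕄] (M : Set 𝕄)

/-- no tree patterns among realizations of `tp(b/M)` -/
def Nice {β : Type} (b : β → 𝕄) : Prop :=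
  ∀ (ξ : Type) [Finite ξ] (D : (ξ ⊕ β → 𝕄) → Prop), Dfn L M D → ∀ k : ℕ,
    ¬ (∀ n : ℕ, ∃ T : List Bool → β → 𝕄, (∀ η, TpEq L 𝕄 M (T η) b) ∧
      ∀ η : List Bool, η.length = n → ConL D ((pidx η).map T) ∧
        ∀ Y, List.Sublist Y ((sidx η).map T) → Y.length = k → ¬ ConL D Y)

/-- the tuple `b` consists of realizations of `P` -/
def QT {nv : ℕ} (P : Set (ParamFormula L 𝕄 (Fin nv))) {β : Type} (b : β → 𝕄) : Prop :=
  ∃ ρ : Type, Finite ρ ∧ ∃ r : ρ × Fin nv → β, Function.Surjective r ∧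
    ∀ s, RealizesPType L 𝕄 P (fun j => b (r (s, j)))
end NiceSec

section NiceSec2
variable {L : FirstOrder.Language.{u, v}} {𝕄 : Type w} [L.Structure 𝕄] {M : Set 𝕄}

theorem QT.finite {nv : ℕ} {P : Set (ParamFormula L 𝕄 (Fin nv))} {β : Type} {b : β → 𝕄}
    (h : QT L P b) : Finite β := by
  obtain ⟨ρ, _, r, hr, _⟩ := h
  exact Finite.of_surjective r hr

theorem QT.congr {nv : ℕ} {P : Set (ParamFormula L 𝕄 (Fin nv))} (hP : ∀ φ ∈ P, φ.ParamsIn M)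
    {β : Type} {b b' : β → 𝕄} (hb : TpEq L 𝕄 M b b') (h : QT L P b) : QT L P b' := by
  obtain ⟨ρ, hρ, r, hr, h⟩ := h
  refine ⟨ρ, hρ, r, hr, fun s φ hφ => ?_⟩
  exact ((hb.comp fun j => r (s, j)) φ (hP φ hφ)).1 (h s φ hφ)

theorem QT.sum {nv : ℕ} {P : Set (ParamFormula L 𝕄 (Fin nv))} {β γ : Type} {b : β → 𝕄} {c : γ → 𝕄}
    (hb : QT L P b) (hc : QT L P c) : QT L P (Sum.elim b c) := by
  obtain ⟨ρ, hρ, r, hr, h⟩ := hb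
  obtain ⟨ρ', hρ', r', hr', h'⟩ := hc
  refine ⟨ρ ⊕ ρ', inferInstance, fun q => match q with
    | (Sum.inl s, j) => Sum.inl (r (s, j))
    | (Sum.inr s, j) => Sum.inr (r' (s, j)), ?_, ?_⟩
  · rintro (i | i)
    · obtain ⟨⟨s, j⟩, rfl⟩ := hr i
      exact ⟨(Sum.inl s, j), rfl⟩
    · obtain ⟨⟨s, j⟩, rfl⟩ := hr' i
      exact ⟨(Sum.inr s, j), rfl⟩
  · rintro (s | s)
    · exact h s
    · exact h' s

theorem QT.flatT {nv : ℕ} {P : Set (ParamFormula L 𝕄 (Fin nv))} {ι β : Type} [Finite ι]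
    {b : ι → β → 𝕄} (hb : ∀ i, QT L P (b i)) : QT L P (flat b) := by
  choose ρ hρ r hr h using hb
  refine ⟨Σ i, ρ i, inferInstance, fun q => (q.1.1, r q.1.1 (q.1.2, q.2)), ?_, ?_⟩
  · rintro ⟨i, j⟩
    obtain ⟨⟨s, j⟩, rfl⟩ := hr i j
    exact ⟨(⟨i, s⟩, j), rfl⟩
  · rintro ⟨i, s⟩
    exact h i s

theorem QT.base {nv : ℕ} {P : Set (ParamFormula L 𝕄 (Fin nv))} {m : ℕ} {b : Fin m → Fin nv → 𝕄}
    (hb : ∀ j, RealizesPType L 𝕄 P (b j)) : QT L P (NSOP3Paper.flat b) :=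
  ⟨Fin m, inferInstance, id, Function.surjective_id, hb⟩

theorem ofFn_initial_seg (σ : ℕ → Bool) {n N : ℕ} (h : n ≤ N) :
    (List.ofFn fun i : Fin n => σ i) <+: (List.ofFn fun i : Fin N => σ i) := by
  induction N, h using Nat.le_induction with
  | base => exact List.prefix_rfl
  | succ N _ ih =>
    rw [List.ofFn_succ_last]
    exact ih.trans (List.prefix_append _ _)

/-- finite trees from the combinatorics -/
theorem nice_fin {β ξ : Type} {b : β → 𝕄} {D : (ξ ⊕ β → 𝕄) → Prop} {k : ℕ}
    (h : ∀ n : ℕ, ∃ T : List Bool → β → 𝕄, (∀ η, TpEq L 𝕄 M (T η) b) ∧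
      ∀ η : List Bool, η.length = n → ConL D ((pidx η).map T) ∧
        ∀ Y, List.Sublist Y ((sidx η).map T) → Y.length = k → ¬ ConL D Y) :
    ∃ K, ∀ h : ℕ, ∃ t : List Bool → Fin K → β → 𝕄, (∀ η j, TpEq L 𝕄 M (t η j) b) ∧
      (∀ η : List Bool, η.length ≤ h → ∃ x : ξ → 𝕄, ∀ θ, θ <+: η → ∀ j, D (Sum.elim x (t θ j))) ∧
      (∀ η₁ η₂ : List Bool, (η₁ ++ [false]) <+: η₂ → η₂.length ≤ h →
        ¬ ∃ x : ξ → 𝕄, ∀ j, D (Sum.elim x (t η₂ j)) ∧ D (Sum.elim x (t (η₁ ++ [true]) j))) := by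
  let A := {e : β → 𝕄 // TpEq L 𝕄 M e b}
  let Cons : List A → Prop := fun l => ConL D (l.map Subtype.val)
  have anti : ∀ l l' : List A, l ⊆ l' → Cons l' → Cons l := fun l l' hl h =>
    ConL.mono h (List.map_subset _ hl) fun _ _ _ h => h
  obtain ⟨K, hK⟩ := combC k anti 0 (fun n => by
    obtain ⟨T, h1, h2⟩ := h n
    refine ⟨[], rfl, CT_of_fun anti k n (fun η => ⟨T η, h1 η⟩) [] [] fun η hη => ⟨?_, ?_⟩⟩
    · refine ConL.mono (h2 η hη).1 ?_ fun _ _ _ h => h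
      simp only [List.append_nil, List.map_map]
      exact List.map_subset _ (List.tail_subset _)
    · intro Y hY hYk
      refine (h2 η hη).2 _ ?_ (by simpa using hYk)
      have := hY.map Subtype.val
      simpa [Function.comp_def] using this)
  refine ⟨K, fun h => ?_⟩
  obtain ⟨t, h1, -, h2, h3⟩ := STB_fun anti K (h + 1) [] [] (hK (h + 1))
  let b0 : A := ⟨b, TpEq.rfl'⟩
  have hmem : ∀ η : List Bool, η.length ≤ h → ∀ e, e ∈ t (false :: η) ↔
      ∃ j : Fin K, (t (false :: η)).getD j b0 = e := by
    intro η hη e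
    have hl := h1 (false :: η) (by simp) (by simpa using hη)
    rw [List.mem_iff_getElem]
    constructor
    · rintro ⟨i, hi, rfl⟩
      exact ⟨⟨i, by omega⟩, by simp [hi]⟩
    · rintro ⟨j, rfl⟩
      have hj : (j : ℕ) < (t (false :: η)).length := by rw [hl]; exact j.2
      exact ⟨j, hj, by simp [hj]⟩
  refine ⟨fun η j => ((t (false :: η)).getD j b0).1, fun η j => ((t (false :: η)).getD j b0).2, ?_, ?_⟩
  · intro η hη
    obtain ⟨x, hx⟩ := h2 (false :: η) (by simpa using hη) (η.inits.flatMap fun θ => t (false :: θ)) (by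
      intro y hy
      obtain ⟨θ, hθ, hy⟩ := List.mem_flatMap.1 hy
      exact Or.inr ⟨false :: θ, by simp, by simpa using hθ, hy⟩)
    refine ⟨x, fun θ hθ j => hx _ (List.mem_map_of_mem ?_)⟩
    refine List.mem_flatMap.2 ⟨θ, by simpa using hθ, ?_⟩
    exact (hmem θ (hθ.length_le.trans hη) _).2 ⟨j, rfl⟩
  · rintro η₁ η₂ hpre hlen ⟨x, hx⟩
    have hlen1 : η₁.length + 1 ≤ h := by
      have := hpre.length_le
      simp at this
      omega
    refine h3 (false :: η₁) (false :: η₂) (by simpa using hpre) (by simpa using hlen) ⟨x, ?_⟩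
    intro e he
    obtain ⟨e', he', rfl⟩ := List.mem_map.1 he
    rcases List.mem_append.1 he' with he' | he'
    · obtain ⟨j, rfl⟩ := (hmem (η₁ ++ [true]) (by simpa using hlen1) e').1 he'
      exact (hx j).2
    · obtain ⟨j, rfl⟩ := (hmem η₂ hlen e').1 he'
      exact (hx j).1

/-- infinite tree by compactness -/
theorem nice_inf (G : Good L M) {β ξ : Type} [Countable β] {b : β → 𝕄} {D : (ξ ⊕ β → 𝕄) → Prop}
    (hD : Dfn L M D) {K : ℕ}
    (h : ∀ h : ℕ, ∃ t : List Bool → Fin K → β → 𝕄, (∀ η j, TpEq L 𝕄 M (t η j) b) ∧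
      (∀ η : List Bool, η.length ≤ h → ∃ x : ξ → 𝕄, ∀ θ, θ <+: η → ∀ j, D (Sum.elim x (t θ j))) ∧
      (∀ η₁ η₂ : List Bool, (η₁ ++ [false]) <+: η₂ → η₂.length ≤ h →
        ¬ ∃ x : ξ → 𝕄, ∀ j, D (Sum.elim x (t η₂ j)) ∧ D (Sum.elim x (t (η₁ ++ [true]) j)))) :
    ∃ t : List Bool → Fin K → β → 𝕄, (∀ η j, TpEq L 𝕄 M (t η j) b) ∧
      (∀ η : List Bool, ∃ x : ξ → 𝕄, ∀ θ, θ <+: η → ∀ j, D (Sum.elim x (t θ j))) ∧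
      (∀ η₁ η₂ : List Bool, (η₁ ++ [false]) <+: η₂ →
        ¬ ∃ x : ξ → 𝕄, ∀ j, D (Sum.elim x (t η₂ j)) ∧ D (Sum.elim x (t (η₁ ++ [true]) j))) := by
  let X := List Bool × Fin K × β
  let gd : ℕ → (X → 𝕄) → Prop := fun h τ =>
    (∀ η j, TpEq L 𝕄 M (fun i => τ (η, j, i)) b) ∧
      (∀ η : List Bool, η.length ≤ h → ∃ x : ξ → 𝕄, ∀ θ, θ <+: η → ∀ j,
        D (Sum.elim x (fun i => τ (θ, j, i)))) ∧
      (∀ η₁ η₂ : List Bool, (η₁ ++ [false]) <+: η₂ → η₂.length ≤ h →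
        ¬ ∃ x : ξ → 𝕄, ∀ j, D (Sum.elim x (fun i => τ (η₂, j, i))) ∧
          D (Sum.elim x (fun i => τ (η₁ ++ [true], j, i))))
  have mono : ∀ h h' τ, h ≤ h' → gd h' τ → gd h τ := fun h h' τ hh hg =>
    ⟨hg.1, fun η hη => hg.2.1 η (hη.trans hh), fun η₁ η₂ h1 h2 => hg.2.2 η₁ η₂ h1 (h2.trans hh)⟩
  have key := G.sat (α := X) (γ := Empty) Empty.elim
    {E | Dfn L M E ∧ ∃ h, ∀ τ : X ⊕ Empty → 𝕄, gd h (τ ∘ Sum.inl) → E τ} (fun E hE => hE.1)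
    ⟨Dfn.true, 0, fun _ _ => trivial⟩ ?_ ?_
  · obtain ⟨τ, hτ⟩ := key
    have hτ' : ∀ E : (X → 𝕄) → Prop, Dfn L M E → (∃ h, ∀ τ, gd h τ → E τ) → E τ := by
      rintro E hE ⟨h, hh⟩
      exact hτ (fun τ => E (τ ∘ Sum.inl)) ⟨hE.comp _, h, fun τ hg => hh _ hg⟩
    refine ⟨fun η j i => τ (η, j, i), ?_, ?_, ?_⟩
    · intro η j
      refine TpEq.symm' (tpEq_iff.2 fun E hE hb => ?_)
      exact hτ' _ (hE.comp fun i => (η, j, i)) ⟨0, fun τ hg => ((hg.1 η j).dfn hE).2 hb⟩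
    · intro η
      refine hτ' (fun τ => ∃ x : ξ → 𝕄, ∀ θ, θ <+: η → ∀ j, D (Sum.elim x (fun i => τ (θ, j, i))))
        ?_ ⟨η.length, fun τ hg => hg.2.1 η le_rfl⟩
      refine (Dfn.conL G hD (η.inits.flatMap fun θ => (List.finRange K).map fun j => (θ, j))
        (fun q i => ((q.1, q.2, i) : X))).of_iff fun τ => ?_
      refine exists_congr fun x => ?_
      constructor
      · intro hx e he
        obtain ⟨q, hq, rfl⟩ := List.mem_map.1 he
        obtain ⟨θ, hθ, hq⟩ := List.mem_flatMap.1 hq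
        obtain ⟨j, _, rfl⟩ := List.mem_map.1 hq
        exact hx θ (by simpa using hθ) j
      · intro hx θ hθ j
        refine hx _ (List.mem_map.2 ⟨(θ, j), ?_, rfl⟩)
        exact List.mem_flatMap.2 ⟨θ, by simpa using hθ, by simp⟩
    · intro η₁ η₂ hpre
      refine hτ' (fun τ => ¬ ∃ x : ξ → 𝕄, ∀ j, D (Sum.elim x (fun i => τ (η₂, j, i))) ∧
          D (Sum.elim x (fun i => τ (η₁ ++ [true], j, i)))) (Dfn.not ?_)
        ⟨η₂.length, fun τ hg => hg.2.2 η₁ η₂ hpre le_rfl⟩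
      refine (Dfn.conL G hD ([η₂, η₁ ++ [true] ].flatMap fun θ =>
        (List.finRange K).map fun j => (θ, j))
        (fun q i => ((q.1, q.2, i) : X))).of_iff fun τ => ?_
      refine exists_congr fun x => ?_
      constructor
      · intro hx e he
        obtain ⟨q, hq, rfl⟩ := List.mem_map.1 he
        obtain ⟨θ, hθ, hq⟩ := List.mem_flatMap.1 hq
        obtain ⟨j, _, rfl⟩ := List.mem_map.1 hq
        rcases List.mem_cons.1 hθ with rfl | hθ
        · exact (hx j).1
        · obtain rfl := List.mem_singleton.1 hθ
          exact (hx j).2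
      · intro hx j
        refine ⟨hx _ (List.mem_map.2 ⟨(η₂, j), ?_, rfl⟩),
          hx _ (List.mem_map.2 ⟨(η₁ ++ [true], j), ?_, rfl⟩)⟩
        · exact List.mem_flatMap.2 ⟨η₂, by simp, by simp⟩
        · exact List.mem_flatMap.2 ⟨η₁ ++ [true], by simp, by simp⟩
  · rintro E ⟨hE, h, hh⟩ E' ⟨hE', h', hh'⟩
    exact ⟨hE.and hE', max h h', fun τ hg => ⟨hh τ (mono _ _ _ (le_max_left _ _) hg),
      hh' τ (mono _ _ _ (le_max_right _ _) hg)⟩⟩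
  · rintro E ⟨hE, n, hn⟩
    obtain ⟨t, ht⟩ := h n
    exact ⟨fun q => t q.1 q.2.1 q.2.2, hn _ ht⟩

theorem QT.nice (G : Good L M) {nv : ℕ} {P : Set (ParamFormula L 𝕄 (Fin nv))}
    (hP : ∀ φ ∈ P, φ.ParamsIn M) (hco : CoNSOP1 L 𝕄 M P) {β : Type} {b : β → 𝕄} (hb : QT L P b) :
    Nice L M b := by
  intro ξ _ D hD k hT
  have := hb.finite
  obtain ⟨K, hK⟩ := nice_fin hT
  obtain ⟨t, h1, h2, h3⟩ := nice_inf G hD hK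
  obtain ⟨ρ, hρ, r, hr, hbr⟩ := hb
  obtain ⟨kx, ⟨ex⟩⟩ := Finite.exists_equiv_fin ξ
  obtain ⟨m, ⟨em⟩⟩ := Finite.exists_equiv_fin (Fin K × ρ)
  choose sec hsec using hr
  have hφ : Dfn L M (fun y : Fin kx ⊕ (Fin m × Fin nv) → 𝕄 => ∀ j : Fin K,
      D (y ∘ Sum.map ex (fun i => (em (j, (sec i).1), (sec i).2)))) :=
    Dfn.all_fin fun j => hD.comp _
  obtain ⟨φ, hφ1, hφ2⟩ := hφ
  let bb : List Bool → Fin m → Fin nv → 𝕄 := fun η s v => t η (em.symm s).1 (r ((em.symm s).2, v))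
  have hreal : ∀ η (x : Fin kx → 𝕄), (φ.subst (flat (bb η))).Realize x ↔
      ∀ j, D (Sum.elim (x ∘ ex) (t η j)) := by
    intro η x
    rw [subst_realize, ← hφ2]
    refine forall_congr' fun j => ?_
    have : Sum.elim x (flat (bb η)) ∘ Sum.map ex (fun i => (em (j, (sec i).1), (sec i).2)) =
        Sum.elim (x ∘ ex) (t η j) := by
      funext i
      rcases i with i | i
      · rfl
      · simp [flat, bb, hsec]
    rw [this]
  have hx : ∀ x : ξ → 𝕄, (x ∘ ex.symm) ∘ ex = x := fun x => by
    funext i; simp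
  refine hco ⟨kx, m, φ, bb, hφ1, ?_, ?_, ?_⟩
  · intro η s φ' hφ'
    have := hbr (em.symm s).2 φ' hφ'
    exact (((h1 η (em.symm s).1).comp fun v => r ((em.symm s).2, v)) φ' (hP φ' hφ')).2 this
  · intro σ s
    obtain ⟨x, hx'⟩ := h2 (List.ofFn fun i : Fin (s.sup id) => σ i)
    refine ⟨x ∘ ex.symm, fun n hn => (hreal _ _).2 ?_⟩
    rw [hx]
    exact hx' _ (ofFn_initial_seg σ (Finset.le_sup (f := id) hn))
  · rintro η₁ η₂ hpre ⟨x, hx1, hx2⟩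
    rw [hreal] at hx1 hx2
    exact h3 η₁ η₂ hpre ⟨x ∘ ex, fun j => ⟨hx1 j, hx2 j⟩⟩

end NiceSec2

section KimSec
variable {L : FirstOrder.Language.{u, v}} {𝕄 : Type w} [L.Structure 𝕄] {M : Set 𝕄}

theorem Good.homog_ext (G : Good L M) {X Y : Type} [Countable X] [Countable Y] (g : X → Y)
    (y : Y → 𝕄) (x : X → 𝕄) (h : TpEq L 𝕄 M (y ∘ g) x) :
    ∃ y', TpEq L 𝕄 M y y' ∧ y' ∘ g = x := by
  obtain ⟨y', hy'⟩ := G.homog h y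
  refine ⟨y', hy'.comp Sum.inl, ?_⟩
  funext i
  exact (hy'.dfn (Dfn.eq_var (Sum.inl (g i)) (Sum.inr i))).1 rfl

theorem RlzM.toS (G : Good L M) {β : Type} {U : Ultrafilter (β → 𝕄)} {b : β → 𝕄}
    (h : RlzM L M U b) {S : Set 𝕄} (hS : S ⊆ ∅) : RlzS L M U S b := by
  have h1 : Rlz L M U (Empty.elim : Empty → 𝕄) b := by
    intro D hD hx
    have h2 : ∀ x : β → 𝕄, Sum.elim x (Empty.elim : Empty → 𝕄) = x ∘ Sum.elim id Empty.elim := by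
      intro x; funext i; rcases i with i | i
      · rfl
      · exact i.elim
    simp only [h2] at hx ⊢
    exact h _ (hD.comp _) hx
  exact h1.toS G fun m hm => (hS hm).elim

theorem MorL.transfer (G : Good L M) {β ι : Type} {U : Ultrafilter (β → 𝕄)} (hU : InvU L M U)
    {T T' : ι → β → 𝕄} (h : TpEq L 𝕄 M (flat T) (flat T')) (l : List ι)
    (hl : MorL L M U (l.map T)) : MorL L M U (l.map T') := by
  induction l with
  | nil => trivial
  | cons i l ih =>
    refine ⟨ih hl.1, ?_⟩
    have h1 := hl.2 ({j // j ∈ l} × β) (fun q => T q.1.1 q.2) (fun q => Or.inr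
      ⟨T q.1.1, List.mem_map_of_mem q.1.2, q.2, rfl⟩)
    have h2 : TpEq L 𝕄 M (Sum.elim (T i) (fun q : {j // j ∈ l} × β => T q.1.1 q.2))
        (Sum.elim (T' i) (fun q : {j // j ∈ l} × β => T' q.1.1 q.2)) := by
      have := h.comp (Sum.elim (fun k => (i, k)) (fun q : {j // j ∈ l} × β => (q.1.1, q.2)))
      convert this using 1 <;> (funext q; rcases q with q | q <;> rfl)
    refine (h1.congr hU h2).toS G ?_
    rintro m ⟨y, hy, k, rfl⟩
    obtain ⟨j, hj, rfl⟩ := List.mem_map.1 hy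
    exact ⟨(⟨j, hj⟩, k), rfl⟩

/-- joining two trees under a new root -/
def jn {X : Type*} (f : X) (T0 T1 : List Bool → X) : List Bool → X
  | [] => f
  | false :: η => T0 η
  | true :: η => T1 η

theorem jn_pidx {X : Type*} (f : X) (T0 T1 : List Bool → X) (b : Bool) (η : List Bool) :
    (pidx (b :: η)).map (jn f T0 T1) = f :: (pidx η).map (if b then T1 else T0) := by
  cases b <;> simp [pidx, jn, Function.comp_def]

theorem jn_sidx_false {X : Type*} (f : X) (T0 T1 : List Bool → X) (η : List Bool) :
    (sidx (false :: η)).map (jn f T0 T1) = T1 [] :: (sidx η).map T0 := by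
  simp [sidx, jn, Function.comp_def]

theorem jn_sidx_true {X : Type*} (f : X) (T0 T1 : List Bool → X) (η : List Bool) :
    (sidx (true :: η)).map (jn f T0 T1) = (sidx η).map T1 := by
  simp [sidx, jn, Function.comp_def]

theorem kim_tree (G : Good L M) {β : Type} [Countable β] {b : β → 𝕄}
    {U W : Ultrafilter (β → 𝕄)} (hU : InvU L M U) (hW : InvU L M W) (hUb : RlzM L M U b)
    (hWb : RlzM L M W b) (n : ℕ) : ∃ T : List Bool → β → 𝕄, (∀ η, TpEq L 𝕄 M (T η) b) ∧
      ∀ η : List Bool, η.length = n → MorL L M U ((pidx η).map T) ∧ MorL L M W ((sidx η).map T) := by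
  induction n with
  | zero =>
    refine ⟨fun _ => b, fun _ => TpEq.rfl', fun η hη => ?_⟩
    obtain rfl := List.length_eq_zero_iff.1 hη
    refine ⟨⟨trivial, hUb.toS G ?_⟩, trivial⟩
    rintro m ⟨y, hy, _⟩
    simp at hy
  | succ n ih =>
    obtain ⟨T0, h1, h2⟩ := ih
    obtain ⟨e, he⟩ := exists_rlz G W (flat T0)
    obtain ⟨y, hy1, hy2⟩ := G.homog_ext (fun i : β => (([], i) : List Bool × β)) (flat T0) e
      ((h1 []).trans' (hWb.unique he.toM))
    let T1 : List Bool → β → 𝕄 := fun η i => y (η, i)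
    have hT1 : T1 [] = e := hy2
    have hTT : TpEq L 𝕄 M (flat T0) (flat T1) := hy1
    obtain ⟨f, hf⟩ := exists_rlz G U (Sum.elim (flat T0) (flat T1))
    refine ⟨jn f T0 T1, ?_, ?_⟩
    · intro η
      rcases η with _ | ⟨_ | _, η⟩
      · exact hf.toM.unique hUb
      · exact h1 η
      · exact (TpEq.symm' (hTT.comp fun i => (η, i))).trans' (h1 η)
    · intro η hη
      rcases η with _ | ⟨c, η⟩
      · simp at hη
      have hη' : η.length = n := by simpa using hη
      obtain ⟨h3, h4⟩ := h2 η hη'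
      constructor
      · rw [jn_pidx]
        refine ⟨?_, hf.toS G ?_⟩
        · cases c
          · exact h3
          · exact MorL.transfer G hU hTT _ h3
        · rintro m ⟨y', hy', i, rfl⟩
          obtain ⟨θ, hθ, rfl⟩ := List.mem_map.1 hy'
          cases c
          · exact ⟨Sum.inl (θ, i), rfl⟩
          · exact ⟨Sum.inr (θ, i), rfl⟩
      · cases c
        · rw [jn_sidx_false]
          refine ⟨h4, ?_⟩
          rw [hT1]
          refine he.toS G ?_
          rintro m ⟨y', hy', i, rfl⟩
          obtain ⟨θ, hθ, rfl⟩ := List.mem_map.1 hy'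
          exact ⟨(θ, i), rfl⟩
        · rw [jn_sidx_true]
          exact MorL.transfer G hW hTT _ h4

theorem kim (G : Good L M) {β : Type} [Countable β] {b : β → 𝕄} (hN : Nice L M b)
    {U W : Ultrafilter (β → 𝕄)} (hU : InvU L M U) (hW : InvU L M W) (hUb : RlzM L M U b)
    (hWb : RlzM L M W b) {ξ : Type} [Finite ξ] {D : (ξ ⊕ β → 𝕄) → Prop} (hD : Dfn L M D)
    (h : ConU L M U D) : ConU L M W D := by
  by_contra hc
  obtain ⟨k, hk⟩ := not_conU G hD hW hc
  refine hN ξ D hD k fun n => ?_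
  obtain ⟨T, h1, h2⟩ := kim_tree G hU hW hUb hWb n
  refine ⟨T, h1, fun η hη => ⟨h _ (h2 η hη).1, fun Y hY hYk => ?_⟩⟩
  exact hk _ ((h2 η hη).2.sublist hY) hYk.ge

end KimSec

section SymSec
variable {L : FirstOrder.Language.{u, v}} {𝕄 : Type w} [L.Structure 𝕄] {M : Set 𝕄}

/-- level `n` of the binary tree -/
abbrev Lv (n : ℕ) : Type := {η : List Bool // η.length = n}

instance (n : ℕ) : Finite (Lv n) := List.finite_length_eq Bool n

/-- the restriction of `B` to level `n` -/
def BL {β : Type} (n : ℕ) (B : List Bool → β → 𝕄) : Lv n × β → 𝕄 := fun q => B q.1.1 q.2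

theorem sym_tree (G : Good L M) {α β : Type} [Finite α] [Finite β] {a : α → 𝕄} {b : β → 𝕄}
    (hQ : ∀ (ι : Type) [Finite ι] (B : ι → β → 𝕄), (∀ i, TpEq L 𝕄 M (B i) b) → Nice L M (flat B))
    (h : HInd L M a b) {U₀ : Ultrafilter (α → 𝕄)} (hU₀ : Coh M U₀) (hU₀a : RlzM L M U₀ a) (n : ℕ) :
    ∃ (T : List Bool → α → 𝕄) (B : List Bool → β → 𝕄), (∀ η, TpEq L 𝕄 M (T η) a) ∧
      (∀ η : List Bool, η.length = n →
        (∀ t ∈ (pidx η).map T, TpEq L 𝕄 M (Sum.elim t (B η)) (Sum.elim a b)) ∧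
        MorL L M U₀ ((sidx η).map T)) ∧
      (∀ D0 : (α ⊕ β → 𝕄) → Prop, Dfn L M D0 → D0 (Sum.elim a b) →
        ∀ U : Ultrafilter (Lv n × β → 𝕄), InvU L M U → RlzM L M U (BL n B) →
          ConU L M U (fun y : α ⊕ (Lv n × β) → 𝕄 => ∀ η : Lv n,
            D0 (y ∘ Sum.map id (fun k => (η, k))))) := by
  induction n with
  | zero =>
    refine ⟨fun _ => a, fun _ => b, fun _ => TpEq.rfl', fun η hη => ?_, ?_⟩
    · obtain rfl := List.length_eq_zero_iff.1 hη
      refine ⟨fun t ht => ?_, trivial⟩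
      obtain ⟨_, _, rfl⟩ := List.mem_map.1 ht
      exact TpEq.rfl'
    · intro D0 hD0 hab U hU hUb
      have h1 := h D0 hD0 hab (umap U fun k => ((⟨[], rfl⟩ : Lv 0), k)) (hU.map _) (hUb.map _)
      refine (ConU.of_map _ h1).imp ?_
      rintro y hy ⟨η, hη⟩
      obtain rfl := List.length_eq_zero_iff.1 hη
      exact hy
  | succ n ih =>
    obtain ⟨T, B, h1, h2, h3⟩ := ih
    let I : Type := (List Bool × α) ⊕ (Lv n × β)
    let c : I → 𝕄 := Sum.elim (flat T) (BL n B)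
    let g : α → I := fun i => Sum.inl ([], i)
    obtain ⟨W, hW, hWg, hWc⟩ := coh_ext G hU₀ c g (hU₀a.congr (h1 []).symm')
    obtain ⟨cs, hcs⟩ := exists_mor G W
    have hcc : ∀ i, TpEq L 𝕄 M c (cs i) := fun i => hWc.unique (hcs i).toM
    let Ts : ℕ → List Bool → α → 𝕄 := fun i η k => cs i (Sum.inl (η, k))
    let Bs : ℕ → List Bool → β → 𝕄 := fun i η k =>
      if hη : η.length = n then cs i (Sum.inr (⟨η, hη⟩, k)) else b k
    have hTs : ∀ i, TpEq L 𝕄 M (flat T) (flat (Ts i)) := fun i => (hcc i).comp Sum.inl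
    have hBs : ∀ i (η : Lv n), (fun k => cs i (Sum.inr (η, k))) = Bs i η.1 := fun i η => by
      funext k; simp [Bs, η.2]
    have hTB : ∀ i (η θ : List Bool) (hη : η.length = n),
        TpEq L 𝕄 M (Sum.elim (T θ) (B η)) (Sum.elim (Ts i θ) (Bs i η)) := fun i η θ hη => by
      have := (hcc i).comp (Sum.elim (fun k => Sum.inl (θ, k)) (fun k => Sum.inr (⟨η, hη⟩, k)))
      convert this using 1
      · funext q; rcases q with q | q <;> rfl
      · rw [← hBs i ⟨η, hη⟩]
        funext q; rcases q with q | q <;> rfl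
    have key := exists_along G (hcs.map (Sum.inr : Lv n × β → I))
      {E : (α ⊕ (Lv n × β) → 𝕄) → Prop | Dfn L M E ∧ ∃ D0 : (α ⊕ β → 𝕄) → Prop, Dfn L M D0 ∧
        D0 (Sum.elim a b) ∧ ∀ y, (∀ η : Lv n, D0 (y ∘ Sum.map id (fun k => (η, k)))) → E y}
      (fun E hE => hE.1) ⟨Dfn.true, fun _ => True, Dfn.true, trivial, fun _ _ => trivial⟩ ?_ ?_
    rotate_left
    · rintro E ⟨hE, D0, hD0, hab, hy⟩ E' ⟨hE', D0', hD0', hab', hy'⟩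
      exact ⟨hE.and hE', fun y => D0 y ∧ D0' y, hD0.and hD0', ⟨hab, hab'⟩, fun y hh =>
        ⟨hy y fun η => (hh η).1, hy' y fun η => (hh η).2⟩⟩
    · rintro E ⟨hE, D0, hD0, hab, hy⟩
      exact (h3 D0 hD0 hab _ ((hW.inv G).map _) (hWc.map Sum.inr)).imp hy
    obtain ⟨a0, ha0⟩ := key
    have ha0' : ∀ i (η : List Bool), η.length = n →
        TpEq L 𝕄 M (Sum.elim a0 (Bs i η)) (Sum.elim a b) := by
      intro i η hη
      refine TpEq.symm' (tpEq_iff.2 fun D0 hD0 hab => ?_)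
      have := ha0 i (fun y => ∀ η : Lv n, D0 (y ∘ Sum.map id (fun k => (η, k))))
        ⟨Dfn.all_fin fun η => hD0.comp _, D0, hD0, hab, fun _ h => h⟩ ⟨η, hη⟩
      rw [elim_comp_map'] at this
      rw [← hBs i ⟨η, hη⟩]
      exact this
    let Bn : List Bool → β → 𝕄 := jn b (Bs 0) (Bs 1)
    have hBb : ∀ η : Lv (n + 1), TpEq L 𝕄 M (Bn η.1) b := by
      rintro ⟨η, hη⟩
      rcases η with _ | ⟨_ | _, η⟩
      · simp at hη
      · exact (ha0' 0 η (by simpa using hη)).comp Sum.inr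
      · exact (ha0' 1 η (by simpa using hη)).comp Sum.inr
    refine ⟨jn a0 (Ts 0) (Ts 1), Bn, ?_, ?_, ?_⟩
    · intro η
      rcases η with _ | ⟨_ | _, η⟩
      · exact (ha0' 0 (List.replicate n false) (by simp)).comp Sum.inl
      · exact (TpEq.symm' ((hTs 0).comp fun i => (η, i))).trans' (h1 η)
      · exact (TpEq.symm' ((hTs 1).comp fun i => (η, i))).trans' (h1 η)
    · intro η hη
      rcases η with _ | ⟨d, η⟩
      · simp at hη
      have hη' : η.length = n := by simpa using hη
      obtain ⟨h4, h5⟩ := h2 η hη'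
      constructor
      · rw [jn_pidx]
        intro t ht
        rcases List.mem_cons.1 ht with rfl | ht
        · cases d
          · exact ha0' 0 η hη'
          · exact ha0' 1 η hη'
        · obtain ⟨θ, hθ, rfl⟩ := List.mem_map.1 ht
          have h6 := h4 _ (List.mem_map_of_mem hθ)
          cases d
          · exact (hTB 0 η θ hη').symm'.trans' h6
          · exact (hTB 1 η θ hη').symm'.trans' h6
      · cases d
        · rw [jn_sidx_false]
          refine ⟨MorL.transfer G (hU₀.inv G) (hTs 0) _ h5, ?_⟩
          have h6 := (hcs 1).map g
          rw [hWg] at h6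
          refine RlzS.mono ?_ h6
          rintro m ⟨y', hy', i, rfl⟩
          obtain ⟨θ, hθ, rfl⟩ := List.mem_map.1 hy'
          exact ⟨0, by omega, Sum.inl (θ, i), rfl⟩
        · rw [jn_sidx_true]
          exact MorL.transfer G (hU₀.inv G) (hTs 1) _ h5
    · intro D0 hD0 hab U hU hUb
      let hm : Lv (n + 1) × β → I ⊕ I := fun q =>
        if q.1.1.headI then Sum.inr (Sum.inr (⟨q.1.1.tail, by simp [q.1.2]⟩, q.2))
        else Sum.inl (Sum.inr (⟨q.1.1.tail, by simp [q.1.2]⟩, q.2))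
      have hel : ∀ i j, Sum.elim (cs i) (cs j) ∘ hm = BL (n + 1) (jn b (Bs i) (Bs j)) := by
        intro i j
        funext ⟨⟨η, hη⟩, k⟩
        rcases η with _ | ⟨_ | _, η⟩
        · simp at hη
        · exact congrFun (hBs i ⟨η, by simpa using hη⟩) k
        · exact congrFun (hBs j ⟨η, by simpa using hη⟩) k
      have hmor := (hcs.prod hW).map hm
      have hN : Nice L M (BL (n + 1) Bn) := hQ (Lv (n + 1)) (fun η => Bn η.1) hBb
      have hR : RlzM L M (umap (uprod W) hm) (BL (n + 1) Bn) := by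
        have := (hmor 0).toM
        change RlzM L M _ (Sum.elim (cs (2 * 0)) (cs (2 * 0 + 1)) ∘ hm) at this
        rw [hel] at this
        exact this
      have hDD : Dfn L M (fun y : α ⊕ (Lv (n + 1) × β) → 𝕄 => ∀ η : Lv (n + 1),
            D0 (y ∘ Sum.map id (fun k => (η, k)))) := Dfn.all_fin fun η => hD0.comp _
      have hI := (hW.prod.map hm).inv (L := L) G
      refine kim G hN hI hU hR hUb hDD (hmor.conU G hDD hI fun N => ⟨a0, fun i _ => ?_⟩)
      rintro ⟨η, hη⟩
      rw [elim_comp_map', hel]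
      rcases η with _ | ⟨_ | _, η⟩
      · simp at hη
      · exact ((ha0' (2 * i) η (by simpa using hη)).dfn hD0).2 hab
      · exact ((ha0' (2 * i + 1) η (by simpa using hη)).dfn hD0).2 hab

theorem HInd.symm (G : Good L M) {α β : Type} [Finite α] [Finite β] {a : α → 𝕄} {b : β → 𝕄}
    (hP : Nice L M a)
    (hQ : ∀ (ι : Type) [Finite ι] (B : ι → β → 𝕄), (∀ i, TpEq L 𝕄 M (B i) b) → Nice L M (flat B))
    (h : HInd L M a b) : HInd L M b a := by
  intro D hD hba U hU hUa
  obtain ⟨U₀, hU₀, hU₀a⟩ := exists_coh (L := L) G a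
  refine kim G hP (hU₀.inv G) hU hU₀a hUa hD ?_
  by_contra hc
  obtain ⟨k, hk⟩ := not_conU G hD (hU₀.inv G) hc
  refine hP β D hD k fun n => ?_
  obtain ⟨T, B, h1, h2, -⟩ := sym_tree G hQ h hU₀ hU₀a n
  refine ⟨T, h1, fun η hη => ⟨⟨B η, fun e he => ?_⟩, fun Y hY hYk => ?_⟩⟩
  · have h3 := ((h2 η hη).1 e he).comp Sum.swap
    have h4 : ∀ (x : α → 𝕄) (y : β → 𝕄), Sum.elim x y ∘ Sum.swap = Sum.elim y x := by
      intro x y; funext q; rcases q with q | q <;> rfl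
    rw [h4, h4] at h3
    exact (h3.dfn hD).2 hba
  · exact hk _ ((h2 η hη).2.sublist hY) hYk.ge

end SymSec

section AmalgSec
variable {L : FirstOrder.Language.{u, v}} {𝕄 : Type w} [L.Structure 𝕄] {M : Set 𝕄}

theorem elim_swap {α β : Type} (x : α → 𝕄) (y : β → 𝕄) :
    Sum.elim x y ∘ Sum.swap = Sum.elim y x := by
  funext q; rcases q with q | q <;> rfl

theorem TpEq.swap {α β : Type} {x x' : α → 𝕄} {y y' : β → 𝕄}
    (h : TpEq L 𝕄 M (Sum.elim x y) (Sum.elim x' y')) :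
    TpEq L 𝕄 M (Sum.elim y x) (Sum.elim y' x') := by
  have := h.comp Sum.swap
  rwa [elim_swap, elim_swap] at this

theorem TpEq.right {α β γ : Type} {x x' : α → 𝕄} {y y' : β → 𝕄}
    (h : TpEq L 𝕄 M (Sum.elim x y) (Sum.elim x' y')) (g : γ → β) :
    TpEq L 𝕄 M (Sum.elim x (y ∘ g)) (Sum.elim x' (y' ∘ g)) := by
  have := h.comp (Sum.map id g)
  rwa [elim_comp_map', elim_comp_map'] at this

theorem HInd.congr {α β : Type} {a a' : α → 𝕄} {b b' : β → 𝕄}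
    (h : TpEq L 𝕄 M (Sum.elim a b) (Sum.elim a' b')) (hi : HInd L M a b) : HInd L M a' b' :=
  fun D hD hx U hU hUb => hi D hD ((h.dfn hD).2 hx) U hU (hUb.congr (h.comp Sum.inr).symm')

theorem HInd.along (G : Good L M) {α β : Type} [Countable α] [Countable β] {a : α → 𝕄} {b : β → 𝕄}
    (h : HInd L M a b) {U : Ultrafilter (β → 𝕄)} (hU : InvU L M U) (hUb : RlzM L M U b)
    {bs : ℕ → β → 𝕄} (hbs : Mor L M U bs) :
    ∃ a', ∀ i, TpEq L 𝕄 M (Sum.elim a' (bs i)) (Sum.elim a b) := by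
  obtain ⟨a', ha'⟩ := exists_along G hbs {E : (α ⊕ β → 𝕄) → Prop | Dfn L M E ∧ E (Sum.elim a b)}
    (fun E hE => hE.1) ⟨Dfn.true, trivial⟩ (fun E hE E' hE' => ⟨hE.1.and hE'.1, hE.2, hE'.2⟩)
    (fun E hE => h E hE.1 hE.2 U hU hUb)
  exact ⟨a', fun i => TpEq.symm' (tpEq_iff.2 fun D hD hx => ha' i D ⟨hD, hx⟩)⟩

theorem vlim_rlzM {β γ : Type} {U : Ultrafilter (β → 𝕄)} {bs : ℕ → β → 𝕄} (h : Mor L M U bs)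
    {a : β → 𝕄} {e : γ → 𝕄} (ha : ∀ D : (β ⊕ γ → 𝕄) → Prop, Dfn L M D → D (Sum.elim a e) →
      ∃ g : ℕ → ℕ, StrictMono g ∧ ∀ i, D (Sum.elim (bs (g i)) e)) : RlzM L M U a := by
  intro D hD hx
  by_contra hc
  obtain ⟨g, _, hg⟩ := ha (fun y => ¬ D (y ∘ Sum.inl)) (hD.comp _).not hc
  exact hg 0 ((h (g 0)).toM D hD hx)

theorem vlim_hind (G : Good L M) {β γ : Type} [Countable β] [Finite γ] {U : Ultrafilter (β → 𝕄)}
    (hU : InvU L M U) {bs : ℕ → β → 𝕄} (h : Mor L M U bs)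
    {a : β → 𝕄} {e : γ → 𝕄} (ha : ∀ D : (β ⊕ γ → 𝕄) → Prop, Dfn L M D → D (Sum.elim a e) →
      ∃ g : ℕ → ℕ, StrictMono g ∧ ∀ i, D (Sum.elim (bs (g i)) e)) (hN : Nice L M a) :
    HInd L M e a := by
  intro D hD hx W hW hWa
  obtain ⟨g, hg, hg'⟩ := ha (fun y => D (y ∘ Sum.swap)) (hD.comp _) (by rw [elim_swap]; exact hx)
  refine kim G hN hU hW (vlim_rlzM h ha) hWa hD ((h.sub hg).conU G hD hU fun n => ⟨e, fun i _ => ?_⟩)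
  have := hg' i
  rwa [elim_swap] at this

theorem vlim_tp {β γ δ : Type} {bs : ℕ → β → 𝕄}
    {a : β → 𝕄} {e : γ → 𝕄} (ha : ∀ D : (β ⊕ γ → 𝕄) → Prop, Dfn L M D → D (Sum.elim a e) →
      ∃ g : ℕ → ℕ, StrictMono g ∧ ∀ i, D (Sum.elim (bs (g i)) e)) (f : δ → β ⊕ γ) {x : δ → 𝕄}
    (h : ∀ i, TpEq L 𝕄 M (Sum.elim (bs i) e ∘ f) x) : TpEq L 𝕄 M (Sum.elim a e ∘ f) x := by
  refine tpEq_iff.2 fun D hD hx => ?_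
  obtain ⟨g, _, hg⟩ := ha (fun y => D (y ∘ f)) (hD.comp _) hx
  exact ((h (g 0)).dfn hD).1 (hg 0)

theorem amalg1 (G : Good L M) {nv₁ nv₂ : ℕ} {P : Set (ParamFormula L 𝕄 (Fin nv₁))}
    {Q : Set (ParamFormula L 𝕄 (Fin nv₂))}
    (hP : ∀ φ ∈ P, φ.ParamsIn M) (hQ : ∀ φ ∈ Q, φ.ParamsIn M)
    (hcoP : CoNSOP1 L 𝕄 M P) (hcoQ : CoNSOP1 L 𝕄 M Q)
    {α β γ : Type} {a a' : α → 𝕄} {b : β → 𝕄} {c : γ → 𝕄} (ha : QT L P a) (hb : QT L Q b)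
    (hc : QT L Q c) (haa : TpEq L 𝕄 M a a') (hab : HInd L M a b) (hac : HInd L M a' c) :
    ∃ (a₁ : α → 𝕄) (b₁ : β → 𝕄) (c₁ : γ → 𝕄), TpEq L 𝕄 M (Sum.elim a₁ b₁) (Sum.elim a b) ∧
      TpEq L 𝕄 M (Sum.elim a₁ c₁) (Sum.elim a' c) ∧ HInd L M a₁ (Sum.elim b₁ c₁) := by
  have := ha.finite
  have := hb.finite
  have := hc.finite
  have ha' := ha.congr hP haa
  have hba : HInd L M b a := hab.symm G (ha.nice G hP hcoP) fun ι _ B hB =>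
    (QT.flatT fun i => hb.congr hQ (hB i).symm').nice G hQ hcoQ
  have hca : HInd L M c a' := hac.symm G (ha'.nice G hP hcoP) fun ι _ B hB =>
    (QT.flatT fun i => hc.congr hQ (hB i).symm').nice G hQ hcoQ
  obtain ⟨U, hU, hUa⟩ := exists_coh (L := L) G a
  have hUi := hU.inv (L := L) G
  obtain ⟨as, has⟩ := exists_mor G U
  obtain ⟨b₁, hb₁⟩ := hba.along G hUi hUa has
  obtain ⟨c₁, hc₁⟩ := hca.along G hUi (hUa.congr haa) has
  obtain ⟨a₁, ha₁⟩ := exists_vlim G as (Sum.elim b₁ c₁)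
  have haa₁ : TpEq L 𝕄 M a a₁ := hUa.unique (vlim_rlzM has ha₁)
  have hb₁Q : QT L Q b₁ := hb.congr hQ ((hb₁ 0).comp Sum.inl).symm'
  have hc₁Q : QT L Q c₁ := hc.congr hQ ((hc₁ 0).comp Sum.inl).symm'
  have h1 : HInd L M (Sum.elim b₁ c₁) a₁ :=
    vlim_hind G hUi has ha₁ ((ha.congr hP haa₁).nice G hP hcoP)
  refine ⟨a₁, b₁, c₁, ?_, ?_, ?_⟩
  · have := vlim_tp ha₁ (Sum.map id Sum.inl : α ⊕ β → _) (x := Sum.elim a b) fun i => by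
      rw [elim_comp_map']
      exact (hb₁ i).swap
    rw [elim_comp_map'] at this
    exact this
  · have := vlim_tp ha₁ (Sum.map id Sum.inr : α ⊕ γ → _) (x := Sum.elim a' c) fun i => by
      rw [elim_comp_map']
      exact (hc₁ i).swap
    rw [elim_comp_map'] at this
    exact this
  · exact h1.symm G ((hb₁Q.sum hc₁Q).nice G hQ hcoQ) fun ι _ B hB =>
      (QT.flatT fun i => ha.congr hP (haa₁.trans' (hB i).symm')).nice G hP hcoP

theorem amalg2 (G : Good L M) {nv₁ nv₂ : ℕ} {P : Set (ParamFormula L 𝕄 (Fin nv₁))}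
    {Q : Set (ParamFormula L 𝕄 (Fin nv₂))}
    (hP : ∀ φ ∈ P, φ.ParamsIn M) (hQ : ∀ φ ∈ Q, φ.ParamsIn M)
    (hcoP : CoNSOP1 L 𝕄 M P) (hcoQ : CoNSOP1 L 𝕄 M Q)
    {α β γ : Type} {a a' : α → 𝕄} {b : β → 𝕄} {c : γ → 𝕄} (ha : QT L P a) (hb : QT L Q b)
    (hc : QT L Q c) (haa : TpEq L 𝕄 M a a') (hab : HInd L M a b) (hac : HInd L M a' c)
    {V : Ultrafilter (γ → 𝕄)} (hV : Coh M V) (hVc : RlzS L M V (Set.range b) c) :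
    ∃ a₂ : α → 𝕄, HInd L M a₂ (Sum.elim b c) ∧ TpEq L 𝕄 M (Sum.elim a₂ b) (Sum.elim a b) ∧
      TpEq L 𝕄 M (Sum.elim a₂ c) (Sum.elim a' c) := by
  have := ha.finite
  have := hb.finite
  have := hc.finite
  obtain ⟨a₁, b₁, c₁, h1, h2, h3⟩ := amalg1 G hP hQ hcoP hcoQ ha hb hc haa hab hac
  obtain ⟨U, hU, hUV, hUd⟩ := coh_ext G hV (Sum.elim b₁ c₁) Sum.inr
    (hVc.toM.congr (h2.comp Sum.inr).symm')
  have hUi := hU.inv (L := L) G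
  obtain ⟨d, hd⟩ := exists_mor G U
  obtain ⟨ao, hao⟩ := h3.along G hUi hUd hd
  let hm : β ⊕ γ → (β ⊕ γ) ⊕ (β ⊕ γ) := Sum.map Sum.inl Sum.inr
  let es : ℕ → β ⊕ γ → 𝕄 := fun i => Sum.elim (d (2 * i)) (d (2 * i + 1)) ∘ hm
  have hes : Mor L M (umap (uprod U) hm) es := (hd.prod hU).map hm
  have hI := (hU.prod.map hm).inv (L := L) G
  have hel : ∀ i, es i = Sum.elim (d (2 * i) ∘ Sum.inl) (d (2 * i + 1) ∘ Sum.inr) := fun i => by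
    funext q; rcases q with q | q <;> rfl
  have hab' : ∀ i, TpEq L 𝕄 M (Sum.elim ao (d i ∘ Sum.inl)) (Sum.elim a b) := fun i => by
    have := (hao i).right Sum.inl
    exact this.trans' h1
  have hac' : ∀ i, TpEq L 𝕄 M (Sum.elim ao (d i ∘ Sum.inr)) (Sum.elim a' c) := fun i => by
    have := (hao i).right Sum.inr
    exact this.trans' h2
  have hbc : ∀ i, TpEq L 𝕄 M (es i) (Sum.elim b c) := fun i => by
    rw [hel]
    have h4 := (hd (2 * i + 1)).map (Sum.inr : γ → β ⊕ γ)
    rw [hUV] at h4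
    have h5 := h4 β (d (2 * i) ∘ Sum.inl) fun j => Or.inr ⟨2 * i, by omega, Sum.inl j, rfl⟩
    have h6 := hVc β b fun j => Or.inr ⟨j, rfl⟩
    exact (Rlz.unique (hV.inv G) ((hab' (2 * i)).comp Sum.inr) h5 h6).swap
  obtain ⟨e, he⟩ := exists_vlim G es ao
  have hebc : TpEq L 𝕄 M e (Sum.elim b c) := vlim_tp he Sum.inl hbc
  have hind : HInd L M ao e :=
    vlim_hind G hI hes he (((hb.sum hc).congr hQ hebc.symm').nice G hQ hcoQ)
  have heb : TpEq L 𝕄 M (Sum.elim (e ∘ Sum.inl) ao) (Sum.elim b a) := by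
    have := vlim_tp he (Sum.map Sum.inl id : β ⊕ α → _) (x := Sum.elim b a) fun i => by
      rw [elim_comp_map, hel]
      exact (hab' (2 * i)).swap
    rwa [elim_comp_map] at this
  have hec : TpEq L 𝕄 M (Sum.elim (e ∘ Sum.inr) ao) (Sum.elim c a') := by
    have := vlim_tp he (Sum.map Sum.inr id : γ ⊕ α → _) (x := Sum.elim c a') fun i => by
      rw [elim_comp_map, hel]
      exact (hac' (2 * i + 1)).swap
    rwa [elim_comp_map] at this
  obtain ⟨a₂, ha₂⟩ := G.homog hebc ao
  exact ⟨a₂, hind.congr ha₂, (ha₂.right Sum.inl).symm'.trans' heb.swap,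
    (ha₂.right Sum.inr).symm'.trans' hec.swap⟩

end AmalgSec

section ConvSec
variable {L : FirstOrder.Language.{u, v}} {𝕄 : Type w} [L.Structure 𝕄] {M : Set 𝕄}

theorem Dfn.ex_ix {A : Set 𝕄} {α ι : Type} [Finite ι] {D : ι → (α → 𝕄) → Prop}
    (h : ∀ i, Dfn L A (D i)) : Dfn L A (fun x => ∃ i, D i x) :=
  (Dfn.all_fin fun i => (h i).not).not.of_iff fun x => by push Not; rfl

theorem conant_hind (G : Good L M) {α β : Type} [Finite α] [Countable β] {a : α → 𝕄} {b : β → 𝕄}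
    (hN : Nice L M b) (hab : IndConant L 𝕄 M (Set.range b) a) : HInd L M a b := by
  rintro D ⟨χ, h1, h2⟩ hx U hU hUb
  have hD : Dfn L M D := ⟨χ, h1, h2⟩
  by_contra hc
  refine hab (χ.subst b) ?_ ((subst_realize χ b a).2 ((h2 _).1 hx)) ⟨1, fun _ => χ.subst b, ?_,
    fun x hx => ⟨0, hx⟩⟩
  · rintro (i | i)
    · exact Or.inr ⟨i, rfl⟩
    · exact Or.inl (h1 i)
  · intro _ bs h0 hm hcon
    obtain ⟨W, hW, hmor⟩ := (invMorley_iff G).1 hm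
    change ℕ → β ⊕ χ.Params → 𝕄 at bs
    have hpar : ∀ i j, bs i (Sum.inr j) = χ.params j := fun i j => by
      have h3 : TpEq L 𝕄 M (bs 0) (bs i) := (hmor 0).toM.unique (hmor i).toM
      refine (h3.dfn (Dfn.eq_const (Sum.inr j) (h1 j))).1 ?_
      rw [h0]
      rfl
    have hR : RlzM L M (umap W (Sum.inl : β → β ⊕ χ.Params)) b := by
      have := (hmor 0).toM.map (Sum.inl : β → β ⊕ χ.Params)
      rw [h0] at this
      exact this
    refine hc (kim G hN (hW.map _) hU hR hUb hD ((hmor.map Sum.inl).conU G hD (hW.map _) fun n => ?_))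
    obtain ⟨x, hx'⟩ := hcon (Finset.range n)
    refine ⟨x, fun i hi => (h2 _).2 ((subst_realize χ _ x).1 ?_)⟩
    have h3 := hx' i (Finset.mem_range.2 hi)
    have h4 : bs i = Sum.elim (bs i ∘ Sum.inl) χ.params := by
      funext q
      rcases q with q | q
      · rfl
      · exact hpar i q
    change (χ.subst b).toFormula.Realize (Sum.elim x (bs i)) at h3
    rw [h4] at h3
    exact h3

theorem hind_conant (G : Good L M) {α δ : Type} [Countable α] [Countable δ] {a : α → 𝕄} {d : δ → 𝕄}
    (hB : ∀ (Pm : Type) (e : Pm → 𝕄), ∃ bs : ℕ → Pm → 𝕄, bs 0 = e ∧ IsInvMorleyOver L 𝕄 M bs)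
    (h : HInd L M a d) : IndConant L 𝕄 M (Set.range d) a := by
  rintro φ hφ hφa ⟨k, ψ, hdiv, himp⟩
  obtain ⟨D, hD, hDφ⟩ := Dfn.unsubst (d := d) (D := fun x => φ.Realize x) ⟨φ, hφ, fun _ => Iff.rfl⟩
  obtain ⟨bs, h0, hm⟩ := hB (δ ⊕ (Σ j, (ψ j).Params)) (Sum.elim d fun q => (ψ q.1).params q.2)
  obtain ⟨U, hU, hmor⟩ := (invMorley_iff G).1 hm
  have hR : RlzM L M (umap U Sum.inl) d := by
    have := (hmor 0).toM.map (Sum.inl : δ → δ ⊕ (Σ j, (ψ j).Params))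
    rw [h0] at this
    exact this
  have hcon : ConU L M (umap U Sum.inl) D := h D hD ((hDφ a).1 hφa) _ (hU.map _) hR
  obtain ⟨x, hx⟩ := exists_along G (hmor.map (Sum.inl : δ → δ ⊕ (Σ j, (ψ j).Params)))
    {E | Dfn L M E ∧ ∀ y, D y → E y} (fun E hE => hE.1) ⟨Dfn.true, fun _ _ => trivial⟩
    (fun E hE E' hE' => ⟨hE.1.and hE'.1, fun y hy => ⟨hE.2 y hy, hE'.2 y hy⟩⟩)
    (fun E hE => hcon.imp hE.2)
  let gj : ∀ j, (ψ j).Params → δ ⊕ (Σ j, (ψ j).Params) := fun j p => Sum.inr ⟨j, p⟩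
  have hDI : Dfn L M (fun y : δ ⊕ (Σ j, (ψ j).Params) → 𝕄 => ∀ x : α → 𝕄,
      D (Sum.elim x (y ∘ Sum.inl)) → ∃ j, (ψ j).toFormula.Realize (Sum.elim x (y ∘ gj j))) := by
    have h1 : Dfn L M (fun z : (δ ⊕ (Σ j, (ψ j).Params)) ⊕ α → 𝕄 =>
        D (z ∘ Sum.elim Sum.inr (Sum.inl ∘ Sum.inl)) →
          ∃ j, (ψ j).toFormula.Realize (z ∘ Sum.elim Sum.inr (Sum.inl ∘ gj j))) :=
      Dfn.imp (hD.comp _) (Dfn.ex_ix fun j => (dfn_formula _).comp _)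
    refine (Dfn.all G.ne h1).of_iff fun y => forall_congr' fun x => ?_
    have h2 : ∀ {ζ : Type} (f : ζ → δ ⊕ (Σ j, (ψ j).Params)),
        Sum.elim y x ∘ Sum.elim Sum.inr (Sum.inl ∘ f) = Sum.elim x (y ∘ f) := by
      intro ζ f; funext q; rcases q with q | q <;> rfl
    simp only [h2]
  have hI : ∀ i, ∃ j, (ψ j).toFormula.Realize (Sum.elim x (bs i ∘ gj j)) := by
    intro i
    have h3 : TpEq L 𝕄 M (bs 0) (bs i) := (hmor 0).toM.unique (hmor i).toM
    refine (h3.dfn hDI).1 ?_ x (hx i D ⟨hD, fun _ h => h⟩)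
    rw [h0]
    intro x' hx'
    exact himp x' ((hDφ x').2 hx')
  choose jj hjj using hI
  obtain ⟨j, hj⟩ := Finite.exists_infinite_fiber jj
  have hinf : (jj ⁻¹' {j}).Infinite := Set.infinite_coe_iff.1 hj
  let g : ℕ → ℕ := Nat.nth (fun i => i ∈ jj ⁻¹' {j})
  have hg : StrictMono g := Nat.nth_strictMono hinf
  have hgj : ∀ i, jj (g i) = j := fun i => Nat.nth_mem_of_infinite hinf i
  have hmj := hmor.map (gj j)
  have hE : Dfn L M (fun y : α ⊕ (ψ j).Params → 𝕄 => (ψ j).toFormula.Realize y) := dfn_formula _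
  have hcj : ConU L M (umap U (gj j)) (fun y => (ψ j).toFormula.Realize y) := by
    refine (hmj.sub hg).conU G hE (hU.map _) fun n => ⟨x, fun i _ => ?_⟩
    have h4 : ∀ i j', jj i = j' → (ψ j').toFormula.Realize (Sum.elim x (bs i ∘ gj j')) := by
      rintro i _ rfl
      exact hjj i
    exact h4 _ _ (hgj i)
  refine hdiv j (fun i => bs i ∘ gj j) (by rw [h0]; rfl) ((invMorley_iff G).2 ⟨_, hU.map _, hmj⟩) ?_
  intro s
  obtain ⟨x', hx'⟩ := hcj.mor hmj (s.sup id + 1)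
  exact ⟨x', fun i hi => hx' i (Nat.lt_succ_of_le (Finset.le_sup (f := id) hi))⟩

theorem conant_ext {α : Type} {a : α → 𝕄} {S : Set 𝕄} (h : IndConant L 𝕄 M S a) (Pm : Type)
    (e : Pm → 𝕄) : ∃ bs : ℕ → Pm → 𝕄, bs 0 = e ∧ IsInvMorleyOver L 𝕄 M bs := by
  by_contra hc
  push Not at hc
  refine h ⟨Empty, ⊤, Empty.elim⟩ (fun i => i.elim) (by simp [ParamFormula.Realize]) ⟨1, fun _ =>
    ⟨Pm, ⊤, e⟩, fun _ bs h0 hm => (hc bs h0 hm).elim, fun x _ => ⟨0, by simp [ParamFormula.Realize]⟩⟩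

theorem finSat_coh {β γ : Type} {b : β → 𝕄} {c : γ → 𝕄}
    (h : IndFinSat L 𝕄 M (Set.range b) c) :
    ∃ V : Ultrafilter (γ → 𝕄), Coh M V ∧ RlzS L M V (Set.range b) c := by
  obtain ⟨p, hp, hc⟩ := h
  obtain ⟨V, hV, hpV⟩ := gt_ultra p {x | ∀ i, x i ∈ M} hp
  refine ⟨V, hV, (gt_rlzS hpV).1 fun φ hφ hpar => ?_⟩
  by_contra hn
  have h1 : p.Mem φ.not := hc φ.not hpar hn
  obtain ⟨x, h2, h3⟩ := (((hpV _).1 hφ).and ((hpV _).1 h1)).exists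
  exact h3 h2

theorem TpEq.eq_univ {β : Type} {b b' : β → 𝕄} (h : TpEq L 𝕄 Set.univ b b') : b = b' := by
  funext i
  exact ((h.dfn (Dfn.eq_const i (Set.mem_univ (b i)))).1 rfl).symm

theorem indConant_univ {α : Type} (a : α → 𝕄) (S : Set 𝕄) : IndConant L 𝕄 Set.univ S a := by
  classical
  rintro φ hφ hφa ⟨k, ψ, hdiv, himp⟩
  obtain ⟨j, hj⟩ := himp a hφa
  refine hdiv j (fun _ => (ψ j).params) rfl ⟨⟨fun χ => χ.Realize (ψ j).params,
    fun S hS => ⟨_, hS⟩, fun χ => ?_⟩, ?_, ?_⟩ fun s => ⟨a, fun _ _ => hj⟩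
  · by_cases h : χ.Realize (ψ j).params
    · exact Or.inl h
    · exact Or.inr h
  · intro P ψ' b b' hb
    rw [hb.eq_univ]
  · intro i χ hχ _
    exact hχ

theorem univ_of_finite (M : L.ElementarySubstructure 𝕄)
    (h : Cardinal.mk ↥(M : Set 𝕄) < Cardinal.aleph0) : (M : Set 𝕄) = Set.univ := by
  have hfin : Finite ↥(M : Set 𝕄) := Cardinal.lt_aleph0_iff_finite.1 h
  refine Set.eq_univ_of_forall fun x => ?_
  have hne : (M : Set 𝕄).Nonempty := by
    have h1 : 𝕄 ⊨ Sentence.cardGe L 1 := by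
      rw [Sentence.realize_cardGe]
      have : Nonempty 𝕄 := ⟨x⟩
      exact_mod_cast Cardinal.one_le_iff_ne_zero.2 (Cardinal.mk_ne_zero 𝕄)
    have h2 := (M.realize_sentence _).2 h1
    rw [Sentence.realize_cardGe] at h2
    have h3 : Cardinal.mk M ≠ 0 := Cardinal.one_le_iff_ne_zero.1 (by exact_mod_cast h2)
    obtain ⟨m⟩ := Cardinal.mk_ne_zero_iff.1 h3
    exact ⟨m.1, m.2⟩
  by_contra hx
  have hD : Dfn L (M : Set 𝕄) (fun y : Unit → 𝕄 => ∀ m : ↥(M : Set 𝕄), ¬ y () = m.1) :=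
    Dfn.all_fin fun m => (Dfn.eq_const () m.2).not
  obtain ⟨y, h1, h2⟩ := elem_of_sub L 𝕄 M hne hD ⟨fun _ => x, fun m (hm : x = m.1) => hx (by rw [hm]; exact m.2)⟩
  exact h2 ⟨y (), h1 ()⟩ rfl

end ConvSec

/-- the weak independence theorem for two co-NSOP₁ types. -/
theorem statement_13
    (L : FirstOrder.Language.{u, v}) (𝕄 : Type w) [L.Structure 𝕄]
    (κ : Cardinal.{w}) [IsMonster L 𝕄 κ]
    (M : L.ElementarySubstructure 𝕄) (hMsmall : Cardinal.mk ↥(M : Set 𝕄) < κ)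
    {nv₁ nv₂ : ℕ}
    (P : Set (ParamFormula L 𝕄 (Fin nv₁))) (Q : Set (ParamFormula L 𝕄 (Fin nv₂)))
    (hPparams : ∀ φ ∈ P, φ.ParamsIn (M : Set 𝕄)) (hQparams : ∀ φ ∈ Q, φ.ParamsIn (M : Set 𝕄))
    (hcoP : CoNSOP1 L 𝕄 (M : Set 𝕄) P) (hcoQ : CoNSOP1 L 𝕄 (M : Set 𝕄) Q)
    {ma mb mc : ℕ}
    (a a' : Fin ma → Fin nv₁ → 𝕄) (b : Fin mb → Fin nv₂ → 𝕄) (c : Fin mc → Fin nv₂ → 𝕄)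
    (haP : ∀ j, RealizesPType L 𝕄 P (a j)) (ha'P : ∀ j, RealizesPType L 𝕄 P (a' j))
    (hbQ : ∀ j, RealizesPType L 𝕄 Q (b j)) (hcQ : ∀ j, RealizesPType L 𝕄 Q (c j))
    (heq : TpEq L 𝕄 (M : Set 𝕄) (flat a) (flat a'))
    (hab : IndConant L 𝕄 (M : Set 𝕄) (Set.range (flat b)) (flat a))
    (ha'c : IndConant L 𝕄 (M : Set 𝕄) (Set.range (flat c)) (flat a'))
    (hcb : IndFinSat L 𝕄 (M : Set 𝕄) (Set.range (flat b)) (flat c)) :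
    ∃ a'' : Fin ma → Fin nv₁ → 𝕄,
      IndConant L 𝕄 (M : Set 𝕄) (Set.range (flat b) ∪ Set.range (flat c)) (flat a'') ∧
      TpEq L 𝕄 ((M : Set 𝕄) ∪ Set.range (flat b)) (flat a'') (flat a) ∧
      TpEq L 𝕄 ((M : Set 𝕄) ∪ Set.range (flat c)) (flat a'') (flat a') := by
  rcases lt_or_ge (Cardinal.mk ↥(M : Set 𝕄)) Cardinal.aleph0 with hfin | hinf
  · have hu := univ_of_finite M hfin
    rw [hu] at heq ⊢
    refine ⟨a, indConant_univ _ _, TpEq.rfl', ?_⟩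
    rw [heq.eq_univ]
    exact TpEq.rfl'
  · have G : Good L (M : Set 𝕄) := good_of_monster L 𝕄 κ M hMsmall hinf
    have ha := QT.base haP
    have hb := QT.base hbQ
    have hc := QT.base hcQ
    obtain ⟨V, hV, hVc⟩ := finSat_coh hcb
    obtain ⟨a₂, h1, h2, h3⟩ := amalg2 G hPparams hQparams hcoP hcoQ ha hb hc heq
      (conant_hind G (hb.nice G hQparams hcoQ) hab) (conant_hind G (hc.nice G hQparams hcoQ) ha'c)
      hV hVc
    have hfl : flat (fun i j => a₂ (i, j)) = a₂ := rfl
    refine ⟨fun i j => a₂ (i, j), ?_, ?_, ?_⟩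
    · rw [hfl, ← Set.Sum.elim_range]
      exact hind_conant G (conant_ext hab) h1
    · rw [hfl]
      exact h2.over
    · rw [hfl]
      exact h3.over

end NSOP3Paper
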